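/- If f is essentially bounded on [−π,π]², then the limiting spectral distribution μ_f is compactly supported, and for every m ≥ 1 its even moments are given by ∫_ℝ x^{2m} μ_f(dx) = (2π)^{m−1} ∑_{σ ∈ NC₂(2m)} ∫_{[−π,π]^{m+1}} L_{σ,f}(x) dx. -/

import Mathlib

open MeasureTheory ProbabilityTheory Filter Real

noncomputable section

/-- The square `(-π, π]²` on which the spectral measure lives. -/
def specBox : Set (ℝ × ℝ) := Set.Ioc (-π) π ×ˢ Set.Ioc (-π) π

/-- `(1/N) ∑_j g(λ_j(A))`, the integral of `g` against the empirical spectral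
distribution of a symmetric `N × N` real matrix `A` (junk value `0` if `A` is
not symmetric). -/
def esdEval {N : ℕ} (A : Matrix (Fin N) (Fin N) ℝ) (g : ℝ → ℝ) : ℝ :=
  if hA : A.IsHermitian then (N : ℝ)⁻¹ * ∑ j, g (hA.eigenvalues j) else 0

/-- The (random) empirical spectral distributions of `A N` converge weakly in
probability to the probability measure `μ`: for every bounded continuous `g`,
`∫ g d(ESD(A N)) → ∫ g dμ` in probability. -/
def ESDTendstoInProb {Ω : Type*} [MeasurableSpace Ω] (P : Measure Ω)
    (A : (N : ℕ) → Ω → Matrix (Fin N) (Fin N) ℝ) (μ : Measure ℝ) : Prop :=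
  ∀ g : ℝ → ℝ, Continuous g → (∃ C, ∀ x, |g x| ≤ C) →
    ∀ ε > 0, Tendsto (fun N => P {ω | ε ≤ |esdEval (A N ω) g - ∫ x, g x ∂μ|})
      atTop (nhds 0)

/-- The symmetric matrix `W_N/√N`, where `W_N(i,j) = X_{i,j} + X_{j,i}`,
`1 ≤ i,j ≤ N`. -/
def scaledW {Ω : Type*} (X : ℤ → ℤ → Ω → ℝ) (N : ℕ) (ω : Ω) :
    Matrix (Fin N) (Fin N) ℝ :=
  fun i j => (Real.sqrt N)⁻¹ *
    (X ((i : ℕ) + 1) ((j : ℕ) + 1) ω + X ((j : ℕ) + 1) ((i : ℕ) + 1) ω)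

/-- A centered stationary Gaussian process indexed by `ℤ²` with positive
variance: every finite real linear combination is a centered Gaussian random
variable, and second moments are shift invariant. -/
structure StatGauss {Ω : Type*} [MeasurableSpace Ω] (P : Measure Ω)
    (X : ℤ → ℤ → Ω → ℝ) : Prop where
  meas : ∀ j k, Measurable (X j k)
  gauss : ∀ c : (ℤ × ℤ) →₀ ℝ, ∃ v : NNReal,
    P.map (fun ω => ∑ p ∈ c.support, c p * X p.1 p.2 ω) = gaussianReal 0 v
  var_pos : 0 < ∫ ω, (X 0 0 ω) ^ 2 ∂P
  stat : ∀ j k u v : ℤ,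
    ∫ ω, X j k ω * X (j + u) (k + v) ω ∂P = ∫ ω, X 0 0 ω * X u v ω ∂P

/-- The spectral measure `ν` of the process `X` (from the Herglotz
representation), together with the standing assumption of the paper:
`ν = ν_ac + ν_d`, where `ν_ac` is absolutely continuous with respect to
Lebesgue measure with density `f ≥ 0` and `ν_d = νd` is discrete (supported on
a countable set). -/
structure SpectralDecomp {Ω : Type*} [MeasurableSpace Ω] (P : Measure Ω)
    (X : ℤ → ℤ → Ω → ℝ) (ν νd : Measure (ℝ × ℝ)) (f : ℝ × ℝ → ℝ) : Prop where
  finite : IsFiniteMeasure ν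
  support : ν specBoxᶜ = 0
  herglotz : ∀ u v : ℤ,
    (∫ q, Complex.exp (Complex.I * ((u * q.1 + v * q.2 : ℝ) : ℂ)) ∂ν)
      = ((∫ ω, X 0 0 ω * X u v ω ∂P : ℝ) : ℂ)
  f_nonneg : ∀ q, 0 ≤ f q
  f_meas : Measurable f
  discrete : ∃ s : Set (ℝ × ℝ), s.Countable ∧ νd sᶜ = 0
  decomp : ν = (volume.restrict specBox).withDensity
      (fun q => ENNReal.ofReal (f q)) + νd

/-- Non-crossing pair partitions of `{1, …, 2m}`, encoded as fixed-point free
involutions of `Fin (2m)` with no crossing `a < b < p a < p b`. -/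
def NCPairings (m : ℕ) : Finset (Equiv.Perm (Fin (2 * m))) :=
  Finset.univ.filter fun p =>
    (∀ i, p (p i) = i) ∧ (∀ i, p i ≠ i) ∧
      ∀ a b : Fin (2 * m), ¬(a < b ∧ b < p a ∧ p a < p b)

/-- The permutation `i ↦ p (i + 1)` whose cycles are exactly the blocks of the
Kreweras complement of the pair partition `p`. -/
def krewPerm (m : ℕ) (p : Equiv.Perm (Fin (2 * m))) : Equiv.Perm (Fin (2 * m)) :=
  (finRotate (2 * m)).trans p

/-- `T : {1,…,2m} → {1,…,m+1}` indexes the blocks `V_1, …, V_{m+1}` of the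
Kreweras complement of `p` (`T i` is the index of the block containing `i`),
with the blocks ordered so that their maximal elements increase. -/
def IsKrewerasIndex (m : ℕ) (p : Equiv.Perm (Fin (2 * m)))
    (T : Fin (2 * m) → Fin (m + 1)) : Prop :=
  Function.Surjective T ∧
  (∀ i j, T i = T j ↔ (krewPerm m p).SameCycle i j) ∧
  ∀ a b : Fin (m + 1), a < b →
    (Finset.univ.filter fun i => T i = a).max <
      (Finset.univ.filter fun i => T i = b).max

open Classical in
/-- `k ∈ S(σ)`: the sum of the `k_j` over every block of the Kreweras
complement of `p` vanishes. -/
def memS (m : ℕ) (p : Equiv.Perm (Fin (2 * m))) (k : Fin (2 * m) → ℤ) : Prop :=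
  ∀ i, ∑ j ∈ Finset.univ.filter (fun j => (krewPerm m p).SameCycle i j), k j = 0

/-- The function `L_{σ,f}` on `[-π,π]^{m+1}`: the product over the pairs
`(u, v)` of `σ` (with `u < v = p u`) of
`f(x_{T u}, -x_{T v}) + f(-x_{T v}, x_{T u})`. -/
def Lsig (m : ℕ) (p : Equiv.Perm (Fin (2 * m))) (T : Fin (2 * m) → Fin (m + 1))
    (f : ℝ → ℝ → ℝ) (x : Fin (m + 1) → ℝ) : ℝ :=
  ∏ i ∈ Finset.univ.filter (fun i => i < p i),
    (f (x (T i)) (-x (T (p i))) + f (-x (T (p i))) (x (T i)))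

lemma gm_rec (n : ℕ) : ∫ x, x ^ (n + 2) ∂(gaussianReal 0 1) =
    (n + 1) * ∫ x, x ^ n ∂(gaussianReal 0 1) := by
  have h0 : (0:ℝ) ∈ interior (integrableExpSet id (gaussianReal 0 1)) := by
    rw [integrableExpSet_id_gaussianReal]; simp
  have key : ∀ n, ∫ x, x ^ n ∂(gaussianReal 0 1) =
      iteratedDeriv n (fun t : ℝ => rexp (t ^ 2 / 2)) 0 := by
    intro n
    have := iteratedDeriv_mgf_zero h0 n
    rw [mgf_id_gaussianReal] at this
    simp only [zero_mul, zero_add, NNReal.coe_one, one_mul] at this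
    rw [this]; rfl
  rw [key, key]
  have hd : deriv (fun t : ℝ => rexp (t ^ 2 / 2)) =
      (fun t : ℝ => t) * (fun t : ℝ => rexp (t ^ 2 / 2)) := by
    ext t
    have : HasDerivAt (fun t : ℝ => rexp (t ^ 2 / 2)) (rexp (t^2/2) * ((2:ℕ) * t ^ (2-1) / 2)) t := by
      exact (((hasDerivAt_pow 2 t).div_const 2)).exp
    rw [this.deriv]; simp; ring
  rw [iteratedDeriv_succ', hd, iteratedDeriv_mul (by fun_prop) (by fun_prop)]
  rw [Finset.sum_eq_single 1]
  · simp [iteratedDeriv_one]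
  · intro b _ hb
    have : iteratedDeriv b (fun t : ℝ => t) 0 = 0 := by
      rcases b with _ | _ | b
      · simp
      · simp at hb
      · rw [iteratedDeriv_succ', show deriv (fun t : ℝ => t) = fun _ => (1:ℝ) by ext; simp]
        simp [iteratedDeriv_const]
    rw [this]; simp
  · simp

lemma gm_even (m : ℕ) : (2 ^ m * m.factorial : ℝ) * ∫ x, x ^ (2 * m) ∂(gaussianReal 0 1) =
    ((2 * m).factorial : ℝ) := by
  induction m with
  | zero => simp
  | succ m ih =>
    rw [show 2 * (m+1) = 2 * m + 2 by ring, gm_rec, Nat.factorial_succ, Nat.factorial_succ,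
      Nat.factorial_succ]
    push_cast at ih ⊢
    rw [← ih]; ring

lemma gm_even_var (m : ℕ) (v : NNReal) :
    (2 ^ m * m.factorial : ℝ) * ∫ x, x ^ (2 * m) ∂(gaussianReal 0 v) =
    ((2 * m).factorial : ℝ) * (v : ℝ) ^ m := by
  have h : gaussianReal 0 v = (gaussianReal 0 1).map (fun x => Real.sqrt v * x) := by
    rw [gaussianReal_map_const_mul]; congr 1 <;> simp
  rw [h, integral_map (by fun_prop) (by fun_prop)]
  simp_rw [mul_pow]
  rw [integral_const_mul, pow_mul, Real.sq_sqrt v.coe_nonneg, ← gm_even]; ring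

/-- signed inclusion-exclusion over supports -/
lemma incl_excl {n : ℕ} {ι : Type*} [Fintype ι] [DecidableEq ι] (w : (ι → Fin n) → ℝ) :
    ∑ S : Finset (Fin n), (-1 : ℝ) ^ (Sᶜ.card) * ∑ q : ι → Fin n, (if ∀ l, q l ∈ S then w q else 0)
      = ∑ q : ι → Fin n, if Function.Surjective q then w q else 0 := by
  simp_rw [Finset.mul_sum]
  rw [Finset.sum_comm]
  refine Finset.sum_congr rfl fun q _ => ?_
  have h1 : ∀ S : Finset (Fin n), ((-1 : ℝ) ^ (Sᶜ.card) * if ∀ l, q l ∈ S then w q else 0) =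
      (if Sᶜ ⊆ (Finset.univ.image q)ᶜ then (-1 : ℝ) ^ (Sᶜ.card) else 0) * w q := by
    intro S
    have : (∀ l, q l ∈ S) ↔ Sᶜ ⊆ (Finset.univ.image q)ᶜ := by
      rw [Finset.compl_subset_compl, Finset.image_subset_iff]; simp
    by_cases h : ∀ l, q l ∈ S
    · rw [if_pos h, if_pos (this.1 h)]
    · rw [if_neg h, if_neg (fun h' => h (this.2 h'))]; simp
  simp_rw [h1]
  rw [← Finset.sum_mul]
  have h2 : ∑ S : Finset (Fin n), (if Sᶜ ⊆ (Finset.univ.image q)ᶜ then (-1 : ℝ) ^ (Sᶜ.card) else 0)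
      = ∑ S : Finset (Fin n), (if S ⊆ (Finset.univ.image q)ᶜ then (-1 : ℝ) ^ (S.card) else 0) :=
    Fintype.sum_bijective (fun S => Sᶜ) (compl_bijective) _ _ (fun S => rfl)
  rw [h2, ← Finset.sum_filter]
  have h3 : (Finset.univ.filter fun S : Finset (Fin n) => S ⊆ (Finset.univ.image q)ᶜ) =
      ((Finset.univ.image q)ᶜ).powerset := by ext; simp
  rw [h3]
  have h4 := Finset.sum_powerset_neg_one_pow_card (x := (Finset.univ.image q)ᶜ)
  have h5 : ∑ S ∈ ((Finset.univ.image q)ᶜ).powerset, (-1 : ℝ) ^ S.card =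
      if (Finset.univ.image q)ᶜ = ∅ then 1 else 0 := by
    exact_mod_cast h4
  rw [h5]
  have h6 : (Finset.univ.image q)ᶜ = ∅ ↔ Function.Surjective q := by
    rw [Finset.compl_eq_empty_iff, Finset.eq_univ_iff_forall]; simp [Function.Surjective]
  by_cases h : Function.Surjective q
  · rw [if_pos (h6.2 h), if_pos h, one_mul]
  · rw [if_neg (fun h' => h (h6.1 h')), if_neg h, zero_mul]

/-- all fixed point free involutions -/
def pairs (m : ℕ) : Finset (Equiv.Perm (Fin (2 * m))) :=
  Finset.univ.filter fun p => (∀ i, p (p i) = i) ∧ (∀ i, p i ≠ i)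

lemma pairs_cycleType {m : ℕ} {p : Equiv.Perm (Fin (2 * m))} (hp : p ∈ pairs m) :
    p.cycleType = Multiset.replicate m 2 := by
  simp only [pairs, Finset.mem_filter, Finset.mem_univ, true_and] at hp
  have h1 : p ^ 2 = 1 := by ext i; simp [pow_two, hp.1]
  haveI : Fact (Nat.Prime 2) := ⟨Nat.prime_two⟩
  have h2 := Equiv.Perm.cycleType_of_pow_prime_eq_one h1
  have h3 := p.sum_cycleType
  have h4 : p.support = Finset.univ := by ext i; simp [hp.2 i]
  rw [h4, h2] at h3
  simp at h3
  rw [h2]; congr 1; omega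

lemma card_conj {m : ℕ} {p p0 : Equiv.Perm (Fin (2 * m))} (hp : p ∈ pairs m) (hp0 : p0 ∈ pairs m) :
    (Finset.univ.filter fun g : Equiv.Perm (Fin (2 * m)) => g * p0 * g⁻¹ = p).card =
      2 ^ m * m.factorial := by
  classical
  have hc : IsConj p0 p := by
    rw [Equiv.Perm.isConj_iff_cycleType_eq, pairs_cycleType hp, pairs_cycleType hp0]
  obtain ⟨g0, hg0⟩ := isConj_iff.1 hc
  have h := Equiv.Perm.nat_card_centralizer p0
  rw [pairs_cycleType hp0] at h
  have h' : Nat.card (Subgroup.centralizer {p0}) = 2 ^ m * m.factorial := by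
    rw [h]
    simp only [Fintype.card_fin, Multiset.sum_replicate, Multiset.prod_replicate]
    rcases Nat.eq_zero_or_pos m with rfl | hm
    · simp
    · rw [Multiset.toFinset_replicate, if_neg hm.ne']
      simp [mul_comm]
  rw [← h', Nat.card_eq_fintype_card, Fintype.card_subtype]
  refine Finset.card_bij' (fun g _ => g0⁻¹ * g) (fun g _ => g0 * g) ?_ ?_ ?_ ?_
  · intro g hg
    simp only [Finset.mem_filter, Finset.mem_univ, true_and] at hg ⊢
    rw [Subgroup.mem_centralizer_singleton_iff]
    rw [← hg0] at hg
    have := congrArg (fun x => g0⁻¹ * x * g) hg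
    simpa [mul_assoc] using this
  · intro g hg
    simp only [Finset.mem_filter, Finset.mem_univ, true_and] at hg ⊢
    rw [Subgroup.mem_centralizer_singleton_iff] at hg
    rw [← hg0]
    have : g0 * g * p0 * (g0 * g)⁻¹ = g0 * (g * p0) * g⁻¹ * g0⁻¹ := by group
    rw [this, hg]; group
  · intro g _; simp
  · intro g _; simp


section wick
variable {E : Type*} [NormedAddCommGroup E] [InnerProductSpace ℝ E] [FiniteDimensional ℝ E]
  [MeasurableSpace E] [BorelSpace E]

lemma map_inner_std (v : E) : (stdGaussian E).map (fun θ => inner ℝ v θ) =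
    gaussianReal 0 (‖v‖₊ ^ 2) := by
  have h := IsGaussian.map_eq_gaussianReal (μ := stdGaussian E) (innerSL ℝ v)
  rw [integral_strongDual_stdGaussian, variance_dual_stdGaussian, innerSL_apply_norm] at h
  have : (fun θ => inner ℝ v θ) = (innerSL ℝ v : E → ℝ) := by ext; simp
  rw [this, h]
  congr 1
  ext; simp

lemma integrable_prod_inner {ι : Type*} [Fintype ι] (v : ι → E) :
    Integrable (fun θ => ∏ j, inner ℝ (v j) θ) (stdGaussian E) := by
  have h1 : Integrable (fun θ : E => ‖θ‖ ^ (Fintype.card ι)) (stdGaussian E) := by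
    have := IsGaussian.memLp_id (stdGaussian E) (Fintype.card ι) (by simp)
    exact this.integrable_norm_pow'
  refine (h1.const_mul (∏ j, ‖v j‖)).mono' (by fun_prop) (ae_of_all _ fun θ => ?_)
  rw [norm_prod]
  calc ∏ j, ‖inner ℝ (v j) θ‖ ≤ ∏ j, (‖v j‖ * ‖θ‖) :=
        Finset.prod_le_prod (fun _ _ => norm_nonneg _) (fun j _ => norm_inner_le_norm _ _)
    _ = _ := by rw [Finset.prod_mul_distrib]; simp

lemma pow_sum_expand {n : ℕ} {ι : Type*} [Fintype ι] [DecidableEq ι] (S : Finset (Fin n)) (a : Fin n → ℝ) :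
    (∑ j ∈ S, a j) ^ (Fintype.card ι) =
      ∑ q : ι → Fin n, if ∀ l, q l ∈ S then ∏ l, a (q l) else 0 := by
  rw [← Finset.sum_filter]
  have := Finset.prod_univ_sum (fun _ : ι => S) (fun _ j => a j)
  rw [Finset.prod_const, Finset.card_univ] at this
  rw [this]
  refine Finset.sum_congr ?_ fun _ _ => rfl
  ext q; simp [Fintype.mem_piFinset]

lemma pow_sum_expand2 {n m : ℕ} (S : Finset (Fin n)) (C : Fin n → Fin n → ℝ) :
    (∑ j ∈ S, ∑ k ∈ S, C j k) ^ m =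
      ∑ q : Fin m × Bool → Fin n, if ∀ l, q l ∈ S then ∏ l, C (q (l, false)) (q (l, true)) else 0 := by
  rw [← Finset.sum_filter, ← Finset.sum_product']
  have := Finset.prod_univ_sum (fun _ : Fin m => S ×ˢ S) (fun _ x => C x.1 x.2)
  rw [Finset.prod_const, Finset.card_univ, Fintype.card_fin] at this
  rw [this]
  refine Finset.sum_bij' (fun r _ => fun x => if x.2 then (r x.1).2 else (r x.1).1)
    (fun q _ => fun l => (q (l, false), q (l, true))) ?_ ?_ ?_ ?_ ?_
  · intro r hr
    simp only [Fintype.mem_piFinset, Finset.mem_product] at hr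
    simp only [Finset.mem_filter, Finset.mem_univ, true_and]
    rintro ⟨l, b⟩
    cases b <;> simp [hr l]
  · intro q hq
    simp only [Finset.mem_filter, Finset.mem_univ, true_and] at hq
    simp [Fintype.mem_piFinset, hq]
  · intro r _; ext l <;> simp
  · intro q _; ext ⟨l, b⟩; cases b <;> simp
  · intro r _; simp

lemma wick1 {m : ℕ} (v : Fin (2 * m) → E) :
    (2 ^ m * m.factorial : ℝ) * ∫ θ, ∏ j, inner ℝ (v j) θ ∂(stdGaussian E) =
      ∑ q : Fin m × Bool → Fin (2 * m), if Function.Surjective q then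
        ∏ l, inner ℝ (v (q (l, false))) (v (q (l, true))) else 0 := by
  set γ := stdGaussian E
  have hcard : Fintype.card (Fin m × Bool) = 2 * m := by simp [mul_comm]
  have h1 : ∀ S : Finset (Fin (2 * m)), (2 ^ m * m.factorial : ℝ) *
      ∑ q : Fin m × Bool → Fin (2 * m), (if ∀ l, q l ∈ S then ∫ θ, ∏ l, inner ℝ (v (q l)) θ ∂γ else 0)
      = ((2 * m).factorial : ℝ) * ∑ q : Fin m × Bool → Fin (2 * m), (if ∀ l, q l ∈ S then
        ∏ l, inner ℝ (v (q (l, false))) (v (q (l, true))) else 0) := by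
    intro S
    rw [← pow_sum_expand2 S (fun j k => inner ℝ (v j) (v k))]
    have h2 : ∑ q : Fin m × Bool → Fin (2 * m),
        (if ∀ l, q l ∈ S then ∫ θ, ∏ l, inner ℝ (v (q l)) θ ∂γ else 0) =
        ∫ θ, (inner ℝ (∑ j ∈ S, v j) θ) ^ (2 * m) ∂γ := by
      have : ∀ θ, (inner ℝ (∑ j ∈ S, v j) θ) ^ (2 * m) = ∑ q : Fin m × Bool → Fin (2 * m),
          if ∀ l, q l ∈ S then ∏ l, inner ℝ (v (q l)) θ else 0 := by
        intro θ
        rw [← pow_sum_expand S (fun j => inner ℝ (v j) θ), hcard, sum_inner]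
      simp_rw [this]
      rw [integral_finsetSum]
      · refine Finset.sum_congr rfl fun q _ => ?_
        split_ifs <;> simp
      · intro q _
        split_ifs
        · exact integrable_prod_inner _
        · simp
    rw [h2]
    have h3 : ∫ θ, (inner ℝ (∑ j ∈ S, v j) θ) ^ (2 * m) ∂γ =
        ∫ x, x ^ (2 * m) ∂(gaussianReal 0 (‖∑ j ∈ S, v j‖₊ ^ 2)) := by
      rw [← map_inner_std, integral_map (by fun_prop) (by fun_prop)]
    rw [h3, gm_even_var]
    congr 2
    push_cast
    rw [← real_inner_self_eq_norm_sq, sum_inner]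
    simp_rw [inner_sum]
  have h2 := incl_excl (ι := Fin m × Bool) (n := 2 * m) (fun q => ∫ θ, ∏ l, inner ℝ (v (q l)) θ ∂γ)
  have h3 := incl_excl (ι := Fin m × Bool) (n := 2 * m)
    (fun q => ∏ l, inner ℝ (v (q (l, false))) (v (q (l, true))))
  have h4 : (2 ^ m * m.factorial : ℝ) * ∑ q : Fin m × Bool → Fin (2 * m),
      (if Function.Surjective q then ∫ θ, ∏ l, inner ℝ (v (q l)) θ ∂γ else 0) =
      ((2 * m).factorial : ℝ) * ∑ q : Fin m × Bool → Fin (2 * m), if Function.Surjective q then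
        ∏ l, inner ℝ (v (q (l, false))) (v (q (l, true))) else 0 := by
    rw [← h2, ← h3, Finset.mul_sum, Finset.mul_sum]
    refine Finset.sum_congr rfl fun S _ => ?_
    have := h1 S
    linear_combination (-1 : ℝ) ^ Sᶜ.card * this
  have h5 : ∑ q : Fin m × Bool → Fin (2 * m),
      (if Function.Surjective q then ∫ θ, ∏ l, inner ℝ (v (q l)) θ ∂γ else 0) =
      ((2 * m).factorial : ℝ) * ∫ θ, ∏ j, inner ℝ (v j) θ ∂γ := by
    have : ∀ q : Fin m × Bool → Fin (2 * m),
      (if Function.Surjective q then ∫ θ, ∏ l, inner ℝ (v (q l)) θ ∂γ else 0) =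
      (if Function.Surjective q then ∫ θ, ∏ j, inner ℝ (v j) θ ∂γ else 0) := by
      intro q
      split_ifs with hq
      · have hb : Function.Bijective q :=
          (Fintype.bijective_iff_surjective_and_card q).2 ⟨hq, by simp [mul_comm]⟩
        congr 1; ext θ
        exact Fintype.prod_bijective q hb _ _ (fun _ => rfl)
      · rfl
    simp_rw [this]
    rw [← Finset.sum_filter, Finset.sum_const, nsmul_eq_mul]
    congr 2
    have e0 : Fin m × Bool ≃ Fin (2 * m) := Fintype.equivOfCardEq (by simp [mul_comm])
    have hc : (2 * m).factorial = (Finset.univ : Finset (Equiv.Perm (Fin (2 * m)))).card := by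
      rw [Finset.card_univ, Fintype.card_perm, Fintype.card_fin]
    rw [hc]
    symm
    refine Finset.card_bij (fun g _ => g ∘ e0) ?_ ?_ ?_
    · intro g _; simp [e0.surjective, g.surjective.comp e0.surjective]
    · intro g _ g' _ h
      ext x
      have := congrFun h (e0.symm x)
      simpa using congrArg Fin.val this
    · intro q hq
      simp only [Finset.mem_filter, Finset.mem_univ, true_and] at hq
      have hb : Function.Bijective q :=
          (Fintype.bijective_iff_surjective_and_card q).2 ⟨hq, by simp [mul_comm]⟩
      exact ⟨e0.symm.trans (Equiv.ofBijective q hb), by simp, by ext; simp⟩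
  rw [h5] at h4
  have h6 : ((2 * m).factorial : ℝ) ≠ 0 := by positivity
  apply mul_left_cancel₀ h6
  rw [← h4]; ring

lemma wick {m : ℕ} (v : Fin (2 * m) → E) :
    ∫ θ, ∏ j, inner ℝ (v j) θ ∂(stdGaussian E) =
      ∑ p ∈ pairs m, ∏ u ∈ Finset.univ.filter (fun u => u < p u), inner ℝ (v u) (v (p u)) := by
  have hpos : (2 ^ m * m.factorial : ℝ) ≠ 0 := by positivity
  apply mul_left_cancel₀ hpos
  rw [wick1]
  have e0 : Fin m × Bool ≃ Fin (2 * m) := Fintype.equivOfCardEq (by simp [mul_comm])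
  have s : Fin m × Bool ≃ Fin m × Bool := Equiv.prodCongr (Equiv.refl _) Equiv.boolNot
  obtain ⟨s, hs⟩ : ∃ s : Fin m × Bool ≃ Fin m × Bool, ∀ l b, s (l, b) = (l, !b) :=
    ⟨Equiv.prodCongr (Equiv.refl _) Equiv.boolNot, by simp⟩
  set p0 : Equiv.Perm (Fin (2 * m)) := (e0.symm.trans s).trans e0 with hp0
  have hp0m : p0 ∈ pairs m := by
    simp only [pairs, Finset.mem_filter, Finset.mem_univ, true_and]
    constructor
    · intro i
      obtain ⟨⟨l, b⟩, rfl⟩ := e0.surjective i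
      simp [hp0, hs]
    · intro i
      obtain ⟨⟨l, b⟩, rfl⟩ := e0.surjective i
      simp [hp0, hs]
  have hcj : ∀ g : Equiv.Perm (Fin (2 * m)), g * p0 * g⁻¹ ∈ pairs m := by
    intro g
    simp only [pairs, Finset.mem_filter, Finset.mem_univ, true_and] at hp0m ⊢
    constructor
    · intro i; simp [hp0m.1]
    · intro i h
      apply hp0m.2 (g⁻¹ i)
      apply g.injective
      simpa using h
  have h1 : (∑ q : Fin m × Bool → Fin (2 * m), if Function.Surjective q then
        ∏ l, inner ℝ (v (q (l, false))) (v (q (l, true))) else 0) =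
      ∑ g : Equiv.Perm (Fin (2 * m)), ∏ u ∈ Finset.univ.filter (fun u => u < (g * p0 * g⁻¹) u),
        inner ℝ (v u) (v ((g * p0 * g⁻¹) u)) := by
    rw [← Finset.sum_filter]
    symm
    refine Finset.sum_bij (fun g _ => g ∘ e0) ?_ ?_ ?_ ?_
    · intro g _; simp [g.surjective.comp e0.surjective]
    · intro g _ g' _ h
      ext x
      have := congrFun h (e0.symm x)
      simpa using congrArg Fin.val this
    · intro q hq
      simp only [Finset.mem_filter, Finset.mem_univ, true_and] at hq
      have hb : Function.Bijective q :=
          (Fintype.bijective_iff_surjective_and_card q).2 ⟨hq, by simp [mul_comm]⟩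
      exact ⟨e0.symm.trans (Equiv.ofBijective q hb), by simp, by ext; simp⟩
    · intro g _
      have hpg : ∀ l b, (g * p0 * g⁻¹) (g (e0 (l, b))) = g (e0 (l, !b)) := by
        intro l b; simp [hp0, hs]
      symm
      refine Finset.prod_bij (fun l _ => if g (e0 (l, false)) < g (e0 (l, true)) then g (e0 (l, false))
        else g (e0 (l, true))) ?_ ?_ ?_ ?_
      · intro l _
        simp only [Finset.mem_filter, Finset.mem_univ, true_and]
        split_ifs with h
        · rw [hpg]; exact h
        · rw [hpg]
          refine lt_of_le_of_ne (not_lt.1 h) ?_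
          intro h'
          have := e0.injective (g.injective h')
          simp at this
      · intro l _ l' _ h
        split_ifs at h
        all_goals
          have := e0.injective (g.injective h)
          simpa using this
      · intro u hu
        simp only [Finset.mem_filter, Finset.mem_univ, true_and] at hu
        obtain ⟨⟨l, b⟩, rfl⟩ := (e0.trans g).surjective u
        rw [Equiv.trans_apply, hpg] at hu
        refine ⟨l, by simp, ?_⟩
        cases b
        · simp only [Bool.not_false] at hu
          rw [if_pos hu]; rfl
        · simp only [Bool.not_true] at hu
          rw [if_neg (not_lt.2 hu.le)]; rfl
      · intro l _
        simp only [Function.comp]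
        split_ifs with h
        · rw [hpg]; rfl
        · rw [hpg, real_inner_comm]; rfl
  rw [h1, ← Finset.sum_fiberwise_of_maps_to (t := pairs m) (g := fun g => g * p0 * g⁻¹)
    (fun g _ => hcj g), Finset.mul_sum]
  refine Finset.sum_congr rfl fun p hp => ?_
  rw [Finset.sum_congr rfl (g := fun _ => ∏ u ∈ Finset.univ.filter (fun u => u < p u),
        inner ℝ (v u) (v (p u)))]
  · rw [Finset.sum_const, card_conj hp hp0m]; simp
  · intro g hg
    simp only [Finset.mem_filter, Finset.mem_univ, true_and] at hg
    rw [hg]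
end wick


/-- predecessor -/
def prd (m : ℕ) : Equiv.Perm (Fin (2 * m)) := (finRotate (2 * m)).symm

lemma rot_val {n : ℕ} (l : Fin n) : (finRotate n l).val = if l.val + 1 = n then 0 else l.val + 1 := by
  rcases n with _ | n
  · exact l.elim0
  · split_ifs with h
    · have : l = Fin.last n := by ext; simp; omega
      rw [this, finRotate_last]; rfl
    · rw [coe_finRotate_of_ne_last]
      intro h'; apply h; rw [h']; simp

lemma prd_val {m : ℕ} (l : Fin (2 * m)) : (prd m l).val = if l.val = 0 then 2 * m - 1 else l.val - 1 := by
  have h := rot_val (prd m l)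
  have h1 : finRotate (2 * m) (prd m l) = l := Equiv.apply_symm_apply _ _
  rw [h1] at h
  have h2 := (prd m l).2
  split_ifs at h ⊢ <;> omega

lemma rot_prd {m : ℕ} (l : Fin (2 * m)) : finRotate (2 * m) (prd m l) = l := Equiv.apply_symm_apply _ _
lemma prd_rot {m : ℕ} (l : Fin (2 * m)) : prd m (finRotate (2 * m) l) = l := Equiv.symm_apply_apply _ _

lemma mem_pairs {m : ℕ} {p : Equiv.Perm (Fin (2 * m))} :
    p ∈ pairs m ↔ (∀ i, p (p i) = i) ∧ (∀ i, p i ≠ i) := by simp [pairs]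

lemma NC_sub {m : ℕ} {p : Equiv.Perm (Fin (2 * m))} (hp : p ∈ NCPairings m) : p ∈ pairs m := by
  simp only [NCPairings, Finset.mem_filter, Finset.mem_univ, true_and] at hp
  exact mem_pairs.2 ⟨hp.1, hp.2.1⟩

lemma NC_nc {m : ℕ} {p : Equiv.Perm (Fin (2 * m))} (hp : p ∈ NCPairings m) (a b : Fin (2 * m))
    (h1 : a < b) (h2 : b < p a) (h3 : p a < p b) : False := by
  simp only [NCPairings, Finset.mem_filter, Finset.mem_univ, true_and] at hp
  exact hp.2.2 a b ⟨h1, h2, h3⟩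

lemma card_op {m : ℕ} {p : Equiv.Perm (Fin (2 * m))} (hp : p ∈ pairs m) :
    (Finset.univ.filter fun u => u < p u).card = m := by
  rw [mem_pairs] at hp
  have h1 : (Finset.univ.filter fun u => u < p u).card = (Finset.univ.filter fun u => ¬ u < p u).card := by
    refine Finset.card_bij (fun u _ => p u) ?_ (fun a _ b _ h => p.injective h) ?_
    · intro u hu
      simp only [Finset.mem_filter, Finset.mem_univ, true_and, hp.1] at hu ⊢
      exact not_lt.2 hu.le
    · intro u hu
      simp only [Finset.mem_filter, Finset.mem_univ, true_and] at hu
      refine ⟨p u, ?_, hp.1 u⟩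
      simp only [Finset.mem_filter, Finset.mem_univ, true_and, hp.1]
      exact lt_of_le_of_ne (not_lt.1 hu) (hp.2 u)
  have h2 := Finset.card_filter_add_card_filter_not (s := (Finset.univ : Finset (Fin (2*m)))) (fun u => u < p u)
  simp only [Finset.card_univ, Fintype.card_fin] at h2
  omega

lemma seg1 {m : ℕ} (a v : Fin (2 * m)) (e : Fin (2 * m) → ℤ)
    (h : ∀ j, a < j → j < v → e j = e (prd m j)) : ∀ j, a ≤ j → j < v → e j = e a := by
  have : ∀ n : ℕ, ∀ j : Fin (2 * m), j.val = n → a ≤ j → j < v → e j = e a := by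
    intro n
    induction n with
    | zero =>
      intro j hj h1 h2
      have : j = a := by apply le_antisymm _ h1; rw [Fin.le_def]; omega
      rw [this]
    | succ n ih =>
      intro j hj h1 h2
      rcases h1.eq_or_lt with h1 | h1
      · rw [h1]
      · have hv := prd_val j
        rw [if_neg (by omega)] at hv
        rw [h j h1 h2]
        apply ih
        · omega
        · rw [Fin.le_def]; rw [Fin.lt_def] at h1; omega
        · rw [Fin.lt_def] at h2 ⊢; omega
  intro j; exact this _ j rfl

lemma seg2 {m : ℕ} (a v : Fin (2 * m)) (hav : a < v) (e : Fin (2 * m) → ℤ)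
    (h : ∀ j, j < a ∨ v < j → e j = e (prd m j)) : ∀ j, j < a ∨ v ≤ j → e j = e v := by
  have h1 : ∀ n : ℕ, ∀ j : Fin (2 * m), j.val = n → v ≤ j → e j = e v := by
    intro n
    induction n with
    | zero =>
      intro j hj h1
      have : j = v := by apply le_antisymm _ h1; rw [Fin.le_def]; omega
      rw [this]
    | succ n ih =>
      intro j hj h1
      rcases h1.eq_or_lt with h1 | h1
      · rw [h1]
      · have hv := prd_val j
        rw [if_neg (by omega)] at hv
        rw [h j (Or.inr h1)]
        apply ih
        · omega
        · rw [Fin.le_def]; rw [Fin.lt_def] at h1; omega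
  have h2 : ∀ n : ℕ, ∀ j : Fin (2 * m), j.val = n → j < a → e j = e v := by
    intro n
    induction n with
    | zero =>
      intro j hj h2
      rw [h j (Or.inl h2)]
      have hv := prd_val j
      rw [if_pos hj] at hv
      apply h1 _ _ rfl
      rw [Fin.le_def]; have := v.2; omega
    | succ n ih =>
      intro j hj h2
      have hv := prd_val j
      rw [if_neg (by omega)] at hv
      rw [h j (Or.inl h2)]
      apply ih
      · omega
      · rw [Fin.lt_def] at h2 ⊢; omega
  rintro j (hj | hj)
  · exact h2 _ j rfl hj
  · exact h1 _ j rfl hj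

lemma bad_zero {m : ℕ} {p : Equiv.Perm (Fin (2 * m))} (hp : p ∈ pairs m) (a : Fin (2 * m))
    (ha : a < p a) (e : Fin (2 * m) → ℤ)
    (hrel : ∀ u, u < p u → (e (p u) - e (prd m (p u)) = e u - e (prd m u) ∨
      e (p u) - e (prd m (p u)) = -(e u - e (prd m u))))
    (hop : ∀ u, u < p u → u ≠ a → e u = e (prd m u))
    (hlink : e (prd m (p a)) = e (prd m a) ∨ ∃ b, a < b ∧ b < p a ∧ p a < p b ∧
      (e b = e (p b) ∨ e b = e (prd m (p b)))) (h0 : e (p a) = 0) : ∀ j, e j = 0 := by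
  rw [mem_pairs] at hp
  have hall : ∀ j, j ≠ a → j ≠ p a → e j = e (prd m j) := by
    intro j h1 h2
    by_cases hj : j < p j
    · exact hop j hj h1
    · have h3 : p j < p (p j) := by
        rw [hp.1]; exact lt_of_le_of_ne (not_lt.1 hj) (hp.2 j)
      have h4 : p j ≠ a := fun h => h2 (by rw [← h, hp.1])
      have h5 := hop _ h3 h4
      have h6 := hrel _ h3
      rw [hp.1] at h6
      rcases h6 with h6 | h6 <;> linarith
  have s1 := seg1 a (p a) e (fun j h1 h2 => hall j h1.ne' h2.ne)
  have s2 := seg2 a (p a) ha e (fun j h => hall j (by rcases h with h | h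
                                                      · exact h.ne
                                                      · exact (ha.trans h).ne')
                                                  (by rcases h with h | h
                                                      · exact (h.trans ha).ne
                                                      · exact h.ne'))
  have hea : e a = 0 := by
    rcases hlink with h | ⟨b, h1, h2, h3, h4⟩
    · have hv := prd_val (p a)
      have hv' := prd_val a
      rw [Fin.lt_def] at ha
      rw [if_neg (by omega)] at hv
      have e1 := s1 (prd m (p a)) (by rw [Fin.le_def]; omega) (by rw [Fin.lt_def]; omega)
      have e2 := s2 (prd m a) (by
        rw [Fin.lt_def, Fin.le_def]
        have := (p a).2
        split_ifs at hv' <;> omega)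
      rw [← e1, h, e2, h0]
    · have e1 := s1 b h1.le h2
      have hv := prd_val (p b)
      rw [Fin.lt_def] at h3
      rw [if_neg (by omega)] at hv
      rcases h4 with h4 | h4
      · rw [← e1, h4, s2 _ (Or.inr h3.le), h0]
      · rw [← e1, h4, s2 _ (Or.inr (by rw [Fin.le_def]; omega)), h0]
  intro j
  by_cases h : a ≤ j ∧ j < p a
  · rw [s1 j h.1 h.2, hea]
  · rw [s2 j (by rcases lt_or_ge j a with h' | h'
                 · exact Or.inl h'
                 · exact Or.inr (not_lt.1 fun h'' => h ⟨h', h''⟩)), h0]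

/-- offset -/
def Doff {m N : ℕ} (p : Equiv.Perm (Fin (2 * m))) (i : Fin (2 * m) → Fin N) (u : Fin (2 * m))
    (o : Bool) : ℤ × ℤ :=
  if o then (((i (prd m (p u))).val : ℤ) - (i (prd m u)).val, ((i (p u)).val : ℤ) - (i u).val)
  else (((i (p u)).val : ℤ) - (i (prd m u)).val, ((i (prd m (p u))).val : ℤ) - (i u).val)

/-- the index set counted -/
def cntSet {m : ℕ} (N : ℕ) (p : Equiv.Perm (Fin (2 * m))) (x : {u // u < p u} → Bool × (ℤ × ℤ)) :
    Finset (Fin (2 * m) → Fin N) :=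
  Finset.univ.filter fun i => ∀ u : {u // u < p u}, Doff p i u (x u).1 = (x u).2

lemma bad_count {m N : ℕ} {p : Equiv.Perm (Fin (2 * m))} (hp : p ∈ pairs m)
    (x : {u // u < p u} → Bool × (ℤ × ℤ))
    (hbad : p ∉ NCPairings m ∨ ∃ u, (x u).1 = true) :
    (cntSet N p x).card ≤ N * (2 * N + 1) ^ (m - 1) := by
  classical
  obtain ⟨a, ha, hl⟩ : ∃ a, ∃ ha : a < p a, (x ⟨a, ha⟩).1 = true ∨
      ∃ b, a < b ∧ b < p a ∧ p a < p b := by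
    rcases hbad with h | ⟨u, hu⟩
    · simp only [NCPairings, Finset.mem_filter, Finset.mem_univ, true_and, not_and] at h
      have := h (mem_pairs.1 hp).1 (mem_pairs.1 hp).2
      push Not at this
      obtain ⟨a, b, h1, h2, h3⟩ := this
      exact ⟨a, h1.trans h2, Or.inr ⟨b, h1, h2, h3⟩⟩
    · exact ⟨u.1, u.2, Or.inl hu⟩
  let J := {u : Fin (2 * m) // u < p u ∧ u ≠ a}
  have hJ : Fintype.card J = m - 1 := by
    rw [Fintype.card_subtype]
    have h1 : (Finset.univ.filter fun u => u < p u ∧ u ≠ a) =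
        (Finset.univ.filter fun u => u < p u).erase a := by
      ext u; simp [and_comm]
    rw [h1, Finset.card_erase_of_mem (by simp [ha]), card_op hp]
  have hcard : ((Finset.univ : Finset (Fin N)) ×ˢ
      Fintype.piFinset (fun _ : J => Finset.Icc (-(N : ℤ)) N)).card = N * (2 * N + 1) ^ (m - 1) := by
    rw [Finset.card_product, Fintype.card_piFinset]
    simp only [Finset.card_univ, Fintype.card_fin, Int.card_Icc, Finset.prod_const, hJ]
    congr 2; omega
  rw [← hcard]
  refine Finset.card_le_card_of_injOn
    (fun i => (i (p a), fun u : J => ((i u.1).val : ℤ) - (i (prd m u.1)).val)) ?_ ?_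
  · intro i _
    simp only [Finset.mem_coe, Finset.mem_product, Finset.mem_univ, true_and, Fintype.mem_piFinset, Finset.mem_Icc]
    intro u
    have := (i u.1).2; have := (i (prd m u.1)).2
    omega
  · intro i hi i' hi' heq
    simp only [Prod.mk.injEq] at heq
    simp only [cntSet, Finset.coe_filter, Finset.mem_univ, true_and, Set.mem_ofPred_eq] at hi hi'
    set e : Fin (2 * m) → ℤ := fun j => ((i j).val : ℤ) - (i' j).val with he
    have hh : ∀ u, ∀ hu : u < p u, (e (prd m (p u)) = e (prd m u) ∧ e (p u) = e u) ∨
        (e (p u) = e (prd m u) ∧ e (prd m (p u)) = e u) := by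
      intro u hu
      have h1 := hi ⟨u, hu⟩
      have h2 := hi' ⟨u, hu⟩
      rw [← h2] at h1
      simp only [Doff] at h1
      simp only [he]
      split_ifs at h1
      · simp only [Prod.mk.injEq] at h1; left; constructor <;> omega
      · simp only [Prod.mk.injEq] at h1; right; constructor <;> omega
    have hz := bad_zero hp a ha e ?_ ?_ ?_ ?_
    · funext j
      have := hz j
      simp only [he] at this
      ext; omega
    · intro u hu
      rcases hh u hu with h | h
      · left; rw [h.1, h.2]
      · right; rw [h.1, h.2]; ring
    · intro u hu hua
      have := congrFun heq.2 ⟨u, hu, hua⟩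
      simp only at this
      simp only [he]; omega
    · rcases hl with h | ⟨b, h1, h2, h3⟩
      · left
        have h1 := hi ⟨a, ha⟩
        have h2 := hi' ⟨a, ha⟩
        rw [← h2] at h1
        simp only [Doff, h, if_true, Prod.mk.injEq] at h1
        simp only [he]; omega
      · right
        refine ⟨b, h1, h2, h3, ?_⟩
        rcases hh b (h2.trans h3) with h | h
        · left; exact h.2.symm
        · right; exact h.2.symm
    · simp only [he]; rw [heq.1]; ring


lemma cob_same {α : Type*} [DecidableEq α] (κ : Equiv.Perm α) (i j : α)
    (h : κ.SameCycle i j) : ∃ φ : α → ℤ, ∀ l, φ (κ l) - φ l = Pi.single (M := fun _ => ℤ) i 1 l - Pi.single (M := fun _ => ℤ) j 1 l := by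
  obtain ⟨n, rfl⟩ := h
  induction n using Int.induction_on with
  | zero => exact ⟨0, fun l => by rw [show (κ ^ (0:ℤ)) i = i by rw [zpow_zero]; rfl]; simp⟩
  | succ n ih =>
    obtain ⟨φ, hφ⟩ := ih
    refine ⟨fun l => φ l + Pi.single (M := fun _ => ℤ) ((κ ^ ((n : ℤ) + 1)) i) 1 l, fun l => ?_⟩
    have h1 : (κ ^ ((n : ℤ) + 1)) i = κ ((κ ^ (n : ℤ)) i) := by
      rw [add_comm, zpow_add, zpow_one]; rfl
    have h2 : Pi.single (M := fun _ => ℤ) ((κ ^ ((n : ℤ) + 1)) i) 1 (κ l) =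
        Pi.single (M := fun _ => ℤ) ((κ ^ (n : ℤ)) i) 1 l := by
      rw [h1]; simp only [Pi.single_apply, κ.injective.eq_iff]
    have := hφ l
    simp only [h2]; linarith
  | pred n ih =>
    obtain ⟨φ, hφ⟩ := ih
    refine ⟨fun l => φ l - Pi.single (M := fun _ => ℤ) ((κ ^ (-(n : ℤ))) i) 1 l, fun l => ?_⟩
    have h1 : (κ ^ (-(n : ℤ))) i = κ ((κ ^ (-(n : ℤ) - 1)) i) := by
      conv_lhs => rw [show (-(n : ℤ)) = 1 + (-(n : ℤ) - 1) by ring, zpow_add, zpow_one]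
      rfl
    have h2 : Pi.single (M := fun _ => ℤ) ((κ ^ (-(n : ℤ))) i) 1 (κ l) =
        Pi.single (M := fun _ => ℤ) ((κ ^ (-(n : ℤ) - 1)) i) 1 l := by
      rw [h1]; simp only [Pi.single_apply, κ.injective.eq_iff]
    have := hφ l
    simp only [h2]; linarith

/-- weak version of the Kreweras index -/
def KrI (m : ℕ) (p : Equiv.Perm (Fin (2 * m))) (T : Fin (2 * m) → Fin (m + 1)) : Prop :=
  Function.Surjective T ∧ (∀ i j, T i = T j ↔ (krewPerm m p).SameCycle i j)

lemma cob_exists {α β : Type*} [Fintype α] [DecidableEq α] [DecidableEq β]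
    (κ : Equiv.Perm α) (T : α → β) (hT : Function.Surjective T)
    (hc : ∀ i j, T i = T j → κ.SameCycle i j) (k : α → ℤ)
    (hk : ∀ t, ∑ l ∈ Finset.univ.filter (fun l => T l = t), k l = 0) :
    ∃ φ : α → ℤ, ∀ l, φ (κ l) - φ l = k l := by
  obtain ⟨r, hr⟩ := hT.hasRightInverse
  have h1 : ∀ j, ∃ φ : α → ℤ, ∀ l, φ (κ l) - φ l =
      Pi.single (M := fun _ => ℤ) j 1 l - Pi.single (M := fun _ => ℤ) (r (T j)) 1 l :=
    fun j => cob_same κ _ _ (hc _ _ (hr (T j)).symm)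
  choose Φ hΦ using h1
  refine ⟨fun l => ∑ j, k j * Φ j l, fun l => ?_⟩
  rw [← Finset.sum_sub_distrib]
  simp_rw [← mul_sub, hΦ, mul_sub]
  rw [Finset.sum_sub_distrib]
  have h2 : ∑ j, k j * Pi.single (M := fun _ => ℤ) j 1 l = k l := by
    simp [Pi.single_apply]
  have h3 : ∑ j, k j * Pi.single (M := fun _ => ℤ) (r (T j)) 1 l = 0 := by
    simp only [Pi.single_apply, mul_ite, mul_one, mul_zero]
    by_cases hl : l = r (T l)
    · have : ∀ j, (l = r (T j)) ↔ T j = T l := by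
        intro j
        constructor
        · intro h; rw [h, hr]
        · intro h; rw [h]; exact hl
      simp_rw [this, ← Finset.sum_filter, hk]
    · apply Finset.sum_eq_zero
      intro j _
      rw [if_neg]
      intro h
      apply hl
      have : T l = T j := by rw [h, hr]
      rw [this]; exact h
  rw [h2, h3]; ring

lemma T_krew {m : ℕ} {p : Equiv.Perm (Fin (2 * m))} {T : Fin (2 * m) → Fin (m + 1)}
    (hT : KrI m p T) (l : Fin (2 * m)) : T (krewPerm m p l) = T l := by
  rw [hT.2]
  exact (Equiv.Perm.sameCycle_apply_left).2 (Equiv.Perm.SameCycle.refl _ _)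

/-- the set of solutions -/
def solSet {m : ℕ} (N : ℕ) (κ : Equiv.Perm (Fin (2 * m))) (k : Fin (2 * m) → ℤ) :
    Finset (Fin (2 * m) → Fin N) :=
  Finset.univ.filter fun i => ∀ l, ((i (κ l)).val : ℤ) - (i l).val = k l

lemma sol_le {m N : ℕ} {p : Equiv.Perm (Fin (2 * m))} {T : Fin (2 * m) → Fin (m + 1)}
    (hT : KrI m p T) (k : Fin (2 * m) → ℤ) : (solSet N (krewPerm m p) k).card ≤ N ^ (m + 1) := by
  obtain ⟨r, hr⟩ := hT.1.hasRightInverse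
  have : N ^ (m + 1) = (Finset.univ : Finset (Fin (m + 1) → Fin N)).card := by simp
  rw [this]
  refine Finset.card_le_card_of_injOn (fun i => i ∘ r) (by simp) ?_
  intro i hi i' hi' heq
  simp only [solSet, Finset.coe_filter, Finset.mem_univ, true_and, Set.mem_ofPred_eq] at hi hi'
  funext l
  have hc : (krewPerm m p).SameCycle (r (T l)) l := (hT.2 _ _).1 (hr (T l))
  have hstep : ∀ l, i (krewPerm m p l) = i' (krewPerm m p l) ↔ i l = i' l := by
    intro l
    have h1 := hi l
    have h2 := hi' l
    rw [Fin.ext_iff, Fin.ext_iff]; omega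
  obtain ⟨n, hn⟩ := hc.exists_pow_eq'
  have : ∀ n : ℕ, i (((krewPerm m p) ^ n) (r (T l))) = i' (((krewPerm m p) ^ n) (r (T l))) := by
    intro n
    induction n with
    | zero => exact congrFun heq (T l)
    | succ n ih =>
      rw [pow_succ', Equiv.Perm.mul_apply, hstep]; exact ih
  rw [← hn.2]; exact this n

lemma sol_zero {m N : ℕ} {p : Equiv.Perm (Fin (2 * m))} {T : Fin (2 * m) → Fin (m + 1)}
    (hT : KrI m p T) (k : Fin (2 * m) → ℤ)
    (hk : ¬ ∀ t, ∑ l ∈ Finset.univ.filter (fun l => T l = t), k l = 0) :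
    (solSet N (krewPerm m p) k).card = 0 := by
  rw [Finset.card_eq_zero, Finset.eq_empty_iff_forall_notMem]
  intro i hi
  simp only [solSet, Finset.mem_filter, Finset.mem_univ, true_and] at hi
  apply hk
  intro t
  simp_rw [← hi]
  rw [Finset.sum_sub_distrib, sub_eq_zero]
  refine Finset.sum_bij (fun l _ => krewPerm m p l) ?_ (fun a _ b _ h => (krewPerm m p).injective h) ?_
    (fun _ _ => rfl)
  · intro l hl
    simp only [Finset.mem_filter, Finset.mem_univ, true_and] at hl ⊢
    rw [T_krew hT, hl]
  · intro l hl
    simp only [Finset.mem_filter, Finset.mem_univ, true_and] at hl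
    refine ⟨(krewPerm m p).symm l, ?_, by simp⟩
    simp only [Finset.mem_filter, Finset.mem_univ, true_and]
    rw [← T_krew hT, Equiv.apply_symm_apply, hl]

lemma sol_ge {m : ℕ} {p : Equiv.Perm (Fin (2 * m))} {T : Fin (2 * m) → Fin (m + 1)}
    (hT : KrI m p T) (k : Fin (2 * m) → ℤ)
    (hk : ∀ t, ∑ l ∈ Finset.univ.filter (fun l => T l = t), k l = 0) :
    ∃ B : ℕ, ∀ N, (N - 2 * B) ^ (m + 1) ≤ (solSet N (krewPerm m p) k).card := by
  obtain ⟨φ, hφ⟩ := cob_exists (krewPerm m p) T hT.1 (fun i j h => (hT.2 i j).1 h) k hk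
  refine ⟨∑ l, (φ l).natAbs, fun N => ?_⟩
  set B := ∑ l, (φ l).natAbs with hB
  have hb : ∀ l, (φ l).natAbs ≤ B := fun l =>
    Finset.single_le_sum (f := fun l => (φ l).natAbs) (fun _ _ => Nat.zero_le _) (Finset.mem_univ l)
  have : (N - 2 * B) ^ (m + 1) = (Finset.univ : Finset (Fin (m + 1) → Fin (N - 2 * B))).card := by simp
  rw [this]
  have hlt : ∀ (τ : Fin (m + 1) → Fin (N - 2 * B)) l, (φ l + B + (τ (T l)).val).toNat < N := by
    intro τ l
    have := hb l; have := (τ (T l)).2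
    omega
  refine Finset.card_le_card_of_injOn
    (fun τ => fun l => (⟨(φ l + B + (τ (T l)).val).toNat, hlt τ l⟩ : Fin N)) ?_ ?_
  · intro τ _
    simp only [solSet, Finset.coe_filter, Finset.mem_univ, true_and, Set.mem_ofPred_eq]
    intro l
    rw [T_krew hT]
    have := hφ l
    have := hb l
    have := hb (krewPerm m p l)
    omega
  · intro τ _ τ' _ h
    funext t
    obtain ⟨l, rfl⟩ := hT.1 t
    have := congrArg Fin.val (congrFun h l)
    simp only at this
    have := hb l
    ext; omega

lemma sol_lim {m : ℕ} {p : Equiv.Perm (Fin (2 * m))} {T : Fin (2 * m) → Fin (m + 1)}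
    (hT : KrI m p T) (k : Fin (2 * m) → ℤ) :
    Tendsto (fun N : ℕ => ((solSet N (krewPerm m p) k).card : ℝ) / (N : ℝ) ^ (m + 1)) atTop
      (nhds (if ∀ t, ∑ l ∈ Finset.univ.filter (fun l => T l = t), k l = 0 then 1 else 0)) := by
  split_ifs with hk
  · obtain ⟨B, hB⟩ := sol_ge hT k hk
    have h1 : Tendsto (fun N : ℕ => (1 - (2 * B : ℝ) / N) ^ (m + 1)) atTop (nhds 1) := by
      have : Tendsto (fun N : ℕ => (2 * B : ℝ) / N) atTop (nhds 0) :=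
        tendsto_const_div_atTop_nhds_zero_nat _
      simpa using (this.const_sub 1).pow (m + 1)
    refine tendsto_of_tendsto_of_tendsto_of_le_of_le' h1 tendsto_const_nhds ?_ ?_
    · filter_upwards [eventually_ge_atTop (2 * B + 1)] with N hN
      have hN0 : (0:ℝ) < N := by exact_mod_cast (by omega : 0 < N)
      rw [le_div_iff₀ (by positivity), ← mul_pow]
      have : ((N - 2 * B : ℕ) : ℝ) ^ (m + 1) ≤ (solSet N (krewPerm m p) k).card := by
        exact_mod_cast hB N
      rw [Nat.cast_sub (by omega)] at this
      have h3 : (1 - (2 * B : ℝ) / N) * N = N - ((2 * B : ℕ) : ℝ) := by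
        push_cast; field_simp
      rw [h3]; exact this
    · filter_upwards [eventually_ge_atTop 1] with N hN
      have hN0 : (0:ℝ) < N := by exact_mod_cast (by omega : 0 < N)
      rw [div_le_one (by positivity)]
      exact_mod_cast sol_le hT k
  · simp [sol_zero hT k hk]

/-! existence of the index and number of noncrossing pairings -/
lemma NC_card (m : ℕ) : (NCPairings m).card ≤ 4 ^ m := by
  have h4 : 4 ^ m = (Finset.univ : Finset (Finset (Fin (2 * m)))).card := by
    simp [pow_mul]
  rw [h4]
  refine Finset.card_le_card_of_injOn (fun p => Finset.univ.filter fun u => u < p u) (by simp) ?_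
  intro p hp p' hp' heq
  have hpp := mem_pairs.1 (NC_sub hp)
  have hpp' := mem_pairs.1 (NC_sub hp')
  have ho : ∀ u, u < p u ↔ u < p' u := by
    intro u
    have := Finset.ext_iff.1 heq u
    simpa using this
  have aux : ∀ (p p' : Equiv.Perm (Fin (2 * m))) (hp : p ∈ NCPairings m) (hp' : p' ∈ NCPairings m)
      (ho : ∀ u, u < p u ↔ u < p' u) (v : Fin (2 * m)) (ih : ∀ w, w < v → p w < w → p w = p' w)
      (hv : p v < v), ¬ p v < p' v := by
    intro p p' hp hp' ho v ih hv hlt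
    have hpp := mem_pairs.1 (NC_sub hp)
    have hpp' := mem_pairs.1 (NC_sub hp')
    have hv' : p' v < v := by
      refine lt_of_le_of_ne (not_lt.1 fun h => ?_) (hpp'.2 v)
      exact absurd ((ho v).2 h) (not_lt.2 hv.le)
    have h1 : p' v < p (p' v) := (ho _).2 (by rw [hpp'.1]; exact hv')
    have h2 : p (p' v) < v := by
      refine lt_of_le_of_ne (not_lt.1 fun h => ?_) ?_
      · exact NC_nc hp (p v) (p' v) hlt (by rw [hpp.1]; exact hv') (by rw [hpp.1]; exact h)
      · intro h
        have : p' v = p v := by rw [← h, hpp.1, h]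
        rw [this] at hlt; exact lt_irrefl _ hlt
    have h3 := ih _ h2 (by rw [hpp.1]; exact h1)
    rw [hpp.1] at h3
    have := p'.injective h3
    rw [← this] at h2
    exact lt_irrefl _ h2
  have main : ∀ n : ℕ, ∀ v : Fin (2 * m), v.val = n → p v < v → p v = p' v := by
    intro n
    induction n using Nat.strong_induction_on with
    | _ n ih =>
      intro v hv hlt
      have ih' : ∀ w, w < v → p w < w → p w = p' w := by
        intro w hw; exact ih w.val (by rw [Fin.lt_def] at hw; omega) w rfl
      have hv' : p' v < v := by
        refine lt_of_le_of_ne (not_lt.1 fun h => ?_) (hpp'.2 v)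
        exact absurd ((ho v).2 h) (not_lt.2 hlt.le)
      rcases lt_trichotomy (p v) (p' v) with h | h | h
      · exact absurd h (aux p p' hp hp' ho v ih' hlt)
      · exact h
      · refine absurd h (aux p' p hp' hp (fun u => (ho u).symm) v ?_ hv')
        intro w hw hw'
        refine (ih' w hw ?_).symm
        refine lt_of_le_of_ne (not_lt.1 fun h => ?_) (hpp.2 w)
        exact absurd ((ho w).1 h) (not_lt.2 hw'.le)
  ext v
  by_cases hv : p v < v
  · rw [main _ v rfl hv]
  · have h1 : v < p v := lt_of_le_of_ne (not_lt.1 hv) (hpp.2 v).symm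
    have h2 := main _ (p v) rfl (by rw [hpp.1]; exact h1)
    rw [hpp.1] at h2
    have : p' v = p v := by rw [h2, hpp'.1, ← h2]
    rw [this]


/-- innermost arc -/
def T0 {m : ℕ} (p : Equiv.Perm (Fin (2 * m))) (l : Fin (2 * m)) : WithBot (Fin (2 * m)) :=
  (Finset.univ.filter fun u => u ≤ l ∧ l < p u).max

lemma T0_eq_coe {m : ℕ} {p : Equiv.Perm (Fin (2 * m))} {l u0 : Fin (2 * m)} (h1 : u0 ≤ l ∧ l < p u0)
    (h2 : ∀ u, u ≤ l ∧ l < p u → u ≤ u0) : T0 p l = u0 := by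
  apply le_antisymm
  · apply Finset.max_le
    intro u hu
    simp only [Finset.mem_filter, Finset.mem_univ, true_and] at hu
    exact WithBot.coe_le_coe.2 (h2 u hu)
  · exact Finset.le_max (by simpa using h1)

lemma T0_op {m : ℕ} {p : Equiv.Perm (Fin (2 * m))} {l : Fin (2 * m)} (h : l < p l) : T0 p l = l :=
  T0_eq_coe ⟨le_rfl, h⟩ (fun _ h => h.1)

lemma T0_last {m : ℕ} {p : Equiv.Perm (Fin (2 * m))} {l : Fin (2 * m)} (h : l.val = 2 * m - 1) :
    T0 p l = ⊥ := by
  rw [T0, Finset.max_eq_bot, Finset.filter_eq_empty_iff]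
  intro u _ hu
  have := (p u).2
  have := hu.2
  rw [Fin.lt_def] at this
  omega

lemma T0_krew {m : ℕ} {p : Equiv.Perm (Fin (2 * m))} (hp : p ∈ NCPairings m) (l : Fin (2 * m)) :
    T0 p (krewPerm m p l) = T0 p l := by
  have hpp := mem_pairs.1 (NC_sub hp)
  have hk : krewPerm m p l = p (finRotate (2 * m) l) := rfl
  rw [hk]
  set j := finRotate (2 * m) l with hj
  have hl : l = prd m j := by rw [hj, prd_rot]
  have hv := prd_val j
  rw [← hl] at hv
  rcases lt_or_gt_of_ne (hpp.2 j) with h | h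
  · -- closer
    have hj0 : j.val ≠ 0 := by rw [Fin.lt_def] at h; omega
    rw [if_neg hj0] at hv
    rw [T0_op (by rw [hpp.1]; exact h)]
    symm
    apply T0_eq_coe
    · rw [hpp.1, Fin.le_def, Fin.lt_def]; rw [Fin.lt_def] at h; omega
    · intro u hu
      by_contra hlt
      rw [not_le] at hlt
      have hne : p u ≠ j := fun h => by rw [← h, hpp.1] at hlt; exact lt_irrefl _ hlt
      refine NC_nc hp (p j) u hlt ?_ ?_
      · rw [hpp.1, Fin.lt_def]; have := hu.1; rw [Fin.le_def] at this; omega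
      · rw [hpp.1]
        refine lt_of_le_of_ne ?_ hne.symm
        have := hu.2; rw [Fin.lt_def] at this; rw [Fin.le_def]; omega
  · by_cases hj0 : j.val = 0
    · rw [if_pos hj0] at hv
      rw [T0_last hv, T0, Finset.max_eq_bot, Finset.filter_eq_empty_iff]
      rintro u _ ⟨h1, h2⟩
      have hu0 : u ≠ j := fun h' => by rw [h'] at h2; exact lt_irrefl _ h2
      have hu1 : u ≠ p j := fun h' => by rw [h', hpp.1] at h2; exact absurd h2 (not_lt.2 h.le)
      refine NC_nc hp j u ?_ (lt_of_le_of_ne h1 hu1) h2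
      rw [Fin.lt_def]
      have : u.val ≠ j.val := fun h => hu0 (Fin.ext h)
      omega
    · rw [if_neg hj0] at hv
      rw [T0, T0]
      congr 1
      ext u
      simp only [Finset.mem_filter, Finset.mem_univ, true_and]
      constructor
      · rintro ⟨h1, h2⟩
        have hu0 : u ≠ j := fun h' => by rw [h'] at h2; exact lt_irrefl _ h2
        have hu1 : u ≠ p j := fun h' => by rw [h', hpp.1] at h2; exact absurd h2 (not_lt.2 h.le)
        have hlt : u < j := by
          refine lt_of_le_of_ne (not_lt.1 fun h' => ?_) hu0
          exact NC_nc hp j u h' (lt_of_le_of_ne h1 hu1) h2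
        rw [Fin.lt_def] at *
        rw [Fin.le_def]; omega
      · rintro ⟨h1, h2⟩
        have hlt : u < j := by rw [Fin.lt_def]; rw [Fin.le_def] at h1; omega
        have hne : p u ≠ j := fun h' => by rw [← h', hpp.1] at h; exact absurd h (not_lt.2 (by rw [h']; exact hlt.le))
        have hne2 : p u ≠ p j := fun h' => by rw [p.injective h'] at hlt; exact lt_irrefl _ hlt
        have hju : j < p u := by
          refine lt_of_le_of_ne ?_ hne.symm
          rw [Fin.lt_def] at h2; rw [Fin.le_def]; omega
        refine ⟨(hlt.trans h).le, ?_⟩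
        refine lt_of_le_of_ne (not_lt.1 fun h' => ?_) hne2.symm
        exact NC_nc hp u j hlt hju h'

lemma T0_same {m : ℕ} (hm : 1 ≤ m) {p : Equiv.Perm (Fin (2 * m))} (hp : p ∈ NCPairings m) :
    ∃ rep : WithBot (Fin (2 * m)) → Fin (2 * m), ∀ l, (krewPerm m p).SameCycle l (rep (T0 p l)) := by
  have hpp := mem_pairs.1 (NC_sub hp)
  refine ⟨fun t => t.recBotCoe (⟨2 * m - 1, by omega⟩ : Fin (2 * m)) id, ?_⟩
  have main : ∀ n : ℕ, ∀ l : Fin (2 * m), l.val = n → (krewPerm m p).SameCycle l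
      (WithBot.recBotCoe (C := fun _ => Fin (2 * m)) (⟨2 * m - 1, by omega⟩ : Fin (2 * m)) id (T0 p l)) := by
    intro n
    induction n using Nat.strong_induction_on with
    | _ n ih =>
      intro l hl
      rcases lt_or_gt_of_ne (hpp.2 l) with h | h
      · have hk : krewPerm m p (prd m (p l)) = l := by
          change p (finRotate (2 * m) (prd m (p l))) = l
          rw [rot_prd, hpp.1]
        have hT : T0 p l = T0 p (prd m (p l)) := by
          conv_lhs => rw [← hk]
          exact T0_krew hp _
        have hc : (krewPerm m p).SameCycle l (prd m (p l)) := by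
          conv_lhs => rw [← hk]
          exact (Equiv.Perm.sameCycle_apply_left).2 (Equiv.Perm.SameCycle.refl _ _)
        rw [hT]
        refine hc.trans ?_
        have hv := prd_val (p l)
        split_ifs at hv with h0
        · rw [T0_last hv]
          have : prd m (p l) = (⟨2 * m - 1, by omega⟩ : Fin (2 * m)) := Fin.ext hv
          rw [this]
          exact Equiv.Perm.SameCycle.refl _ _
        · exact ih _ (by rw [Fin.lt_def] at h; omega) _ rfl
      · rw [T0_op h]
        exact Equiv.Perm.SameCycle.refl _ _
  exact fun l => main _ l rfl

lemma KrI_exists {m : ℕ} (hm : 1 ≤ m) {p : Equiv.Perm (Fin (2 * m))} (hp : p ∈ NCPairings m) :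
    ∃ T, KrI m p T := by
  classical
  obtain ⟨rep, hrep⟩ := T0_same hm hp
  have hpp := mem_pairs.1 (NC_sub hp)
  let R : Finset (WithBot (Fin (2 * m))) := insert ⊥ ((Finset.univ.filter fun u : Fin (2 * m) => u < p u).image (WithBot.some : Fin (2 * m) → WithBot (Fin (2 * m))))
  have hR : R.card = m + 1 := by
    rw [Finset.card_insert_of_notMem (by simp), Finset.card_image_of_injective _ WithBot.coe_injective,
      card_op (NC_sub hp)]
  have hmem : ∀ l, T0 p l ∈ R := by
    intro l
    rcases h : T0 p l with _ | u
    · exact Finset.mem_insert_self _ _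
    · apply Finset.mem_insert_of_mem
      have := Finset.mem_of_max h
      simp only [Finset.mem_filter, Finset.mem_univ, true_and] at this
      exact Finset.mem_image.2 ⟨u, by simpa using lt_of_le_of_lt this.1 this.2, rfl⟩
  let E := R.equivFinOfCardEq hR
  refine ⟨fun l => E ⟨T0 p l, hmem l⟩, ?_, ?_⟩
  · intro t
    obtain ⟨⟨r, hr⟩, rfl⟩ := E.surjective t
    have hr' := hr
    rw [Finset.mem_insert, Finset.mem_image] at hr
    rcases hr with rfl | ⟨u, hu, rfl⟩
    · have hlast := T0_last (p := p) (l := ⟨2 * m - 1, by omega⟩) rfl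
      exact ⟨⟨2 * m - 1, by omega⟩, by simp only [hlast]⟩
    · have hop := T0_op (p := p) (l := u) (by simpa using hu)
      exact ⟨u, by simp only [hop]⟩
  · intro i j
    rw [E.injective.eq_iff, Subtype.mk.injEq]
    constructor
    · intro h
      have h1 := hrep i
      rw [h] at h1
      exact h1.trans (hrep j).symm
    · rintro ⟨n, rfl⟩
      have : ∀ (n : ℕ) (i), T0 p (((krewPerm m p) ^ n) i) = T0 p i := by
        intro n i
        induction n with
        | zero => rfl
        | succ n ih => rw [pow_succ', Equiv.Perm.mul_apply, T0_krew hp, ih]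
      obtain ⟨k, hk⟩ := (show (krewPerm m p).SameCycle i (((krewPerm m p) ^ n) i) from ⟨n, rfl⟩).exists_pow_eq'
      rw [← hk.2, this]


lemma pow_walk {N : ℕ} (A : Matrix (Fin N) (Fin N) ℝ) (n : ℕ) (a b : Fin N) :
    (A ^ (n + 1)) a b = ∑ i : Fin n → Fin N, ∏ l : Fin (n + 1),
      A (Fin.cons (α := fun _ => Fin N) a i l) (Fin.snoc (α := fun _ => Fin N) i b l) := by
  induction n generalizing a with
  | zero => simp [Fin.snoc]
  | succ n ih =>
    rw [pow_succ', Matrix.mul_apply]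
    simp_rw [ih, Finset.mul_sum]
    rw [← Finset.sum_product', Finset.univ_product_univ]
    refine Fintype.sum_equiv (Fin.consEquiv (fun _ : Fin (n + 1) => Fin N)) _ _ ?_
    rintro ⟨c, i⟩
    conv_rhs => rw [Fin.prod_univ_succ]
    have h1 : ∀ l, Fin.snoc (α := fun _ => Fin N) (Fin.cons (α := fun _ => Fin N) c i) b l =
        Fin.cons (α := fun _ => Fin N) c (Fin.snoc (α := fun _ => Fin N) i b) l := by
      intro l; rw [Fin.cons_snoc_eq_snoc_cons]
    simp only [Fin.consEquiv, Equiv.coe_fn_mk]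
    simp only [h1, Fin.cons_zero, Fin.cons_succ]

lemma trace_walk {N m : ℕ} (hm : 1 ≤ m) (A : Matrix (Fin N) (Fin N) ℝ) :
    (A ^ (2 * m)).trace = ∑ i : Fin (2 * m) → Fin N, ∏ u, A (i (prd m u)) (i u) := by
  have h0 : ∀ n, (A ^ (n + 1)).trace = ∑ i : Fin (n + 1) → Fin N, ∏ l, A (i l) (i (finRotate (n + 1) l)) := by
    intro n
    rw [Matrix.trace]
    simp_rw [Matrix.diag_apply, pow_walk]
    rw [← Finset.sum_product', Finset.univ_product_univ]
    refine Fintype.sum_equiv (Fin.consEquiv (fun _ : Fin (n + 1) => Fin N)) _ _ ?_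
    rintro ⟨a, i⟩
    refine Finset.prod_congr rfl fun l _ => ?_
    simp only [Fin.consEquiv, Equiv.coe_fn_mk]
    congr 1
    refine Fin.lastCases ?_ (fun l => ?_) l
    · rw [finRotate_last, Fin.snoc_last, Fin.cons_zero]
    · rw [Fin.snoc_castSucc]
      have : finRotate (n + 1) l.castSucc = l.succ := by
        ext; rw [rot_val]; simp; have := l.2; omega
      rw [this, Fin.cons_succ]
  have h1 : ∀ n, 1 ≤ n → (A ^ n).trace = ∑ i : Fin n → Fin N, ∏ l, A (i l) (i (finRotate n l)) := by
    intro n hn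
    obtain ⟨k, rfl⟩ : ∃ k, n = k + 1 := ⟨n - 1, by omega⟩
    exact h0 k
  rw [h1 _ (by omega)]
  refine Finset.sum_congr rfl fun i _ => ?_
  symm
  refine Fintype.prod_equiv (prd m) _ _ fun u => ?_
  rw [rot_prd]

/-- symmetrized covariance -/
def Qs (R : ℤ × ℤ → ℝ) (w : ℤ × ℤ) : ℝ := R w + R w.swap

/-- normalized moment of the trigonometric model -/
def momN (m N : ℕ) (R : ℤ × ℤ → ℝ) : ℝ :=
  (N : ℝ)⁻¹ * ((Real.sqrt N)⁻¹) ^ (2 * m) * ∑ i : Fin (2 * m) → Fin N, ∑ p ∈ pairs m,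
    ∏ u ∈ Finset.univ.filter (fun u => u < p u), (Qs R (Doff p i u true) + Qs R (Doff p i u false))

section
variable {E : Type*} [NormedAddCommGroup E] [InnerProductSpace ℝ E]

/-- the symmetrized scaled matrix of a Gaussian functional -/
def Bm {N : ℕ} (y : Fin N → Fin N → E) (θ : E) : Matrix (Fin N) (Fin N) ℝ :=
  fun a b => (Real.sqrt N)⁻¹ * (inner ℝ (y a b) θ + inner ℝ (y b a) θ)

variable [FiniteDimensional ℝ E] [MeasurableSpace E] [BorelSpace E]

lemma trace_Bm_eq {N m : ℕ} (hm : 1 ≤ m) (y : Fin N → Fin N → E) (θ : E) :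
    (Bm y θ ^ (2 * m)).trace = ((Real.sqrt N)⁻¹) ^ (2 * m) * ∑ i : Fin (2 * m) → Fin N,
      ∏ u, inner ℝ (y (i (prd m u)) (i u) + y (i u) (i (prd m u))) θ := by
  rw [trace_walk hm, Finset.mul_sum]
  refine Finset.sum_congr rfl fun i _ => ?_
  simp only [Bm]
  rw [Finset.prod_mul_distrib]
  simp [inner_add_left]

lemma integrable_trace_Bm {N m : ℕ} (hm : 1 ≤ m) (y : Fin N → Fin N → E) :
    Integrable (fun θ => (Bm y θ ^ (2 * m)).trace) (stdGaussian E) := by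
  simp_rw [trace_Bm_eq hm]
  exact (integrable_finsetSum _ fun i _ => integrable_prod_inner _).const_mul _

lemma moment_eq {N m : ℕ} (hm : 1 ≤ m) (y : Fin N → Fin N → E) (R : ℤ × ℤ → ℝ)
    (hy : ∀ a b c d, inner ℝ (y a b) (y c d) = R ((c.val : ℤ) - a.val, (d.val : ℤ) - b.val)) :
    ∫ θ, (N : ℝ)⁻¹ * (Bm y θ ^ (2 * m)).trace ∂(stdGaussian E) = momN m N R := by
  rw [integral_const_mul]
  simp_rw [trace_Bm_eq hm]
  rw [integral_const_mul, integral_finsetSum _ (fun i _ => integrable_prod_inner _), momN, mul_assoc]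
  congr 2
  refine Finset.sum_congr rfl fun i _ => ?_
  rw [wick]
  refine Finset.sum_congr rfl fun p _ => Finset.prod_congr rfl fun u _ => ?_
  simp only [inner_add_left, inner_add_right, hy, Qs, Doff, if_true, Prod.swap]
  simp
  ring
end

/-- box of frequencies -/
def Kb (n : ℕ) : Finset (ℤ × ℤ) := Finset.Icc (-(n : ℤ)) n ×ˢ Finset.Icc (-(n : ℤ)) n

lemma Kb_swap {n : ℕ} {w : ℤ × ℤ} : w.swap ∈ Kb n ↔ w ∈ Kb n := by
  simp [Kb, and_comm]
lemma Kb_neg {n : ℕ} {w : ℤ × ℤ} : -w ∈ Kb n ↔ w ∈ Kb n := by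
  simp only [Kb, Finset.mem_product, Finset.mem_Icc, Prod.fst_neg, Prod.snd_neg]
  omega

lemma momN_eq {m N n : ℕ} (R : ℤ × ℤ → ℝ) (hR : ∀ w, w ∉ Kb n → R w = 0) :
    momN m N R = ∑ p ∈ pairs m, ∑ x ∈ Fintype.piFinset (fun _ : {u // u < p u} =>
        (Finset.univ : Finset Bool) ×ˢ Kb n), (∏ u, Qs R (x u).2) *
        (((cntSet N p x).card : ℝ) / (N : ℝ) ^ (m + 1)) := by
  have hQ : ∀ w, w ∉ Kb n → Qs R w = 0 := by
    intro w hw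
    rw [Qs, hR w hw, hR _ (fun h => hw (Kb_swap.1 h)), add_zero]
  have h1 : ∀ (i : Fin (2 * m) → Fin N) (p : Equiv.Perm (Fin (2 * m))),
      ∏ u ∈ Finset.univ.filter (fun u => u < p u), (Qs R (Doff p i u true) + Qs R (Doff p i u false)) =
      ∑ x ∈ Fintype.piFinset (fun _ : {u // u < p u} =>
        (Finset.univ : Finset Bool) ×ˢ Kb n), if i ∈ cntSet N p x then ∏ u, Qs R (x u).2 else 0 := by
    intro i p
    rw [Finset.prod_subtype (p := fun u => u < p u) _ (by simp)]
    have h2 : ∀ u : {u // u < p u}, (Qs R (Doff p i u true) + Qs R (Doff p i u false)) =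
        ∑ x ∈ (Finset.univ : Finset Bool) ×ˢ Kb n, if Doff p i u x.1 = x.2 then Qs R x.2 else 0 := by
      intro u
      have h3 : ∀ o, (∑ w ∈ Kb n, if Doff p i u o = w then Qs R w else 0) = Qs R (Doff p i u o) := by
        intro o
        rw [Finset.sum_ite_eq]
        split_ifs with h
        · rfl
        · rw [hQ _ h]
      rw [Finset.sum_product]
      simp [h3]
    rw [Finset.prod_congr rfl (fun u _ => h2 u), Finset.prod_univ_sum]
    refine Finset.sum_congr rfl fun x _ => ?_
    rw [Finset.prod_ite_zero]
    simp [cntSet]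
  have h4 : (N : ℝ)⁻¹ * ((Real.sqrt N)⁻¹) ^ (2 * m) = ((N : ℝ) ^ (m + 1))⁻¹ := by
    rw [inv_pow, pow_mul, Real.sq_sqrt (by positivity), ← mul_inv, pow_succ']
  rw [momN, h4]
  simp_rw [h1]
  rw [Finset.sum_comm, Finset.mul_sum]
  refine Finset.sum_congr rfl fun p _ => ?_
  rw [Finset.sum_comm, Finset.mul_sum]
  refine Finset.sum_congr rfl fun x _ => ?_
  rw [← Finset.sum_filter, Finset.sum_const]
  have : (Finset.univ.filter fun i => i ∈ cntSet N p x) = cntSet N p x := by ext; simp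
  rw [this, nsmul_eq_mul]; ring

/-- frequencies on the Kreweras cycles -/
def kw {m : ℕ} (p : Equiv.Perm (Fin (2 * m))) (w : {u // u < p u} → ℤ × ℤ) (l : Fin (2 * m)) : ℤ :=
  let w' : Fin (2 * m) → ℤ × ℤ := fun j => if h : j < p j then w ⟨j, h⟩ else 0
  if finRotate (2 * m) l < p (finRotate (2 * m) l) then (w' (finRotate (2 * m) l)).1
    else -(w' (p (finRotate (2 * m) l))).2

lemma kw_op {m : ℕ} (p : Equiv.Perm (Fin (2 * m))) (w : {u // u < p u} → ℤ × ℤ) (u : {u // u < p u}) :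
    kw p w (prd m u) = (w u).1 := by
  simp only [kw, rot_prd]
  rw [if_pos u.2, dif_pos u.2]

lemma kw_cl {m : ℕ} {p : Equiv.Perm (Fin (2 * m))} (hp : p ∈ pairs m) (w : {u // u < p u} → ℤ × ℤ) (u : {u // u < p u}) :
    kw p w (prd m (p u)) = -(w u).2 := by
  rw [mem_pairs] at hp
  simp only [kw, rot_prd, hp.1]
  rw [if_neg (not_lt.2 u.2.le), dif_pos u.2]

lemma op_cases {m : ℕ} {p : Equiv.Perm (Fin (2 * m))} (hp : p ∈ pairs m) (l : Fin (2 * m)) :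
    (∃ u : {u // u < p u}, l = prd m u) ∨ (∃ u : {u // u < p u}, l = prd m (p u)) := by
  rw [mem_pairs] at hp
  rcases lt_or_gt_of_ne (hp.2 (finRotate _ l)) with h | h
  · right
    refine ⟨⟨p (finRotate _ l), by rw [hp.1]; exact h⟩, ?_⟩
    simp only [hp.1]; rw [prd_rot]
  · left
    exact ⟨⟨_, h⟩, by simp only; rw [prd_rot]⟩

lemma cnt_eq_sol {m N : ℕ} {p : Equiv.Perm (Fin (2 * m))} (hp : p ∈ pairs m)
    (x : {u // u < p u} → Bool × (ℤ × ℤ)) (hx : ∀ u, (x u).1 = false) :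
    cntSet N p x = solSet N (krewPerm m p) (kw p (fun u => (x u).2)) := by
  have hk : ∀ u, krewPerm m p (prd m u) = p u := by
    intro u; change p (finRotate _ (prd m u)) = p u; rw [rot_prd]
  have hpp := mem_pairs.1 hp
  ext i
  simp only [cntSet, solSet, Finset.mem_filter, Finset.mem_univ, true_and]
  constructor
  · intro h l
    rcases op_cases hp l with ⟨u, rfl⟩ | ⟨u, rfl⟩
    · rw [kw_op, hk, ← h u, Doff, hx]; simp
    · rw [kw_cl hp, hk, ← h u, Doff, hx, hpp.1]; simp
  · intro h u
    have h1 := h (prd m u)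
    have h2 := h (prd m (p u))
    rw [kw_op, hk] at h1
    rw [kw_cl hp, hk, hpp.1] at h2
    rw [Doff, hx]
    simp only [Bool.false_eq_true, if_false]
    ext
    · exact h1
    · simp only; omega

lemma bad_lim {m : ℕ} (hm : 1 ≤ m) {p : Equiv.Perm (Fin (2 * m))} (hp : p ∈ pairs m)
    (x : {u // u < p u} → Bool × (ℤ × ℤ))
    (hbad : p ∉ NCPairings m ∨ ∃ u, (x u).1 = true) :
    Tendsto (fun N : ℕ => ((cntSet N p x).card : ℝ) / (N : ℝ) ^ (m + 1)) atTop (nhds 0) := by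
  have h1 : Tendsto (fun N : ℕ => (3 ^ (m - 1) : ℝ) / N) atTop (nhds 0) :=
    tendsto_const_div_atTop_nhds_zero_nat _
  refine tendsto_of_tendsto_of_tendsto_of_le_of_le' tendsto_const_nhds h1
    (Eventually.of_forall fun N => by positivity) ?_
  filter_upwards [eventually_ge_atTop 1] with N hN
  have hN1 : (1:ℝ) ≤ N := by exact_mod_cast hN
  have hb : ((cntSet N p x).card : ℝ) ≤ N * (2 * N + 1) ^ (m - 1) := by
    exact_mod_cast bad_count hp x hbad
  rw [div_le_div_iff₀ (by positivity) (by positivity)]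
  calc ((cntSet N p x).card : ℝ) * N ≤ (N * (2 * N + 1) ^ (m - 1)) * N := by gcongr
    _ ≤ (N * (3 * N) ^ (m - 1)) * N := by gcongr; linarith
    _ = 3 ^ (m - 1) * (N : ℝ) ^ ((m - 1) + 2) := by rw [mul_pow]; ring
    _ = 3 ^ (m - 1) * (N : ℝ) ^ (m + 1) := by congr 2; omega

/-- limiting contribution of one noncrossing pairing -/
def limP (m n : ℕ) (R : ℤ × ℤ → ℝ) (p : Equiv.Perm (Fin (2 * m))) (T : Fin (2 * m) → Fin (m + 1)) : ℝ :=
  ∑ w ∈ Fintype.piFinset (fun _ : {u // u < p u} => Kb n), (∏ u, Qs R (w u)) *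
    if ∀ t, ∑ l ∈ Finset.univ.filter (fun l => T l = t), kw p w l = 0 then 1 else 0

lemma mom_lim {m n : ℕ} (hm : 1 ≤ m) (R : ℤ × ℤ → ℝ) (hR : ∀ w, w ∉ Kb n → R w = 0)
    (T : Equiv.Perm (Fin (2 * m)) → Fin (2 * m) → Fin (m + 1)) (hT : ∀ p ∈ NCPairings m, KrI m p (T p)) :
    Tendsto (fun N => momN m N R) atTop (nhds (∑ p ∈ NCPairings m, limP m n R p (T p))) := by
  simp_rw [momN_eq R hR]
  have hsub : NCPairings m ⊆ pairs m := fun p hp => NC_sub hp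
  have hs : ∑ p ∈ NCPairings m, limP m n R p (T p) =
      ∑ p ∈ pairs m, if p ∈ NCPairings m then limP m n R p (T p) else 0 := by
    rw [← Finset.sum_filter]
    refine Finset.sum_congr ?_ fun _ _ => rfl
    ext p; simp only [Finset.mem_filter]; exact ⟨fun h => ⟨hsub h, h⟩, fun h => h.2⟩
  rw [hs]
  refine tendsto_finsetSum _ fun p hp => ?_
  split_ifs with hnc
  · have hl : limP m n R p (T p) = ∑ x ∈ Fintype.piFinset (fun _ : {u // u < p u} =>
        (Finset.univ : Finset Bool) ×ˢ Kb n), (∏ u, Qs R (x u).2) *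
        (if ∀ u, (x u).1 = false then (if ∀ t, ∑ l ∈ Finset.univ.filter (fun l => T p l = t),
          kw p (fun u => (x u).2) l = 0 then 1 else 0) else 0) := by
      simp_rw [mul_ite, mul_zero]
      rw [← Finset.sum_filter, limP]
      refine Finset.sum_bij' (fun w _ => fun u => (false, w u)) (fun x _ => fun u => (x u).2) ?_ ?_ ?_ ?_ ?_
      · intro w hw
        simp only [Fintype.mem_piFinset] at hw
        simp [Fintype.mem_piFinset, hw]
      · intro x hx
        simp only [Finset.mem_filter, Fintype.mem_piFinset, Finset.mem_product] at hx
        simp only [Fintype.mem_piFinset]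
        exact fun u => (hx.1 u).2
      · intro w _; rfl
      · intro x hx
        simp only [Finset.mem_filter] at hx
        funext u
        ext1
        · exact (hx.2 u).symm
        · rfl
      · intro w _; simp
    rw [hl]
    refine tendsto_finsetSum _ fun x _ => Tendsto.const_mul _ ?_
    split_ifs with h1 h2
    · simp_rw [cnt_eq_sol hp x h1]
      have := sol_lim (hT p hnc) (kw p (fun u => (x u).2))
      rwa [if_pos h2] at this
    · simp_rw [cnt_eq_sol hp x h1]
      have := sol_lim (hT p hnc) (kw p (fun u => (x u).2))
      rwa [if_neg h2] at this
    · apply bad_lim hm hp x (Or.inr _)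
      push Not at h1
      simpa using h1
  · have : (0:ℝ) = ∑ x ∈ Fintype.piFinset (fun _ : {u // u < p u} =>
        (Finset.univ : Finset Bool) ×ˢ Kb n), (∏ u, Qs R (x u).2) * 0 := by simp
    rw [this]
    exact tendsto_finsetSum _ fun x _ => (bad_lim hm hp x (Or.inl hnc)).const_mul _


/-- trigonometric spectral density -/
def fR (n : ℕ) (R : ℤ × ℤ → ℝ) (q : ℝ × ℝ) : ℝ :=
  ((2 * π) ^ 2)⁻¹ * ∑ w ∈ Kb n, R w * Real.cos (w.1 * q.1 + w.2 * q.2)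

lemma sum_op {m : ℕ} {p : Equiv.Perm (Fin (2 * m))} (hp : p ∈ pairs m) (F : Fin (2 * m) → ℝ) :
    ∑ l, F l = ∑ u : {u // u < p u}, (F (prd m u) + F (prd m (p u))) := by
  have hpp := mem_pairs.1 hp
  have h1 : ∑ l, F l = ∑ j, F (prd m j) := (Equiv.sum_comp (prd m) F).symm
  rw [h1, ← Finset.sum_filter_add_sum_filter_not Finset.univ (fun j => j < p j), Finset.sum_add_distrib]
  congr 1
  · rw [Finset.sum_subtype (p := fun u => u < p u) _ (by simp)]
  · rw [← Finset.sum_subtype (p := fun u => u < p u) (Finset.univ.filter fun u => u < p u) (by simp) (fun u => F (prd m (p u)))]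
    symm
    refine Finset.sum_bij (fun u _ => p u) ?_ (fun a _ b _ h => p.injective h) ?_ (fun _ _ => rfl)
    · intro u hu
      simp only [Finset.mem_filter, Finset.mem_univ, true_and, hpp.1] at hu ⊢
      exact not_lt.2 hu.le
    · intro u hu
      simp only [Finset.mem_filter, Finset.mem_univ, true_and] at hu
      refine ⟨p u, ?_, hpp.1 u⟩
      simp only [Finset.mem_filter, Finset.mem_univ, true_and, hpp.1]
      exact lt_of_le_of_ne (not_lt.1 hu) (hpp.2 u)

lemma fR_pair (n : ℕ) (R : ℤ × ℤ → ℝ) (hev : ∀ w, R (-w) = R w) (a b : ℝ) :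
    ((fR n R (a, -b) + fR n R (-b, a) : ℝ) : ℂ) = (((2 * π) ^ 2)⁻¹ : ℝ) *
      ∑ w ∈ Kb n, (Qs R w : ℂ) * Complex.exp (Complex.I * ((w.1 * b - w.2 * a : ℝ) : ℂ)) := by
  have h1 : fR n R (a, -b) + fR n R (-b, a) = ((2 * π) ^ 2)⁻¹ *
      ∑ w ∈ Kb n, Qs R w * Real.cos (w.1 * b - w.2 * a) := by
    simp only [fR]
    rw [← mul_add]
    congr 1
    have e1 : ∑ w ∈ Kb n, R w * Real.cos (w.1 * a + w.2 * -b) =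
        ∑ w ∈ Kb n, R w.swap * Real.cos (w.1 * b - w.2 * a) := by
      refine Finset.sum_bij' (fun w _ => w.swap) (fun w _ => w.swap) (fun w hw => Kb_swap.2 hw)
        (fun w hw => Kb_swap.2 hw) (fun _ _ => by simp) (fun _ _ => by simp) ?_
      intro w _
      simp only [Prod.swap_swap, Prod.fst_swap, Prod.snd_swap]
      rw [← Real.cos_neg]; congr 2; ring
    rw [e1, ← Finset.sum_add_distrib]
    refine Finset.sum_congr rfl fun w _ => ?_
    have : Real.cos ((w.1:ℝ) * -b + w.2 * a) = Real.cos (w.1 * b - w.2 * a) := by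
      rw [← Real.cos_neg]; congr 1; ring
    rw [this, Qs]; ring
  have h2 : ∑ w ∈ Kb n, Qs R w * Real.sin (w.1 * b - w.2 * a) = 0 := by
    have e1 : ∑ w ∈ Kb n, Qs R w * Real.sin (w.1 * b - w.2 * a) =
        ∑ w ∈ Kb n, -(Qs R w * Real.sin (w.1 * b - w.2 * a)) := by
      refine Finset.sum_bij' (fun w _ => -w) (fun w _ => -w) (fun w hw => Kb_neg.2 hw)
        (fun w hw => Kb_neg.2 hw) (fun _ _ => by simp) (fun _ _ => by simp) ?_
      intro w _
      have : Qs R (-w) = Qs R w := by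
        simp only [Qs]; rw [hev, show (-w).swap = -(w.swap) from rfl, hev]
      rw [this]
      have : Real.sin (((-w).1 : ℤ) * b - ((-w).2 : ℤ) * a) = - Real.sin (w.1 * b - w.2 * a) := by
        rw [← Real.sin_neg]; congr 1; simp; ring
      rw [this]; ring
    rw [Finset.sum_neg_distrib] at e1
    linarith
  rw [h1, Complex.ofReal_mul, Complex.ofReal_sum]
  congr 1
  have h3 : ∀ w : ℤ × ℤ, (Qs R w : ℂ) * Complex.exp (Complex.I * ((w.1 * b - w.2 * a : ℝ) : ℂ)) =
      ((Qs R w * Real.cos (w.1 * b - w.2 * a) : ℝ) : ℂ) +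
        Complex.I * ((Qs R w * Real.sin (w.1 * b - w.2 * a) : ℝ) : ℂ) := by
    intro w
    rw [mul_comm Complex.I, Complex.exp_mul_I, ← Complex.ofReal_cos, ← Complex.ofReal_sin]
    push_cast; ring
  simp_rw [h3]
  rw [Finset.sum_add_distrib, ← Finset.mul_sum, ← Complex.ofReal_sum (f := fun w : ℤ × ℤ => Qs R w * Real.sin (w.1 * b - w.2 * a)), h2]
  simp

lemma int_exp (k : ℤ) : ∫ x in Set.Icc (-π) π, Complex.exp (Complex.I * ((k * x : ℝ) : ℂ)) =
    if k = 0 then (2 * π : ℂ) else 0 := by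
  rw [integral_Icc_eq_integral_Ioc, ← intervalIntegral.integral_of_le (by linarith [pi_pos])]
  split_ifs with h
  · subst h; simp; ring
  · have hk : (Complex.I * k : ℂ) ≠ 0 := by
      simp [h]
    have : ∀ x : ℝ, Complex.exp (Complex.I * ((k * x : ℝ) : ℂ)) = Complex.exp (Complex.I * k * x) := by
      intro x; push_cast; ring_nf
    simp_rw [this]
    rw [integral_exp_mul_complex hk]
    have e : Complex.exp (Complex.I * k * (π : ℝ)) = Complex.exp (Complex.I * k * ((-π : ℝ) : ℂ)) := by
      rw [Complex.exp_eq_exp_iff_exists_int]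
      exact ⟨k, by push_cast; ring⟩
    rw [e]; simp

lemma int_prod_exp {d : ℕ} (S : Fin d → ℤ) :
    ∫ x in Set.univ.pi (fun _ : Fin d => Set.Icc (-π) π),
      Complex.exp (Complex.I * ((∑ t, S t * x t : ℝ) : ℂ)) =
    (2 * π) ^ d * if ∀ t, S t = 0 then 1 else 0 := by
  have h1 : ∀ x : Fin d → ℝ, Complex.exp (Complex.I * ((∑ t, S t * x t : ℝ) : ℂ)) =
      ∏ t, Complex.exp (Complex.I * ((S t * x t : ℝ) : ℂ)) := by
    intro x
    rw [← Complex.exp_sum, Complex.ofReal_sum, Finset.mul_sum]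
  simp_rw [h1]
  rw [volume_pi, Measure.restrict_pi_pi,
    integral_fintype_prod_eq_prod (𝕜 := ℂ) (fun t x => Complex.exp (Complex.I * ((S t * x : ℝ) : ℂ)))]
  simp_rw [int_exp]
  rw [Finset.prod_ite_zero]
  simp

lemma limP_eq {m n : ℕ} (hm : 1 ≤ m) (R : ℤ × ℤ → ℝ) (hev : ∀ w, R (-w) = R w)
    {p : Equiv.Perm (Fin (2 * m))} (hp : p ∈ pairs m) {T : Fin (2 * m) → Fin (m + 1)} (hT : KrI m p T) :
    limP m n R p T = (2 * π) ^ (m - 1) *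
      ∫ x in Set.univ.pi (fun _ : Fin (m + 1) => Set.Icc (-π) π),
                Lsig m p T (fun a b => fR n R (a, b)) x := by
  have hpp := mem_pairs.1 hp
  have hk : ∀ u, krewPerm m p (prd m u) = p u := by
    intro u; change p (finRotate _ (prd m u)) = p u; rw [rot_prd]
  have hT1 : ∀ u, T (p u) = T (prd m u) := fun u => by rw [← hk, T_krew hT]
  have hT2 : ∀ u, T u = T (prd m (p u)) := fun u => by rw [← hT1, hpp.1]
  have hc : Fintype.card {u // u < p u} = m := by rw [Fintype.card_subtype, card_op hp]
  have h1 : ∀ x : Fin (m + 1) → ℝ, ((Lsig m p T (fun a b => fR n R (a, b)) x : ℝ) : ℂ) =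
      (((2 * π) ^ 2)⁻¹ : ℂ) ^ m * ∑ w ∈ Fintype.piFinset (fun _ : {u // u < p u} => Kb n),
        (∏ u, (Qs R (w u) : ℂ)) *
        Complex.exp (Complex.I * ((∑ t, (∑ l ∈ Finset.univ.filter (fun l => T l = t), kw p w l : ℤ) * x t : ℝ) : ℂ)) := by
    intro x
    rw [Lsig, Complex.ofReal_prod, Finset.prod_subtype (p := fun u => u < p u) _ (by simp)]
    simp_rw [fR_pair n R hev]
    rw [Finset.prod_mul_distrib, Finset.prod_const, Finset.card_univ, hc, Finset.prod_univ_sum]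
    congr 1
    · push_cast; rfl
    refine Finset.sum_congr rfl fun w _ => ?_
    rw [Finset.prod_mul_distrib, ← Complex.exp_sum, ← Finset.mul_sum, ← Complex.ofReal_sum]
    congr 4
    have h2 : ∑ t, ((∑ l ∈ Finset.univ.filter (fun l => T l = t), kw p w l : ℤ) : ℝ) * x t =
        ∑ l, (kw p w l : ℝ) * x (T l) := by
      rw [← Finset.sum_fiberwise (g := T)]
      refine Finset.sum_congr rfl fun t _ => ?_
      push_cast
      rw [Finset.sum_mul]
      refine Finset.sum_congr rfl fun l hl => ?_
      simp only [Finset.mem_filter, Finset.mem_univ, true_and] at hl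
      rw [hl]
    rw [h2, sum_op hp]
    refine Finset.sum_congr rfl fun u _ => ?_
    rw [kw_op, kw_cl hp, ← hT1, ← hT2]
    push_cast; ring
  have h3 : ((limP m n R p T : ℝ) : ℂ) = (((2 * π) ^ (m - 1) *
      ∫ x in Set.univ.pi (fun _ : Fin (m + 1) => Set.Icc (-π) π),
                Lsig m p T (fun a b => fR n R (a, b)) x : ℝ) : ℂ) := by
    rw [Complex.ofReal_mul, ← integral_complex_ofReal]
    simp_rw [h1]
    rw [integral_const_mul, integral_finsetSum]
    · simp_rw [integral_const_mul, int_prod_exp]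
      rw [limP]
      push_cast
      rw [← mul_assoc, Finset.mul_sum]
      refine Finset.sum_congr rfl fun w _ => ?_
      have hπ : (2 * π : ℂ) ≠ 0 := by
        have := pi_pos.ne'; simp [this]
      have h4 : (2 * π : ℂ) ^ (m - 1) * (((2 * π : ℂ) ^ 2)⁻¹) ^ m * (2 * π) ^ (m + 1) = 1 := by
        rw [inv_pow, ← pow_mul]
        have : (2 * π : ℂ) ^ (2 * m) = (2 * π) ^ (m - 1) * (2 * π) ^ (m + 1) := by
          rw [← pow_add]; congr 1; omega
        rw [this]; field_simp
      calc _ = (∏ u, (Qs R (w u) : ℂ)) * (if ∀ t, ∑ l ∈ Finset.univ.filter (fun l => T l = t), kw p w l = 0 then 1 else 0) := by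
            split_ifs <;> push_cast <;> ring
        _ = ((2 * π : ℂ) ^ (m - 1) * (((2 * π : ℂ) ^ 2)⁻¹) ^ m * (2 * π) ^ (m + 1)) *
           ((∏ u, (Qs R (w u) : ℂ)) * (if ∀ t, ∑ l ∈ Finset.univ.filter (fun l => T l = t), kw p w l = 0 then 1 else 0)) := by rw [h4, one_mul]
        _ = _ := by ring
    · intro w _
      refine ContinuousOn.integrableOn_compact (isCompact_univ_pi fun _ => isCompact_Icc) (Continuous.continuousOn ?_)
      fun_prop
  exact_mod_cast h3


/-- resolvent -/
def resM {N : ℕ} (s : ℝ) (A : Matrix (Fin N) (Fin N) ℝ) : Matrix (Fin N) (Fin N) ℝ :=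
  (s • (1 : Matrix (Fin N) (Fin N) ℝ) + A * A)⁻¹

/-- normalized resolvent trace -/
def FF {N : ℕ} (s : ℝ) (A : Matrix (Fin N) (Fin N) ℝ) : ℝ :=
  (N : ℝ)⁻¹ * (s * (resM s A).trace)

lemma spec_dec {N : ℕ} {A : Matrix (Fin N) (Fin N) ℝ} (hA : A.IsHermitian) :
    ∃ U V : Matrix (Fin N) (Fin N) ℝ, U * V = 1 ∧ V * U = 1 ∧
      A = U * Matrix.diagonal hA.eigenvalues * V := by
  refine ⟨hA.eigenvectorUnitary, star (hA.eigenvectorUnitary : Matrix (Fin N) (Fin N) ℝ), ?_, ?_, ?_⟩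
  · exact Unitary.coe_mul_star_self _
  · exact Unitary.coe_star_mul_self _
  · have := hA.spectral_theorem
    rw [Unitary.conjStarAlgAut_apply] at this
    exact this

lemma trace_pow_eig {N : ℕ} {A : Matrix (Fin N) (Fin N) ℝ} (hA : A.IsHermitian) (n : ℕ) :
    (A ^ n).trace = ∑ j, hA.eigenvalues j ^ n := by
  obtain ⟨U, V, h1, h2, h3⟩ := spec_dec hA
  generalize hA.eigenvalues = lam at h3 ⊢
  have : A ^ n = U * Matrix.diagonal (fun j => lam j ^ n) * V := by
    induction n with
    | zero => simp [h1]
    | succ n ih =>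
      rw [pow_succ, ih]
      conv_lhs => rw [h3]
      calc _ = U * Matrix.diagonal (fun j => lam j ^ n) * (V * U) * Matrix.diagonal lam * V := by
            simp only [Matrix.mul_assoc]
        _ = _ := by
            rw [h2, Matrix.mul_one, Matrix.mul_assoc U, Matrix.diagonal_mul_diagonal]
            simp only [pow_succ]
  rw [this, Matrix.trace_mul_comm, ← Matrix.mul_assoc, h2, Matrix.one_mul, Matrix.trace_diagonal]

lemma res_spec {N : ℕ} {s : ℝ} (hs : 0 < s) {A : Matrix (Fin N) (Fin N) ℝ} (hA : A.IsHermitian) :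
    (s • (1 : Matrix (Fin N) (Fin N) ℝ) + A * A) * resM s A = 1 ∧
    resM s A * (s • (1 : Matrix (Fin N) (Fin N) ℝ) + A * A) = 1 ∧
    FF s A = esdEval A (fun x => s / (s + x ^ 2)) := by
  obtain ⟨U, V, h1, h2, h3⟩ := spec_dec hA
  set D := Matrix.diagonal hA.eigenvalues
  set D2 : Matrix (Fin N) (Fin N) ℝ := Matrix.diagonal (fun j => (s + hA.eigenvalues j ^ 2)⁻¹)
  have e1 : s • (1 : Matrix (Fin N) (Fin N) ℝ) + A * A = U * (Matrix.diagonal (fun j => (s + hA.eigenvalues j ^ 2))) * V := by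
    have : Matrix.diagonal (fun j => (s + hA.eigenvalues j ^ 2)) = s • (1 : Matrix (Fin N) (Fin N) ℝ) + D * D := by
      rw [Matrix.diagonal_mul_diagonal, Matrix.smul_one_eq_diagonal, Matrix.diagonal_add]
      simp only [pow_two]
    rw [this, Matrix.mul_add, Matrix.add_mul, Matrix.mul_smul, Matrix.smul_mul, Matrix.mul_one, h1]
    congr 1
    calc A * A = U * D * (V * U) * D * V := by conv_lhs => rw [h3]
                                               simp only [Matrix.mul_assoc]
      _ = _ := by rw [h2, Matrix.mul_one]; simp only [Matrix.mul_assoc]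
  have e2 : (s • (1 : Matrix (Fin N) (Fin N) ℝ) + A * A) * (U * D2 * V) = 1 := by
    rw [e1]
    calc _ = U * (Matrix.diagonal (fun j => (s + hA.eigenvalues j ^ 2))) * (V * U) * D2 * V := by
          simp only [Matrix.mul_assoc]
      _ = _ := by
          rw [h2, Matrix.mul_one, Matrix.mul_assoc U, Matrix.diagonal_mul_diagonal]
          have : (fun i => (s + hA.eigenvalues i ^ 2) * (s + hA.eigenvalues i ^ 2)⁻¹) = fun _ => (1:ℝ) := by
            funext i; exact mul_inv_cancel₀ (by positivity)
          rw [this, Matrix.diagonal_one, Matrix.mul_one, h1]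
  have e3 : resM s A = U * D2 * V := Matrix.inv_eq_right_inv e2
  refine ⟨by rw [e3, e2], by rw [e3]; exact mul_eq_one_comm.1 e2, ?_⟩
  rw [FF, e3, esdEval, dif_pos hA, Matrix.trace_mul_comm, ← Matrix.mul_assoc, h2, Matrix.one_mul, Matrix.trace_diagonal,
    Finset.mul_sum]
  rfl

lemma geo_alt (s : ℝ) (hs : 0 < s) (x : ℝ) (k : ℕ) :
    |s / (s + x ^ 2) - ∑ j ∈ Finset.range (k + 1), (-1) ^ j * (s⁻¹) ^ j * x ^ (2 * j)| ≤
      (s⁻¹) ^ (k + 1) * x ^ (2 * (k + 1)) := by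
  have h : ∑ j ∈ Finset.range (k + 1), (-1) ^ j * (s⁻¹) ^ j * x ^ (2 * j)
      = ∑ j ∈ Finset.range (k + 1), (- (s⁻¹ * x ^ 2)) ^ j := by
    refine Finset.sum_congr rfl fun j _ => ?_
    rw [neg_pow (s⁻¹ * x ^ 2), mul_pow, pow_mul, mul_assoc]
  have hx : 0 ≤ s⁻¹ * x ^ 2 := by positivity
  have h2 : s / (s + x ^ 2) = 1 / (1 + s⁻¹ * x ^ 2) := by field_simp
  have h3 : (∑ j ∈ Finset.range (k + 1), (- (s⁻¹ * x ^ 2)) ^ j) * (1 + s⁻¹ * x ^ 2) = 1 - (-(s⁻¹ * x ^ 2)) ^ (k + 1) := by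
    have := geom_sum_mul (- (s⁻¹ * x ^ 2)) (k + 1)
    linarith
  rw [h, h2]
  have h4 : (s⁻¹) ^ (k + 1) * x ^ (2 * (k + 1)) = (s⁻¹ * x ^ 2) ^ (k + 1) := by
    rw [mul_pow, pow_mul]
  rw [h4]
  set y := s⁻¹ * x ^ 2
  have h5 : 1 / (1 + y) - ∑ j ∈ Finset.range (k + 1), (-y) ^ j = (-y) ^ (k + 1) / (1 + y) := by
    rw [eq_div_iff (by positivity), sub_mul, h3]; field_simp; ring
  rw [h5, abs_div, abs_pow, abs_neg, abs_of_nonneg hx, abs_of_pos (by positivity : 0 < 1 + y)]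
  apply div_le_self (by positivity); linarith

lemma FF_poly {N : ℕ} {s : ℝ} (hs : 0 < s) {A : Matrix (Fin N) (Fin N) ℝ} (hA : A.IsHermitian) (k : ℕ) :
    |FF s A - ∑ j ∈ Finset.range (k + 1), (-1) ^ j * (s⁻¹) ^ j * ((N : ℝ)⁻¹ * (A ^ (2 * j)).trace)| ≤
      (s⁻¹) ^ (k + 1) * ((N : ℝ)⁻¹ * (A ^ (2 * (k + 1))).trace) := by
  rw [(res_spec hs hA).2.2, esdEval, dif_pos hA]
  simp only [trace_pow_eig hA]
  have : (N : ℝ)⁻¹ * ∑ j, s / (s + hA.eigenvalues j ^ 2) - ∑ j ∈ Finset.range (k + 1), (-1) ^ j * (s⁻¹) ^ j * ((N : ℝ)⁻¹ * ∑ i, hA.eigenvalues i ^ (2 * j))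
    = (N : ℝ)⁻¹ * ∑ i, (s / (s + hA.eigenvalues i ^ 2) - ∑ j ∈ Finset.range (k + 1), (-1) ^ j * (s⁻¹) ^ j * hA.eigenvalues i ^ (2 * j)) := by
    rw [Finset.sum_sub_distrib, mul_sub, Finset.sum_comm]
    congr 1
    rw [Finset.mul_sum]
    refine Finset.sum_congr rfl fun j _ => ?_
    rw [← Finset.mul_sum]; ring
  rw [this, abs_mul, abs_of_nonneg (by positivity : (0:ℝ) ≤ (N : ℝ)⁻¹)]
  calc _ ≤ (N : ℝ)⁻¹ * ∑ i, (s⁻¹) ^ (k + 1) * hA.eigenvalues i ^ (2 * (k + 1)) := by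
        gcongr
        refine (Finset.abs_sum_le_sum_abs _ _).trans (Finset.sum_le_sum fun i _ => geo_alt s hs _ k)
    _ = _ := by rw [← Finset.mul_sum]; ring

lemma FF_bd {N : ℕ} {s : ℝ} (hs : 0 < s) {A : Matrix (Fin N) (Fin N) ℝ} (hA : A.IsHermitian) :
    |FF s A| ≤ 1 := by
  rw [(res_spec hs hA).2.2, esdEval, dif_pos hA, abs_mul, abs_of_nonneg (by positivity : (0:ℝ) ≤ (N : ℝ)⁻¹)]
  have : |∑ j, s / (s + hA.eigenvalues j ^ 2)| ≤ N := by
    refine (Finset.abs_sum_le_sum_abs _ _).trans ?_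
    calc _ ≤ ∑ j : Fin N, (1:ℝ) := by
          refine Finset.sum_le_sum fun j _ => ?_
          rw [abs_of_nonneg (by positivity)]
          exact div_le_one_of_le₀ (by nlinarith [sq_nonneg (hA.eigenvalues j)]) (by positivity)
      _ = N := by simp
  rcases Nat.eq_zero_or_pos N with h | h
  · subst h; simp
  · calc _ ≤ (N:ℝ)⁻¹ * N := by gcongr
      _ = 1 := by field_simp

lemma FF_meas {N : ℕ} (s : ℝ) : Measurable (fun z : Fin N → Fin N → ℝ => FF s (Matrix.of z)) := by
  unfold FF resM
  simp only [Matrix.inv_def, Ring.inverse_eq_inv', Matrix.trace_smul, smul_eq_mul]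
  have h1 : Continuous fun z : Fin N → Fin N → ℝ => (s • (1 : Matrix (Fin N) (Fin N) ℝ) + Matrix.of z * Matrix.of z) := by
    have : Continuous fun z : Fin N → Fin N → ℝ => (Matrix.of z : Matrix (Fin N) (Fin N) ℝ) := continuous_id
    exact continuous_const.add (this.matrix_mul this)
  have h2 := (h1.matrix_det).measurable
  have h3 := (h1.matrix_adjugate.matrix_trace).measurable
  exact ((h2.inv.mul h3).const_mul _).const_mul _

/-- operator bound -/
def OpB {N : ℕ} (M : Matrix (Fin N) (Fin N) ℝ) (c : ℝ) : Prop :=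
  ∀ v : Fin N → ℝ, ∑ i, (M.mulVec v i) ^ 2 ≤ c ^ 2 * ∑ i, v i ^ 2

lemma OpB.mul {N : ℕ} {M M' : Matrix (Fin N) (Fin N) ℝ} {c c' : ℝ} (h : OpB M c) (h' : OpB M' c') :
    OpB (M * M') (c * c') := by
  intro v
  rw [← Matrix.mulVec_mulVec]
  calc _ ≤ c ^ 2 * _ := h _
    _ ≤ c ^ 2 * (c' ^ 2 * _) := by gcongr; exact h' v
    _ = _ := by ring

lemma OpB.add {N : ℕ} {M M' : Matrix (Fin N) (Fin N) ℝ} {c : ℝ} (h : OpB M c) (h' : OpB M' c) :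
    OpB (M + M') (2 * c) := by
  intro v
  rw [Matrix.add_mulVec]
  calc _ ≤ ∑ i, (2 * (M.mulVec v i) ^ 2 + 2 * (M'.mulVec v i) ^ 2) := by
        refine Finset.sum_le_sum fun i _ => ?_
        simp only [Pi.add_apply]; nlinarith [sq_nonneg (M.mulVec v i - M'.mulVec v i)]
    _ ≤ _ := by
        rw [Finset.sum_add_distrib, ← Finset.mul_sum, ← Finset.mul_sum]
        have := h v; have := h' v; nlinarith

lemma res_OpB {N : ℕ} {s : ℝ} (hs : 0 < s) {A : Matrix (Fin N) (Fin N) ℝ} (hA : A.IsHermitian) :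
    OpB (resM s A) s⁻¹ ∧ OpB (A * resM s A) (√s)⁻¹ := by
  have hsym : A.transpose = A := by simpa [Matrix.IsHermitian, Matrix.conjTranspose_eq_transpose_of_trivial] using hA
  have key : ∀ v : Fin N → ℝ, ∑ i, v i * (resM s A).mulVec v i =
      s * ∑ i, (resM s A).mulVec v i ^ 2 + ∑ i, ((A * resM s A).mulVec v i) ^ 2 := by
    intro v
    set w := (resM s A).mulVec v with hw
    have h1 : (s • (1 : Matrix (Fin N) (Fin N) ℝ) + A * A).mulVec w = v := by
      rw [hw, Matrix.mulVec_mulVec, (res_spec hs hA).1, Matrix.one_mulVec]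
    rw [← Matrix.mulVec_mulVec, ← hw]
    have h2 : ∑ i, v i * w i = dotProduct v w := rfl
    have h3 : ∑ i, (A.mulVec w i) ^ 2 = dotProduct (A.mulVec w) (A.mulVec w) := by
      simp [dotProduct, pow_two]
    have h4 : ∑ i, (w i) ^ 2 = dotProduct w w := by simp [dotProduct, pow_two]
    rw [h2, h3, h4]
    conv_lhs => rw [← h1]
    rw [Matrix.add_mulVec, add_dotProduct, Matrix.smul_mulVec, Matrix.one_mulVec, smul_dotProduct, smul_eq_mul]
    congr 1
    rw [← Matrix.mulVec_mulVec, dotProduct_comm, Matrix.dotProduct_mulVec, ← Matrix.mulVec_transpose, hsym]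
  have am : ∀ v : Fin N → ℝ, ∑ i, v i * (resM s A).mulVec v i ≤ 
      (s / 2) * ∑ i, (resM s A).mulVec v i ^ 2 + (s⁻¹ / 2) * ∑ i, v i ^ 2 := by
    intro v
    rw [Finset.mul_sum, Finset.mul_sum, ← Finset.sum_add_distrib]
    refine Finset.sum_le_sum fun i _ => ?_
    set w := (resM s A).mulVec v i
    have : 0 ≤ s / 2 * (w - s⁻¹ * v i) ^ 2 := by positivity
    have e : s / 2 * (w - s⁻¹ * v i) ^ 2 = s / 2 * w ^ 2 - v i * w + s⁻¹ / 2 * v i ^ 2 := by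
      field_simp; ring
    linarith
  constructor
  · intro v
    have h1 := key v; have h2 := am v
    have h3 : 0 ≤ ∑ i, ((A * resM s A).mulVec v i) ^ 2 := by positivity
    have h5 : s / 2 * ∑ i, (resM s A).mulVec v i ^ 2 ≤ (s⁻¹ / 2) * ∑ i, v i ^ 2 := by linarith
    have h6 := mul_le_mul_of_nonneg_left h5 (by positivity : 0 ≤ 2 * s⁻¹)
    calc _ = 2 * s⁻¹ * (s / 2 * ∑ i, (resM s A).mulVec v i ^ 2) := by field_simp
      _ ≤ _ := h6
      _ = _ := by ring
  · intro v
    have h1 := key v; have h2 := am v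
    have h3 : 0 ≤ ∑ i, ((resM s A).mulVec v i) ^ 2 := by positivity
    have h4 : 0 ≤ ∑ i, v i ^ 2 := by positivity
    have : (√s)⁻¹ ^ 2 = s⁻¹ := by rw [inv_pow, Real.sq_sqrt hs.le]
    rw [this]
    have h7 : 0 < s⁻¹ := by positivity
    nlinarith [mul_nonneg hs.le h3, mul_nonneg h7.le h4]

/-- the comparison matrix -/
lemma FF_sub {N : ℕ} {s : ℝ} (hs : 0 < s) {A B : Matrix (Fin N) (Fin N) ℝ} (hA : A.IsHermitian) (hB : B.IsHermitian) :
    ∃ M : Matrix (Fin N) (Fin N) ℝ, OpB M (2 * (s⁻¹ * (√s)⁻¹)) ∧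
      FF s A - FF s B = (N : ℝ)⁻¹ * (s * (M * (B - A)).trace) := by
  obtain ⟨a1, a2, -⟩ := res_spec hs hA
  obtain ⟨b1, b2, -⟩ := res_spec hs hB
  obtain ⟨ra, ra'⟩ := res_OpB hs hA
  obtain ⟨rb, rb'⟩ := res_OpB hs hB
  have hc : resM s B * B = B * resM s B := by
    have h1 : (s • (1 : Matrix (Fin N) (Fin N) ℝ) + B * B) * B = B * (s • (1 : Matrix (Fin N) (Fin N) ℝ) + B * B) := by
      rw [Matrix.add_mul, Matrix.mul_add, Matrix.smul_mul, Matrix.mul_smul, Matrix.one_mul, Matrix.mul_one, Matrix.mul_assoc]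
    calc resM s B * B = resM s B * (B * ((s • (1 : Matrix (Fin N) (Fin N) ℝ) + B * B) * resM s B)) := by rw [b1, Matrix.mul_one]
      _ = resM s B * ((B * (s • (1 : Matrix (Fin N) (Fin N) ℝ) + B * B)) * resM s B) := by rw [Matrix.mul_assoc B]
      _ = _ := by rw [← h1, Matrix.mul_assoc _ B, ← Matrix.mul_assoc (resM s B), b2, Matrix.one_mul]
  refine ⟨resM s A * (B * resM s B) + A * resM s A * resM s B, ?_, ?_⟩
  · refine OpB.add (ra.mul rb') ?_
    have := ra'.mul rb
    rwa [mul_comm] at this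
  · rw [FF, FF, ← mul_sub, ← mul_sub, ← Matrix.trace_sub]
    congr 2
    have h2 : resM s A - resM s B = resM s B * (B * (B - A) + (B - A) * A) * resM s A := by
      have : B * (B - A) + (B - A) * A = (s • (1 : Matrix (Fin N) (Fin N) ℝ) + B * B) - (s • (1 : Matrix (Fin N) (Fin N) ℝ) + A * A) := by
        rw [Matrix.mul_sub, Matrix.sub_mul]; abel
      rw [this, Matrix.mul_sub, Matrix.sub_mul, b2, Matrix.one_mul, Matrix.mul_assoc, a1, Matrix.mul_one]
    rw [h2, Matrix.trace_mul_comm, Matrix.mul_add, Matrix.mul_add, Matrix.add_mul, Matrix.trace_add, Matrix.trace_add, ← hc]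
    congr 1
    · simp only [Matrix.mul_assoc]
    · rw [← Matrix.mul_assoc, ← Matrix.mul_assoc, Matrix.trace_mul_comm]; simp only [Matrix.mul_assoc]

lemma OpB.hs {N : ℕ} {M : Matrix (Fin N) (Fin N) ℝ} {c : ℝ} (h : OpB M c) :
    ∑ j, ∑ i, M i j ^ 2 ≤ N * c ^ 2 := by
  calc _ ≤ ∑ j : Fin N, c ^ 2 := by
        refine Finset.sum_le_sum fun j _ => ?_
        have := h (Pi.single j 1)
        simpa [Matrix.mulVec_single, Pi.single_apply, ite_pow] using this
    _ = _ := by simp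

lemma OpB.tr_hs {N : ℕ} {M : Matrix (Fin N) (Fin N) ℝ} {c : ℝ} (h : OpB M c) (D : Matrix (Fin N) (Fin N) ℝ)
    {ε : ℝ} (hε : 0 < ε) :
    |(M * D).trace| ≤ ε * (N * c ^ 2) + ε⁻¹ * ∑ i, ∑ j, D i j ^ 2 := by
  rw [Matrix.trace_mul_comm]
  simp only [Matrix.trace, Matrix.diag, Matrix.mul_apply]
  calc _ ≤ ∑ i, ∑ j, (ε * M j i ^ 2 + ε⁻¹ * D i j ^ 2) := by
        refine (Finset.abs_sum_le_sum_abs _ _).trans (Finset.sum_le_sum fun i _ => ?_)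
        refine (Finset.abs_sum_le_sum_abs _ _).trans (Finset.sum_le_sum fun j _ => ?_)
        have h1 : 0 ≤ ε * (M j i - ε⁻¹ * D i j) ^ 2 := by positivity
        have h2 : 0 ≤ ε * (M j i + ε⁻¹ * D i j) ^ 2 := by positivity
        have e1 : ε * (M j i - ε⁻¹ * D i j) ^ 2 = ε * M j i ^ 2 - 2 * (D i j * M j i) + ε⁻¹ * D i j ^ 2 := by field_simp; ring
        have e2 : ε * (M j i + ε⁻¹ * D i j) ^ 2 = ε * M j i ^ 2 + 2 * (D i j * M j i) + ε⁻¹ * D i j ^ 2 := by field_simp; ring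
        have h3 : 0 ≤ ε * M j i ^ 2 + ε⁻¹ * D i j ^ 2 := by positivity
        rw [abs_le]; constructor <;> linarith
    _ = ε * (∑ i, ∑ j, M j i ^ 2) + ε⁻¹ * ∑ i, ∑ j, D i j ^ 2 := by
        simp only [Finset.sum_add_distrib, Finset.mul_sum]
    _ ≤ _ := by gcongr; exact h.hs

lemma OpB.tr_rank {N : ℕ} {M : Matrix (Fin N) (Fin N) ℝ} {c : ℝ} (hc : 0 ≤ c) (h : OpB M c) (a b : Fin N → ℝ)
    (ha : ∀ i, |a i| ≤ 1) (hb : ∀ i, |b i| ≤ 1) :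
    |(M * Matrix.vecMulVec a b).trace| ≤ c * N := by
  have e : (M * Matrix.vecMulVec a b).trace = ∑ i, b i * M.mulVec a i := by
    rw [Matrix.mul_vecMulVec, Matrix.trace_vecMulVec, dotProduct_comm]; rfl
  rw [e]
  have sq1 : ∀ x : ℝ, |x| ≤ 1 → x ^ 2 ≤ 1 := fun x hx => by rw [← sq_abs]; exact pow_le_one₀ (abs_nonneg _) hx
  have cs := Finset.sum_mul_sq_le_sq_mul_sq Finset.univ b (M.mulVec a)
  have h1 : ∑ i, b i ^ 2 ≤ N := by
    calc _ ≤ ∑ i : Fin N, (1:ℝ) := Finset.sum_le_sum fun i _ => sq1 _ (hb i)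
      _ = N := by simp
  have h2 : ∑ i, a i ^ 2 ≤ N := by
    calc _ ≤ ∑ i : Fin N, (1:ℝ) := Finset.sum_le_sum fun i _ => sq1 _ (ha i)
      _ = N := by simp
  apply abs_le_of_sq_le_sq _ (by positivity)
  calc _ ≤ _ := cs
    _ ≤ N * (c ^ 2 * N) := by
        gcongr
        exact (h a).trans (by gcongr)
    _ = _ := by ring


lemma sq_gauss {Ω : Type*} [MeasurableSpace Ω] {P : Measure Ω} {Z : Ω → ℝ} (hZ : AEMeasurable Z P) {v : NNReal}
    (h : P.map Z = gaussianReal 0 v) : MemLp Z 2 P ∧ ∫ ω, Z ω ^ 2 ∂P = v := by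
  have h1 : MemLp (id : ℝ → ℝ) 2 (P.map Z) := by rw [h]; exact memLp_id_gaussianReal' 2 (by simp)
  refine ⟨h1.comp_of_map hZ, ?_⟩
  have h2 : ∫ x, x ^ 2 ∂(P.map Z) = v := by
    rw [h]
    have := variance_id_gaussianReal (μ := 0) (v := v)
    rw [variance_eq_integral (by fun_prop)] at this
    simpa using this
  rwa [integral_map hZ (by fun_prop)] at h2

section
variable {E : Type*} [NormedAddCommGroup E] [InnerProductSpace ℝ E] [FiniteDimensional ℝ E]
  [MeasurableSpace E] [BorelSpace E]

lemma inner_sq (v : E) : Integrable (fun θ => inner ℝ v θ ^ 2) (stdGaussian E) ∧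
    ∫ θ, inner ℝ v θ ^ 2 ∂(stdGaussian E) = ‖v‖ ^ 2 := by
  have := sq_gauss (by fun_prop) (map_inner_std v)
  exact ⟨this.1.integrable_sq, by rw [this.2]; simp⟩

lemma Bm_herm {N : ℕ} (y : Fin N → Fin N → E) (θ : E) : (Bm y θ).IsHermitian := by
  ext i j
  simp [Bm, Matrix.conjTranspose_apply, add_comm]

lemma FF_Bm_int {N : ℕ} {s : ℝ} (hs : 0 < s) (y : Fin N → Fin N → E) :
    Integrable (fun θ => FF s (Bm y θ)) (stdGaussian E) := by
  refine Integrable.of_bound (C := 1) ?_ (ae_of_all _ fun θ => by rw [Real.norm_eq_abs]; exact FF_bd hs (Bm_herm y θ))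
  have : Measurable (fun (θ : E) (i j : Fin N) => Bm y θ i j) := by
    refine measurable_pi_lambda _ fun i => measurable_pi_lambda _ fun j => ?_
    simp only [Bm]; fun_prop
  exact ((FF_meas s).comp this).aestronglyMeasurable

lemma coup {N : ℕ} (hN : 1 ≤ N) {s : ℝ} (hs : 0 < s) {ε κ : ℝ} (hε : 0 < ε) {ι : Type*} [Fintype ι]
    (x y t : Fin N → Fin N → E) (v : ι → E) (a b : ι → Fin N → ℝ)
    (ha : ∀ r i, |a r i| ≤ 1) (hb : ∀ r i, |b r i| ≤ 1) (ht : ∀ i j, ‖t i j‖ ^ 2 ≤ κ)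
    (hx : ∀ i j, x i j = y i j + t i j + ∑ r, (a r i * b r j) • v r) :
    |∫ θ, FF s (Bm x θ) ∂(stdGaussian E) - ∫ θ, FF s (Bm y θ) ∂(stdGaussian E)| ≤
      s * (ε * (2 * (s⁻¹ * (√s)⁻¹)) ^ 2 + ε⁻¹ * (4 * κ)) +
      (√N)⁻¹ * (s * (2 * (2 * (s⁻¹ * (√s)⁻¹))) * ∑ r, (1 + ‖v r‖ ^ 2)) := by
  set c := 2 * (s⁻¹ * (√s)⁻¹)
  have hc : 0 ≤ c := by positivity
  have hNp : (0:ℝ) < N := by exact_mod_cast hN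
  rw [← integral_sub (FF_Bm_int hs x) (FF_Bm_int hs y)]
  have hpt : ∀ θ, ‖FF s (Bm x θ) - FF s (Bm y θ)‖ ≤ (N:ℝ)⁻¹ * (s * ((ε * (N * c ^ 2) + ε⁻¹ * ((N:ℝ)⁻¹ * (4 * ∑ i, ∑ j, inner ℝ (t i j) θ ^ 2)))
      + ∑ r, (√N)⁻¹ * (1 + inner ℝ (v r) θ ^ 2) * (2 * (c * N)))) := by
    intro θ
    obtain ⟨M, hM, hF⟩ := FF_sub hs (Bm_herm x θ) (Bm_herm y θ)
    rw [hF, Real.norm_eq_abs, abs_mul, abs_mul, abs_of_pos hs, abs_of_pos (by positivity : 0 < (N:ℝ)⁻¹)]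
    have hD : Bm y θ - Bm x θ = -(Bm t θ + ∑ r, ((√N)⁻¹ * inner ℝ (v r) θ) • (Matrix.vecMulVec (a r) (b r) + Matrix.vecMulVec (b r) (a r))) := by
      ext i j
      simp only [Matrix.sub_apply, Matrix.neg_apply, Matrix.add_apply, Matrix.sum_apply, Matrix.smul_apply, Bm, hx,
        inner_add_left, sum_inner, Matrix.vecMulVec_apply, smul_eq_mul, inner_smul_left]
      have : ∑ r, (√N)⁻¹ * inner ℝ (v r) θ * (a r i * b r j + b r i * a r j) =
          (√N)⁻¹ * (∑ r, (a r i * b r j) * inner ℝ (v r) θ + ∑ r, (a r j * b r i) * inner ℝ (v r) θ) := by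
        rw [← Finset.sum_add_distrib, Finset.mul_sum]
        exact Finset.sum_congr rfl fun r _ => by ring
      rw [this]
      simp only [RCLike.conj_to_real]
      ring
    gcongr
    rw [hD, Matrix.mul_neg, Matrix.trace_neg, abs_neg, Matrix.mul_add, Matrix.trace_add]
    refine (abs_add_le _ _).trans (add_le_add ?_ ?_)
    · refine (hM.tr_hs _ hε).trans ?_
      gcongr
      calc ∑ i, ∑ j, Bm t θ i j ^ 2 ≤ ∑ i, ∑ j, (N:ℝ)⁻¹ * (2 * inner ℝ (t i j) θ ^ 2 + 2 * inner ℝ (t j i) θ ^ 2) := by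
            refine Finset.sum_le_sum fun i _ => Finset.sum_le_sum fun j _ => ?_
            rw [Bm, mul_pow, inv_pow, Real.sq_sqrt hNp.le]
            gcongr
            nlinarith [sq_nonneg (inner ℝ (t i j) θ - inner ℝ (t j i) θ)]
        _ = _ := by
            have : ∑ i, ∑ j, inner ℝ (t j i) θ ^ 2 = ∑ i, ∑ j, inner ℝ (t i j) θ ^ 2 := Finset.sum_comm
            simp only [← Finset.mul_sum, Finset.sum_add_distrib, this]
            ring
    · rw [Matrix.mul_sum, Matrix.trace_sum]
      refine (Finset.abs_sum_le_sum_abs _ _).trans (Finset.sum_le_sum fun r _ => ?_)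
      rw [Matrix.mul_smul, Matrix.trace_smul, smul_eq_mul, abs_mul, abs_mul, abs_of_nonneg (by positivity : 0 ≤ (√N)⁻¹),
        Matrix.mul_add, Matrix.trace_add]
      have h1 : |inner ℝ (v r) θ| ≤ 1 + inner ℝ (v r) θ ^ 2 := by
        have := sq_abs (inner ℝ (v r) θ)
        nlinarith [sq_nonneg (|inner ℝ (v r) θ| - 1), abs_nonneg (inner ℝ (v r) θ)]
      gcongr
      refine (abs_add_le _ _).trans ?_
      have := hM.tr_rank hc (a r) (b r) (ha r) (hb r)
      have := hM.tr_rank hc (b r) (a r) (hb r) (ha r)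
      linarith
  have hi1 : Integrable (fun θ => ∑ i, ∑ j, inner ℝ (t i j) θ ^ 2) (stdGaussian E) :=
    integrable_finsetSum _ fun i _ => integrable_finsetSum _ fun j _ => (inner_sq _).1
  have hi2 : ∀ r, Integrable (fun θ => 1 + inner ℝ (v r) θ ^ 2) (stdGaussian E) :=
    fun r => (integrable_const _).add (inner_sq _).1
  have hi3 : Integrable (fun θ => ∑ r, (√N)⁻¹ * (1 + inner ℝ (v r) θ ^ 2) * (2 * (c * N))) (stdGaussian E) :=
    integrable_finsetSum _ fun r _ => ((hi2 r).const_mul _).mul_const _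
  have hi4 : Integrable (fun θ => (ε * (N * c ^ 2) + ε⁻¹ * ((N:ℝ)⁻¹ * (4 * ∑ i, ∑ j, inner ℝ (t i j) θ ^ 2)))) (stdGaussian E) :=
    (integrable_const _).add ((((hi1.const_mul _).const_mul _)).const_mul _)
  refine (norm_integral_le_of_norm_le (((hi4.add hi3).const_mul s).const_mul (N:ℝ)⁻¹) (ae_of_all _ hpt)).trans ?_
  have e1 : ∫ θ, ∑ i, ∑ j, inner ℝ (t i j) θ ^ 2 ∂(stdGaussian E) ≤ N * (N * κ) := by
    rw [integral_finsetSum _ fun i _ => integrable_finsetSum _ fun j _ => (inner_sq _).1]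
    calc _ ≤ ∑ i : Fin N, (N * κ) := by
          refine Finset.sum_le_sum fun i _ => ?_
          rw [integral_finsetSum _ fun j _ => (inner_sq _).1]
          calc _ ≤ ∑ j : Fin N, κ := Finset.sum_le_sum fun j _ => by rw [(inner_sq _).2]; exact ht i j
            _ = _ := by simp
      _ = _ := by simp
  have e2 : ∀ r, ∫ θ, (1 + inner ℝ (v r) θ ^ 2) ∂(stdGaussian E) = 1 + ‖v r‖ ^ 2 := by
    intro r
    rw [integral_add (integrable_const _) (inner_sq _).1, (inner_sq _).2]; simp
  simp only [Pi.add_apply]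
  rw [integral_const_mul, integral_const_mul, integral_add hi4 hi3,
    integral_finsetSum _ fun r _ => ((hi2 r).const_mul _).mul_const _,
    integral_add (integrable_const _) ((((hi1.const_mul _).const_mul _)).const_mul _)]
  simp only [integral_const_mul, integral_mul_const, e2]
  simp only [integral_const, probReal_univ, one_smul]
  calc _ ≤ (N:ℝ)⁻¹ * (s * ((ε * (N * c ^ 2) + ε⁻¹ * ((N:ℝ)⁻¹ * (4 * (N * (N * κ)))))
      + ∑ r, (√N)⁻¹ * (1 + ‖v r‖ ^ 2) * (2 * (c * N)))) := by gcongr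
    _ = _ := by
      rw [← Finset.sum_mul, ← Finset.mul_sum]
      field_simp

/-- equality in law of the sampled field -/
lemma law_eq {Ω : Type*} [MeasurableSpace Ω] {P : Measure Ω} [IsProbabilityMeasure P] {X : ℤ → ℤ → Ω → ℝ}
    (hX : StatGauss P X) {N : ℕ} (x : Fin N → Fin N → E)
    (hx : ∀ a b c d, inner ℝ (x a b) (x c d) = ∫ ω, X 0 0 ω * X ((c.val:ℤ) - a.val) ((d.val:ℤ) - b.val) ω ∂P) :
    P.map (fun ω (a b : Fin N) => X ((a:ℕ) + 1) ((b:ℕ) + 1) ω) =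
      (stdGaussian E).map (fun θ (a b : Fin N) => inner ℝ (x a b) θ) := by
  have m1 : Measurable (fun ω (a b : Fin N) => X ((a:ℕ) + 1) ((b:ℕ) + 1) ω) :=
    measurable_pi_lambda _ fun i => measurable_pi_lambda _ fun j => hX.meas _ _
  have m2 : Measurable (fun (θ : E) (a b : Fin N) => inner ℝ (x a b) θ) :=
    measurable_pi_lambda _ fun i => measurable_pi_lambda _ fun j => by fun_prop
  have : IsProbabilityMeasure (P.map (fun ω (a b : Fin N) => X ((a:ℕ) + 1) ((b:ℕ) + 1) ω)) := Measure.isProbabilityMeasure_map m1.aemeasurable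
  have : IsProbabilityMeasure ((stdGaussian E).map (fun θ (a b : Fin N) => inner ℝ (x a b) θ)) := Measure.isProbabilityMeasure_map m2.aemeasurable
  apply Measure.ext_of_charFunDual
  funext L
  rw [charFunDual_eq_charFun_map_one, charFunDual_eq_charFun_map_one,
    Measure.map_map (by fun_prop) m1, Measure.map_map (by fun_prop) m2]
  set c : Fin N → Fin N → ℝ := fun a b => L (Pi.single a (Pi.single b 1)) with hc
  have hL : ∀ z : Fin N → Fin N → ℝ, L z = ∑ a, ∑ b, c a b * z a b := by
    intro z
    have : z = ∑ a, ∑ b, z a b • (Pi.single a (Pi.single b 1) : Fin N → Fin N → ℝ) := by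
      ext i j
      simp only [Finset.sum_apply, Pi.smul_apply, smul_eq_mul, Pi.single_apply]
      rw [Finset.sum_eq_single i, Finset.sum_eq_single j]
      · simp
      · intro b _ hb; simp [Pi.single_apply, hb.symm]
      · simp
      · intro b _ hb; simp [hb.symm]
      · simp
    conv_lhs => rw [this]
    simp only [map_sum, map_smul, smul_eq_mul]
    exact Finset.sum_congr rfl fun a _ => Finset.sum_congr rfl fun b _ => mul_comm _ _
  have e2 : (L ∘ fun (θ : E) (a b : Fin N) => inner ℝ (x a b) θ) = fun θ => inner ℝ (∑ a, ∑ b, c a b • x a b) θ := by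
    funext θ
    simp only [Function.comp, hL, sum_inner, inner_smul_left, RCLike.conj_to_real]
  have e1 : (L ∘ fun ω (a b : Fin N) => X ((a:ℕ) + 1) ((b:ℕ) + 1) ω) = fun ω => ∑ a : Fin N, ∑ b : Fin N, c a b * X ((a:ℕ) + 1) ((b:ℕ) + 1) ω := by
    funext ω
    simp only [Function.comp, hL]
  rw [e1, e2, map_inner_std]
  have lc : ∀ d : (ℤ × ℤ) →₀ ℝ, ∀ ω, ∑ p ∈ d.support, d p * X p.1 p.2 ω = Finsupp.linearCombination ℝ (fun p : ℤ × ℤ => X p.1 p.2 ω) d := by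
    intro d ω; simp [Finsupp.linearCombination_apply, Finsupp.sum]
  have m3 : Measurable (fun ω => ∑ a : Fin N, ∑ b : Fin N, c a b * X ((a:ℕ) + 1) ((b:ℕ) + 1) ω) :=
    Finset.measurable_sum _ fun a _ => Finset.measurable_sum _ fun b _ => (hX.meas _ _).const_mul _
  obtain ⟨w, hw⟩ := hX.gauss (∑ a : Fin N, ∑ b : Fin N, Finsupp.single (((a:ℕ) + 1 : ℤ), ((b:ℕ) + 1 : ℤ)) (c a b))
  simp only [lc, map_sum, Finsupp.linearCombination_single, smul_eq_mul] at hw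
  rw [hw]
  have hmem : ∀ j k, MemLp (X j k) 2 P := by
    intro j k
    obtain ⟨w', hw'⟩ := hX.gauss (Finsupp.single (j, k) 1)
    simp only [lc, Finsupp.linearCombination_single, smul_eq_mul, one_mul] at hw'
    exact (sq_gauss (hX.meas _ _).aemeasurable hw').1
  have hint : ∀ j k j' k', Integrable (fun ω => X j k ω * X j' k' ω) P := fun j k j' k' =>
    (hmem j k).integrable_mul (hmem j' k')
  have hv := (sq_gauss m3.aemeasurable hw).2
  have hcov : ∀ a b d e : Fin N, ∫ ω, X ((a:ℕ) + 1) ((b:ℕ) + 1) ω * X ((d:ℕ) + 1) ((e:ℕ) + 1) ω ∂P = inner ℝ (x a b) (x d e) := by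
    intro a b d e
    rw [hx, ← hX.stat ((a:ℕ) + 1) ((b:ℕ) + 1)]
    congr 1
    funext ω
    congr 2 <;> ring
  have hw2 : (w : ℝ) = ‖∑ a, ∑ b, c a b • x a b‖ ^ 2 := by
    rw [← hv, ← real_inner_self_eq_norm_sq]
    simp only [sum_inner, inner_sum, inner_smul_left, inner_smul_right, RCLike.conj_to_real, ← hcov]
    have : ∀ ω, (∑ a : Fin N, ∑ b : Fin N, c a b * X ((a:ℕ) + 1) ((b:ℕ) + 1) ω) ^ 2 =
        ∑ a : Fin N, ∑ b : Fin N, ∑ d : Fin N, ∑ e : Fin N, c a b * (c d e * (X ((d:ℕ) + 1) ((e:ℕ) + 1) ω * X ((a:ℕ) + 1) ((b:ℕ) + 1) ω)) := by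
      intro ω
      rw [pow_two]
      simp only [Finset.sum_mul, Finset.mul_sum]
      refine Finset.sum_congr rfl fun a _ => Finset.sum_congr rfl fun b _ => Finset.sum_congr rfl fun d _ =>
        Finset.sum_congr rfl fun e _ => by ring
    simp only [this, Finset.mul_sum]
    rw [integral_finsetSum]
    · refine Finset.sum_congr rfl fun a _ => ?_
      rw [integral_finsetSum]
      · refine Finset.sum_congr rfl fun b _ => ?_
        rw [integral_finsetSum]
        · refine Finset.sum_congr rfl fun d _ => ?_
          rw [integral_finsetSum]
          · refine Finset.sum_congr rfl fun e _ => ?_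
            rw [integral_const_mul, integral_const_mul]
          · intro e _; exact ((hint _ _ _ _).const_mul _).const_mul _
        · intro d _; exact integrable_finsetSum _ fun e _ => ((hint _ _ _ _).const_mul _).const_mul _
      · intro b _; exact integrable_finsetSum _ fun d _ => integrable_finsetSum _ fun e _ => ((hint _ _ _ _).const_mul _).const_mul _
    · intro a _; exact integrable_finsetSum _ fun b _ => integrable_finsetSum _ fun d _ => integrable_finsetSum _ fun e _ => ((hint _ _ _ _).const_mul _).const_mul _
  have : w = ‖∑ a, ∑ b, c a b • x a b‖₊ ^ 2 := by
    apply NNReal.coe_injective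
    rw [hw2]; simp
  rw [this]

lemma FF_law {Ω : Type*} [MeasurableSpace Ω] {P : Measure Ω} [IsProbabilityMeasure P] {X : ℤ → ℤ → Ω → ℝ}
    (hX : StatGauss P X) {N : ℕ} (s : ℝ) (x : Fin N → Fin N → E)
    (hx : ∀ a b c d, inner ℝ (x a b) (x c d) = ∫ ω, X 0 0 ω * X ((c.val:ℤ) - a.val) ((d.val:ℤ) - b.val) ω ∂P) :
    ∫ ω, FF s (scaledW X N ω) ∂P = ∫ θ, FF s (Bm x θ) ∂(stdGaussian E) := by
  set g : (Fin N → Fin N → ℝ) → ℝ := fun z => FF s (Matrix.of (fun a b => (√N)⁻¹ * (z a b + z b a)))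
  have hg : Measurable g := by
    refine (FF_meas s).comp ?_
    refine measurable_pi_lambda _ fun i => measurable_pi_lambda _ fun j => by fun_prop
  have h1 : ∫ ω, FF s (scaledW X N ω) ∂P = ∫ z, g z ∂(P.map (fun ω (a b : Fin N) => X ((a:ℕ) + 1) ((b:ℕ) + 1) ω)) := by
    rw [integral_map]
    · rfl
    · exact (measurable_pi_lambda _ fun i => measurable_pi_lambda _ fun j => hX.meas _ _).aemeasurable
    · exact hg.aestronglyMeasurable
  rw [h1, law_eq hX x hx, integral_map]
  · rfl
  · exact (measurable_pi_lambda _ fun i => measurable_pi_lambda _ fun j => by fun_prop : Measurable _).aemeasurable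
  · exact hg.aestronglyMeasurable
end


/-- moments including order zero -/
def momZ (j N : ℕ) (R : ℤ × ℤ → ℝ) : ℝ := if j = 0 then 1 else momN j N R

lemma poly_E {E : Type*} [NormedAddCommGroup E] [InnerProductSpace ℝ E] [FiniteDimensional ℝ E]
    [MeasurableSpace E] [BorelSpace E] {N : ℕ} (hN : 1 ≤ N) {s : ℝ} (hs : 0 < s)
    (y : Fin N → Fin N → E) (R : ℤ × ℤ → ℝ)
    (hy : ∀ a b c d, inner ℝ (y a b) (y c d) = R ((c.val : ℤ) - a.val, (d.val : ℤ) - b.val)) (k : ℕ) :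
    |∫ θ, FF s (Bm y θ) ∂(stdGaussian E) - ∑ j ∈ Finset.range (k + 1), (-1) ^ j * (s⁻¹) ^ j * momZ j N R| ≤
      (s⁻¹) ^ (k + 1) * momZ (k + 1) N R := by
  have hNp : (0:ℝ) < N := by exact_mod_cast hN
  have hi : ∀ j, Integrable (fun θ => (N:ℝ)⁻¹ * (Bm y θ ^ (2 * j)).trace) (stdGaussian E) := by
    intro j
    rcases Nat.eq_zero_or_pos j with h | h
    · subst h; simpa using integrable_const _
    · exact (integrable_trace_Bm h y).const_mul _
  have hm : ∀ j, ∫ θ, (N:ℝ)⁻¹ * (Bm y θ ^ (2 * j)).trace ∂(stdGaussian E) = momZ j N R := by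
    intro j
    unfold momZ
    split_ifs with h
    · subst h; simp; field_simp
    · exact moment_eq (by omega) y R hy
  have e1 : ∑ j ∈ Finset.range (k + 1), (-1) ^ j * (s⁻¹) ^ j * momZ j N R =
      ∫ θ, ∑ j ∈ Finset.range (k + 1), (-1) ^ j * (s⁻¹) ^ j * ((N:ℝ)⁻¹ * (Bm y θ ^ (2 * j)).trace) ∂(stdGaussian E) := by
    rw [integral_finsetSum _ fun j _ => (hi j).const_mul _]
    refine Finset.sum_congr rfl fun j _ => ?_
    rw [integral_const_mul, hm]
  rw [e1, ← integral_sub (FF_Bm_int hs y) (integrable_finsetSum _ fun j _ => (hi j).const_mul _), ← hm, ← integral_const_mul]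
  rw [← Real.norm_eq_abs]
  refine norm_integral_le_of_norm_le ((hi _).const_mul _) (ae_of_all _ fun θ => ?_)
  exact FF_poly hs (Bm_herm y θ) k

lemma compare {Ω : Type*} [MeasurableSpace Ω] {P : Measure Ω} [IsProbabilityMeasure P] {X : ℤ → ℤ → Ω → ℝ}
    (hX : StatGauss P X) {H : Type*} [NormedAddCommGroup H] [InnerProductSpace ℝ H]
    {N : ℕ} (hN : 1 ≤ N) {s : ℝ} (hs : 0 < s) {ε κ : ℝ} (hε : 0 < ε) {ι : Type*} [Fintype ι]
    (x y t : Fin N → Fin N → H) (v : ι → H) (a b : ι → Fin N → ℝ)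
    (ha : ∀ r i, |a r i| ≤ 1) (hb : ∀ r i, |b r i| ≤ 1) (ht : ∀ i j, ‖t i j‖ ^ 2 ≤ κ)
    (hxd : ∀ i j, x i j = y i j + t i j + ∑ r, (a r i * b r j) • v r)
    (hx : ∀ a b c d, inner ℝ (x a b) (x c d) = ∫ ω, X 0 0 ω * X ((c.val:ℤ) - a.val) ((d.val:ℤ) - b.val) ω ∂P)
    (R : ℤ × ℤ → ℝ)
    (hy : ∀ a b c d, inner ℝ (y a b) (y c d) = R ((c.val : ℤ) - a.val, (d.val : ℤ) - b.val)) (k : ℕ) :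
    |∫ ω, FF s (scaledW X N ω) ∂P - ∑ j ∈ Finset.range (k + 1), (-1) ^ j * (s⁻¹) ^ j * momZ j N R| ≤
      (s⁻¹) ^ (k + 1) * momZ (k + 1) N R + (s * (ε * (2 * (s⁻¹ * (√s)⁻¹)) ^ 2 + ε⁻¹ * (4 * κ)) +
      (√N)⁻¹ * (s * (2 * (2 * (s⁻¹ * (√s)⁻¹))) * ∑ r, (1 + ‖v r‖ ^ 2))) := by
  set F : (Fin N × Fin N) ⊕ (Fin N × Fin N) ⊕ ι → H := Sum.elim (fun q => y q.1 q.2) (Sum.elim (fun q => t q.1 q.2) v)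
  set S := Submodule.span ℝ (Set.range F)
  have hfd : FiniteDimensional ℝ S := FiniteDimensional.span_of_finite ℝ (Set.finite_range F)
  letI : MeasurableSpace H := borel H
  haveI : BorelSpace H := ⟨rfl⟩
  have my : ∀ i j, y i j ∈ S := fun i j => Submodule.subset_span ⟨Sum.inl (i, j), rfl⟩
  have mt : ∀ i j, t i j ∈ S := fun i j => Submodule.subset_span ⟨Sum.inr (Sum.inl (i, j)), rfl⟩
  have mv : ∀ r, v r ∈ S := fun r => Submodule.subset_span ⟨Sum.inr (Sum.inr r), rfl⟩
  have mx : ∀ i j, x i j ∈ S := fun i j => by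
    rw [hxd]; exact add_mem (add_mem (my _ _) (mt _ _)) (sum_mem fun r _ => Submodule.smul_mem _ _ (mv r))
  have h1 := coup hN hs hε (E := S) (fun i j => ⟨x i j, mx i j⟩) (fun i j => ⟨y i j, my i j⟩) (fun i j => ⟨t i j, mt i j⟩)
    (fun r => ⟨v r, mv r⟩) a b ha hb (κ := κ) (fun i j => ht i j) (fun i j => by
      apply Subtype.ext; simpa using hxd i j)
  have h2 := FF_law hX s (E := S) (fun i j => ⟨x i j, mx i j⟩) (fun a b c d => hx a b c d)
  have h3 := poly_E hN hs (E := S) (fun i j => ⟨y i j, my i j⟩) R (fun a b c d => hy a b c d) k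
  rw [h2]
  refine (abs_sub_le _ _ _).trans ((add_le_add h1 h3).trans ?_)
  rw [add_comm]
  rfl


/-- exponential on the plane -/
def eb (w : ℤ × ℤ) (q : ℝ × ℝ) : ℂ := Complex.exp (Complex.I * ((w.1 * q.1 + w.2 * q.2 : ℝ) : ℂ))

/-- projection to the torus -/
def torM (q : ℝ × ℝ) : UnitAddTorus (Fin 2) :=
  ![((q.1 / (2 * π) : ℝ) : UnitAddCircle), ((q.2 / (2 * π) : ℝ) : UnitAddCircle)]

/-- measurable section -/
def torS (z : UnitAddTorus (Fin 2)) : ℝ × ℝ :=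
  (2 * π * (AddCircle.equivIoc 1 (-(1/2)) (z 0) : ℝ), 2 * π * (AddCircle.equivIoc 1 (-(1/2)) (z 1) : ℝ))

lemma torM_cont : Continuous torM := by
  unfold torM
  refine continuous_pi fun i => ?_
  fin_cases i
  · exact (AddCircle.continuous_mk' 1).comp (by fun_prop : Continuous fun q : ℝ × ℝ => q.1 / (2 * π))
  · exact (AddCircle.continuous_mk' 1).comp (by fun_prop : Continuous fun q : ℝ × ℝ => q.2 / (2 * π))

lemma torS_meas : Measurable torS := by
  unfold torS
  have h := (AddCircle.measurableEquivIoc 1 (-(1/2))).measurable.subtype_val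
  have h0 : Measurable fun z : UnitAddTorus (Fin 2) => (AddCircle.equivIoc 1 (-(1/2)) (z 0) : ℝ) := h.comp (measurable_pi_apply 0)
  have h1 : Measurable fun z : UnitAddTorus (Fin 2) => (AddCircle.equivIoc 1 (-(1/2)) (z 1) : ℝ) := h.comp (measurable_pi_apply 1)
  exact (h0.const_mul _).prodMk (h1.const_mul _)

lemma ioc_aux {x : ℝ} (h : x ∈ Set.Ioc (-π) π) :
    2 * π * (AddCircle.equivIoc 1 (-(1/2)) ((x / (2 * π) : ℝ) : UnitAddCircle) : ℝ) = x := by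
  have hp := Real.pi_pos
  have hm : x / (2 * π) ∈ Set.Ioc (-(1/2) : ℝ) (-(1/2) + 1) := by
    constructor
    · rw [lt_div_iff₀ (by positivity)]; linarith [h.1]
    · rw [div_le_iff₀ (by positivity)]; linarith [h.2]
  rw [AddCircle.equivIoc_coe_eq (p := (1:ℝ)) hm]
  field_simp

lemma torSM {q : ℝ × ℝ} (hq : q ∈ specBox) : torS (torM q) = q := by
  unfold torS torM
  apply Prod.ext
  · exact ioc_aux hq.1
  · exact ioc_aux hq.2

/-- boundary behaviour -/
lemma ioc_aux2 : 2 * π * (AddCircle.equivIoc 1 (-(1/2)) ((-π / (2 * π) : ℝ) : UnitAddCircle) : ℝ) = π := by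
  have hp := Real.pi_pos
  have : ((-π / (2 * π) : ℝ) : UnitAddCircle) = ((π / (2 * π) : ℝ) : UnitAddCircle) := by
    have : (π / (2 * π) : ℝ) = (-π / (2 * π)) + 1 := by field_simp; norm_num
    rw [this, AddCircle.coe_add_period]
  rw [this]
  exact ioc_aux ⟨by linarith, le_rfl⟩

lemma mF_torM (n : Fin 2 → ℤ) (q : ℝ × ℝ) : UnitAddTorus.mFourier n (torM q) = eb (n 0, n 1) q := by
  have hp := Real.pi_pos
  simp only [UnitAddTorus.mFourier, ContinuousMap.coe_mk, Fin.prod_univ_two, torM, Matrix.cons_val_zero, Matrix.cons_val_one,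
    fourier_coe_apply, eb]
  rw [← Complex.exp_add]
  congr 1
  push_cast
  have : (π : ℂ) ≠ 0 := by exact_mod_cast hp.ne'
  field_simp

lemma vol_box : IsFiniteMeasure (volume.restrict specBox) := by
  constructor
  rw [Measure.restrict_apply_univ, specBox, Measure.volume_eq_prod, Measure.prod_prod]
  simp only [Real.volume_Ioc]
  exact ENNReal.mul_lt_top ENNReal.ofReal_lt_top ENNReal.ofReal_lt_top

lemma box_meas : MeasurableSet specBox := measurableSet_Ioc.prod measurableSet_Ioc

/-- trigonometric polynomial -/
def tp (n : ℕ) (c : ℤ × ℤ → ℂ) (q : ℝ × ℝ) : ℂ := ∑ w ∈ Kb n, c w * eb w q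

lemma eb_cont (w : ℤ × ℤ) : Continuous (eb w) := by unfold eb; fun_prop

lemma tp_cont (n : ℕ) (c : ℤ × ℤ → ℂ) : Continuous (tp n c) := by
  unfold tp; exact continuous_finsetSum _ fun w _ => continuous_const.mul (eb_cont w)

lemma span_tp {p : C(UnitAddTorus (Fin 2), ℂ)} (hp : p ∈ Submodule.span ℂ (Set.range (UnitAddTorus.mFourier (d := Fin 2)))) :
    ∃ n c, ∀ q, p (torM q) = tp n c q := by
  induction hp using Submodule.span_induction with
  | mem x hx =>
    obtain ⟨k, rfl⟩ := hx
    refine ⟨max (k 0).natAbs (k 1).natAbs, fun w => if w = (k 0, k 1) then 1 else 0, fun q => ?_⟩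
    rw [mF_torM, tp]
    simp only [ite_mul, one_mul, zero_mul]
    rw [Finset.sum_ite_eq' _ _ _, if_pos]
    simp only [Kb, Finset.mem_product, Finset.mem_Icc]
    omega
  | zero => exact ⟨0, 0, fun q => by simp [tp]⟩
  | add x y _ _ hx hy =>
    obtain ⟨n, c, h⟩ := hx
    obtain ⟨n', c', h'⟩ := hy
    refine ⟨max n n', fun w => (if w ∈ Kb n then c w else 0) + (if w ∈ Kb n' then c' w else 0), fun q => ?_⟩
    have sub : ∀ a b : ℕ, a ≤ b → Kb a ⊆ Kb b := by
      intro a b hab w hw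
      simp only [Kb, Finset.mem_product, Finset.mem_Icc] at hw ⊢
      omega
    rw [ContinuousMap.add_apply, h, h']
    simp only [tp, add_mul, ite_mul, zero_mul, Finset.sum_add_distrib]
    rw [← Finset.sum_filter, ← Finset.sum_filter]
    congr 1
    · refine Finset.sum_congr ?_ fun _ _ => rfl
      rw [Finset.filter_mem_eq_inter, Finset.inter_eq_right.2 (sub _ _ (le_max_left _ _))]
    · refine Finset.sum_congr ?_ fun _ _ => rfl
      rw [Finset.filter_mem_eq_inter, Finset.inter_eq_right.2 (sub _ _ (le_max_right _ _))]
  | smul a x _ hx =>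
    obtain ⟨n, c, h⟩ := hx
    refine ⟨n, fun w => a * c w, fun q => ?_⟩
    rw [ContinuousMap.smul_apply, h, tp, tp, smul_eq_mul, Finset.mul_sum]
    exact Finset.sum_congr rfl fun w _ => by ring

lemma dense_tp (u : C(UnitAddTorus (Fin 2), ℂ)) {δ : ℝ} (hδ : 0 < δ) :
    ∃ n c, ∀ q, ‖u (torM q) - tp n c q‖ ≤ δ := by
  have h : u ∈ (Submodule.span ℂ (Set.range (UnitAddTorus.mFourier (d := Fin 2)))).topologicalClosure := by
    rw [UnitAddTorus.span_mFourier_closure_eq_top]; trivial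
  rw [← SetLike.mem_coe, Submodule.topologicalClosure_coe] at h
  obtain ⟨p, hp, hd⟩ := Metric.mem_closure_iff.1 h δ hδ
  obtain ⟨n, c, hc⟩ := span_tp hp
  refine ⟨n, c, fun q => ?_⟩
  rw [← hc, ← dist_eq_norm]
  exact (ContinuousMap.dist_apply_le_dist _).trans hd.le

lemma approx1 {g : ℝ × ℝ → ℝ} (hg : Measurable g) {B : ℝ} (h0 : ∀ q, 0 ≤ g q) (hB : ∀ q, g q ≤ B) {δ : ℝ} (hδ : 0 < δ) (hδ1 : δ ≤ 1) :
    ∃ n c, (∀ q, ‖tp n c q‖ ≤ B + 1) ∧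
      eLpNorm (fun q => (g q : ℂ) - tp n c q) 2 (volume.restrict specBox) ≤
        ENNReal.ofReal δ + ((volume.restrict specBox) Set.univ) ^ (2:ℝ)⁻¹ * ENNReal.ofReal δ := by
  haveI := vol_box
  set μ := volume.restrict specBox with hμ
  have hB0 : 0 ≤ B := (h0 0).trans (hB 0)
  have mM := torM_cont.measurable
  have : IsFiniteMeasure (μ.map torM) := Measure.isFiniteMeasure_map _ _
  have hG : MemLp (fun z => g (torS z)) 2 (μ.map torM) :=
    MemLp.of_bound (hg.comp torS_meas).aestronglyMeasurable B (ae_of_all _ fun z => by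
      rw [Real.norm_eq_abs, abs_of_nonneg (h0 _)]; exact hB _)
  obtain ⟨u, hu, -⟩ := hG.exists_boundedContinuous_eLpNorm_sub_le (by simp) (ε := ENNReal.ofReal δ) (by simpa using hδ)
  set u' : C(UnitAddTorus (Fin 2), ℂ) := ⟨fun z => ((max 0 (min (u z) B) : ℝ) : ℂ), by
    have := u.continuous; fun_prop⟩ with hu'
  obtain ⟨n, c, hc⟩ := dense_tp u' hδ
  have hub : ∀ z, ‖u' z‖ ≤ B := by
    intro z
    simp only [hu', ContinuousMap.coe_mk]
    rw [Complex.norm_real, Real.norm_eq_abs, abs_of_nonneg (le_max_left _ _)]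
    exact max_le hB0 (min_le_right _ _)
  refine ⟨n, c, fun q => ?_, ?_⟩
  · have h1 := hc q
    have h2 := hub (torM q)
    calc _ = ‖u' (torM q) - (u' (torM q) - tp n c q)‖ := by rw [sub_sub_cancel]
      _ ≤ _ := (norm_sub_le _ _).trans (by linarith)
  · have e : (fun q => (g q : ℂ) - tp n c q) = (fun q => (g q : ℂ) - u' (torM q)) + (fun q => u' (torM q) - tp n c q) := by
      funext q; simp
    rw [e]
    refine (eLpNorm_add_le ?_ ?_ (by simp)).trans (add_le_add ?_ ?_)
    · exact ((Complex.measurable_ofReal.comp hg).sub (u'.continuous.measurable.comp mM)).aestronglyMeasurable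
    · exact ((u'.continuous.comp torM_cont).sub (tp_cont n c)).aestronglyMeasurable
    · have h1 : eLpNorm (fun q => (g q : ℂ) - u' (torM q)) 2 μ ≤ eLpNorm (((fun z => g (torS z)) - ⇑u) ∘ torM) 2 μ := by
        apply eLpNorm_mono_ae
        filter_upwards [ae_restrict_mem box_meas] with q hq
        simp only [Function.comp, Pi.sub_apply, torSM hq, hu', ContinuousMap.coe_mk]
        rw [← Complex.ofReal_sub, Complex.norm_real, Real.norm_eq_abs, Real.norm_eq_abs]
        have := h0 q; have := hB q
        generalize u (torM q) = y
        rcases le_total y B with h | h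
        · rw [min_eq_left h]
          rcases le_total 0 y with h' | h'
          · rw [max_eq_right h']
          · rw [max_eq_left h', abs_of_nonneg (by linarith), abs_of_nonneg (by linarith)]; linarith
        · rw [min_eq_right h, max_eq_right hB0, abs_of_nonpos (by linarith), abs_of_nonpos (by linarith)]; linarith
      refine h1.trans ?_
      rw [← eLpNorm_map_measure]
      · exact hu
      · exact ((hg.comp torS_meas).sub u.continuous.measurable).aestronglyMeasurable
      · exact mM.aemeasurable
    · have := eLpNorm_le_of_ae_bound (p := 2) (μ := μ) (f := fun q => u' (torM q) - tp n c q) (ae_of_all _ hc)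
      simpa using this

lemma approx {g : ℝ × ℝ → ℝ} (hg : Measurable g) {B : ℝ} (h0 : ∀ q, 0 ≤ g q) (hB : ∀ q, g q ≤ B) :
    ∃ (n : ℕ → ℕ) (c : ℕ → ℤ × ℤ → ℂ), (∀ i q, ‖tp (n i) (c i) q‖ ≤ B + 1) ∧
      Tendsto (fun i => eLpNorm (fun q => (g q : ℂ) - tp (n i) (c i) q) 2 (volume.restrict specBox)) atTop (nhds 0) ∧
      ∀ᵐ q ∂(volume.restrict specBox), Tendsto (fun i => tp (n i) (c i) q) atTop (nhds (g q : ℂ)) := by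
  haveI := vol_box
  choose n c h1 h2 using fun i : ℕ => approx1 hg h0 hB (δ := 1 / ((i:ℝ) + 1)) (by positivity) (by
    rw [div_le_one (by positivity)]; linarith [(Nat.cast_nonneg i : (0:ℝ) ≤ i)])
  have ht : Tendsto (fun i => eLpNorm (fun q => (g q : ℂ) - tp (n i) (c i) q) 2 (volume.restrict specBox)) atTop (nhds 0) := by
    refine tendsto_of_tendsto_of_tendsto_of_le_of_le tendsto_const_nhds ?_ (fun _ => bot_le) h2
    have hz : Tendsto (fun i : ℕ => ENNReal.ofReal (1 / ((i:ℝ) + 1))) atTop (nhds 0) := by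
      rw [← ENNReal.ofReal_zero]
      exact (ENNReal.continuous_ofReal.tendsto 0).comp tendsto_one_div_add_atTop_nhds_zero_nat
    have := hz.add (ENNReal.Tendsto.const_mul (a := ((volume.restrict specBox) Set.univ) ^ (2:ℝ)⁻¹) hz (Or.inr
      (ENNReal.rpow_ne_top_of_nonneg (by norm_num) (measure_ne_top _ _))))
    simpa using this
  have him : TendstoInMeasure (volume.restrict specBox) (fun i => tp (n i) (c i)) atTop (fun q => (g q : ℂ)) := by
    refine tendstoInMeasure_of_tendsto_eLpNorm (p := 2) (by simp) (fun i => (tp_cont _ _).aestronglyMeasurable)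
      (Complex.measurable_ofReal.comp hg).aestronglyMeasurable ?_
    convert ht using 2 with i
    rw [← eLpNorm_neg]
    congr 1
    funext q; simp
  obtain ⟨ns, hns, hae⟩ := him.exists_seq_tendsto_ae
  exact ⟨fun i => n (ns i), fun i => c (ns i), fun i => h1 (ns i), ht.comp hns.tendsto_atTop, hae⟩


lemma eb_norm (w : ℤ × ℤ) (q : ℝ × ℝ) : ‖eb w q‖ = 1 := by
  unfold eb; rw [mul_comm]; exact Complex.norm_exp_ofReal_mul_I _

lemma eb_neg (w : ℤ × ℤ) (q : ℝ × ℝ) : eb w (-q) = (starRingEnd ℂ) (eb w q) := by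
  unfold eb
  rw [← Complex.exp_conj]
  simp only [map_mul, Complex.conj_I, Complex.conj_ofReal, Prod.fst_neg, Prod.snd_neg]
  congr 1; push_cast; ring

lemma eb_int {μ : Measure (ℝ × ℝ)} [IsFiniteMeasure μ] (w : ℤ × ℤ) : Integrable (eb w) μ :=
  Integrable.of_bound (eb_cont w).aestronglyMeasurable 1 (ae_of_all _ fun q => (eb_norm w q).le)

lemma tor_ext {μ μ' : Measure (ℝ × ℝ)} [IsFiniteMeasure μ] [IsFiniteMeasure μ']
    (h : ∀ w, ∫ q, eb w q ∂μ = ∫ q, eb w q ∂μ') : μ.map torM = μ'.map torM := by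
  have mM := torM_cont.measurable
  apply ext_of_forall_integral_eq_of_IsFiniteMeasure
  intro u
  rw [integral_map mM.aemeasurable u.continuous.aestronglyMeasurable, integral_map mM.aemeasurable u.continuous.aestronglyMeasurable]
  set u' : C(UnitAddTorus (Fin 2), ℂ) := ⟨fun z => (u z : ℂ), by have := u.continuous; fun_prop⟩ with hu'
  have htp : ∀ n c, ∫ q, tp n c q ∂μ = ∫ q, tp n c q ∂μ' := by
    intro n c
    unfold tp
    rw [integral_finsetSum _ fun w _ => (eb_int w).const_mul _, integral_finsetSum _ fun w _ => (eb_int w).const_mul _]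
    simp only [integral_const_mul, h]
  have hcont : Continuous fun q => u' (torM q) := u'.continuous.comp torM_cont
  have hi : ∀ (ρ : Measure (ℝ × ℝ)) [IsFiniteMeasure ρ], Integrable (fun q => u' (torM q)) ρ := by
    intro ρ _
    exact Integrable.of_bound hcont.aestronglyMeasurable ‖u'‖ (ae_of_all _ fun q => u'.norm_coe_le_norm _)
  have hti : ∀ (ρ : Measure (ℝ × ℝ)) [IsFiniteMeasure ρ] n c, Integrable (tp n c) ρ := by
    intro ρ _ n c
    exact integrable_finsetSum _ fun w _ => (eb_int w).const_mul _
  have key : ∫ q, u' (torM q) ∂μ = ∫ q, u' (torM q) ∂μ' := by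
    rw [← sub_eq_zero, ← norm_le_zero_iff]
    apply le_of_forall_pos_le_add
    intro ε hε
    have hpos : 0 < μ.real Set.univ + μ'.real Set.univ + 1 := by positivity
    obtain ⟨n, c, hc⟩ := dense_tp u' (δ := ε / (μ.real Set.univ + μ'.real Set.univ + 1)) (by positivity)
    set δ := ε / (μ.real Set.univ + μ'.real Set.univ + 1) with hδ
    have b : ∀ (ρ : Measure (ℝ × ℝ)) [IsFiniteMeasure ρ], ‖∫ q, u' (torM q) ∂ρ - ∫ q, tp n c q ∂ρ‖ ≤ δ * ρ.real Set.univ := by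
      intro ρ _
      rw [← integral_sub (hi ρ) (hti ρ n c)]
      exact norm_integral_le_of_norm_le_const (ae_of_all _ hc)
    have b1 := b μ
    have b2 := b μ'
    rw [← htp] at b2
    have : ∫ q, u' (torM q) ∂μ - ∫ q, u' (torM q) ∂μ' = (∫ q, u' (torM q) ∂μ - ∫ q, tp n c q ∂μ) - (∫ q, u' (torM q) ∂μ' - ∫ q, tp n c q ∂μ) := by ring
    rw [this]
    refine (norm_sub_le _ _).trans ?_
    have e : δ * (μ.real Set.univ + μ'.real Set.univ + 1) = ε := by rw [hδ]; field_simp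
    have : 0 < δ := by positivity
    nlinarith
  simp only [hu', ContinuousMap.coe_mk] at key
  rw [integral_complex_ofReal, integral_complex_ofReal] at key
  exact_mod_cast key

lemma f_even {Ω : Type*} [MeasurableSpace Ω] {P : Measure Ω} {X : ℤ → ℤ → Ω → ℝ} {ν νd : Measure (ℝ × ℝ)} {f : ℝ × ℝ → ℝ}
    (hν : SpectralDecomp P X ν νd f) : ∀ᵐ q ∂(volume.restrict specBox), f (-q) = f q := by
  haveI := hν.finite
  have mM := torM_cont.measurable
  have hcoef : ∀ w, ∫ q, eb w q ∂ν = ∫ q, eb w q ∂(ν.map (fun q => -q)) := by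
    intro w
    rw [integral_map (by fun_prop) (eb_cont w).aestronglyMeasurable]
    simp only [eb_neg]
    rw [integral_conj]
    have : ∫ q, eb w q ∂ν = _ := hν.herglotz w.1 w.2
    rw [this, Complex.conj_ofReal]
  have : IsFiniteMeasure (ν.map (fun q => -q)) := Measure.isFiniteMeasure_map _ _
  have hmap := tor_ext hcoef
  obtain ⟨s, hs, hs0⟩ := hν.discrete
  set O : Set (ℝ × ℝ) := (Set.Ioo (-π) π ×ˢ Set.Ioo (-π) π) \ (s ∪ {q | -q ∈ s}) with hO
  have hs' : ({q | -q ∈ s} : Set (ℝ × ℝ)).Countable := by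
    have : ({q | -q ∈ s} : Set (ℝ × ℝ)) = (fun q => -q) '' s := by
      ext q; simp
    rw [this]; exact hs.image _
  have Om : MeasurableSet O := (measurableSet_Ioo.prod measurableSet_Ioo).diff (hs.union hs').measurableSet
  have hOb : O ⊆ specBox := fun q hq => ⟨⟨hq.1.1.1, hq.1.1.2.le⟩, ⟨hq.1.2.1, hq.1.2.2.le⟩⟩
  have hOn : ∀ q, q ∈ O → -q ∈ O := by
    rintro q ⟨⟨⟨a, b⟩, ⟨c, d⟩⟩, h⟩
    refine ⟨⟨⟨?_, ?_⟩, ⟨?_, ?_⟩⟩, ?_⟩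
    · simp only [Prod.fst_neg]; linarith
    · simp only [Prod.fst_neg]; linarith
    · simp only [Prod.snd_neg]; linarith
    · simp only [Prod.snd_neg]; linarith
    · simp only [Set.mem_union, Set.mem_setOf_eq, neg_neg] at h ⊢; tauto
  have hsym : ∀ A : Set (ℝ × ℝ), MeasurableSet A → A ⊆ O → ν A = ν {q | -q ∈ A} := by
    intro A mA hA
    have h1 : (ν.map torM) (torS ⁻¹' A) = ((ν.map (fun q => -q)).map torM) (torS ⁻¹' A) := by rw [hmap]
    rw [Measure.map_apply mM (torS_meas mA), Measure.map_apply mM (torS_meas mA), Measure.map_apply (by fun_prop) (mM (torS_meas mA))] at h1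
    have hbox : ∀ᵐ q ∂ν, q ∈ specBox := by rw [ae_iff]; exact hν.support
    have e1 : ν A = ν (torM ⁻¹' (torS ⁻¹' A)) := by
      apply measure_congr
      filter_upwards [hbox] with q hq
      apply propext
      change q ∈ A ↔ torS (torM q) ∈ A
      rw [torSM hq]
    have e2 : ν {q | -q ∈ A} = ν ((fun q => -q) ⁻¹' (torM ⁻¹' (torS ⁻¹' A))) := by
      apply measure_congr
      filter_upwards [hbox] with q hq
      apply propext
      change -q ∈ A ↔ torS (torM (-q)) ∈ A
      by_cases hq2 : -q ∈ specBox
      · rw [torSM hq2]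
      · constructor
        · intro h; exact absurd (hOb (hA h)) hq2
        · intro h
          exfalso
          have h3 := (hA h).1
          obtain ⟨⟨a, b⟩, ⟨c, d⟩⟩ := hq
          by_cases h4 : q.1 = π
          · have : (torS (torM (-q))).1 = π := by
              simp only [torS, torM, Matrix.cons_val_zero, Prod.fst_neg, h4]; exact ioc_aux2
            exact absurd h3.1.2 (by rw [this]; exact lt_irrefl _)
          · by_cases h5 : q.2 = π
            · have : (torS (torM (-q))).2 = π := by
                simp only [torS, torM, Matrix.cons_val_one, Prod.snd_neg, h5]; exact ioc_aux2
              exact absurd h3.2.2 (by rw [this]; exact lt_irrefl _)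
            · have := lt_of_le_of_ne b h4
              have := lt_of_le_of_ne d h5
              exact hq2 ⟨⟨by simp only [Prod.fst_neg]; linarith, by simp only [Prod.fst_neg]; linarith⟩,
                ⟨by simp only [Prod.snd_neg]; linarith, by simp only [Prod.snd_neg]; linarith⟩⟩
    rw [e1, e2, h1]
  have hfm : Measurable fun q => ENNReal.ofReal (f q) := hν.f_meas.ennreal_ofReal
  have hden : ∀ A : Set (ℝ × ℝ), MeasurableSet A → A ⊆ O → ν A = ∫⁻ q in A, ENNReal.ofReal (f q) := by
    intro A mA hA
    have h2 : νd A = 0 := measure_mono_null (fun q hq => by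
      have := (hA hq).2; simp only [Set.mem_union] at this; tauto) hs0
    rw [hν.decomp, Measure.add_apply, h2, add_zero, withDensity_apply _ mA, Measure.restrict_restrict mA,
      Set.inter_eq_left.2 (hA.trans hOb)]
  have hae : (fun q => ENNReal.ofReal (f q)) =ᵐ[volume.restrict O] fun q => ENNReal.ofReal (f (-q)) := by
    apply ae_eq_of_forall_setLIntegral_eq_of_sigmaFinite hfm (hfm.comp measurable_neg)
    intro A mA _
    rw [Measure.restrict_restrict mA]
    set A' := A ∩ O
    have mA' : MeasurableSet A' := mA.inter Om
    have hA' : A' ⊆ O := Set.inter_subset_right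
    rw [← hden _ mA' hA', hsym _ mA' hA', hden {q | -q ∈ A'} (measurable_neg mA') (fun q hq => by
      have := hOn _ (hA' hq); rwa [neg_neg] at this)]
    have mp : MeasurePreserving (fun q : ℝ × ℝ => -q) volume volume := Measure.measurePreserving_neg _
    have := mp.setLIntegral_comp_preimage mA' (hfm.comp measurable_neg)
    simp only [Function.comp, neg_neg] at this
    exact this
  have hnull : volume (specBox \ O) = 0 := by
    have : specBox \ O ⊆ (({π} : Set ℝ) ×ˢ Set.univ) ∪ (Set.univ ×ˢ ({π} : Set ℝ)) ∪ (s ∪ {q | -q ∈ s}) := by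
      rintro q ⟨⟨⟨a, b⟩, ⟨c, d⟩⟩, h⟩
      simp only [Set.mem_union, Set.mem_prod, Set.mem_singleton_iff, Set.mem_univ, and_true, true_and]
      by_contra hcon
      push Not at hcon
      refine h ⟨⟨⟨a, lt_of_le_of_ne b hcon.1.1⟩, ⟨c, lt_of_le_of_ne d hcon.1.2⟩⟩, ?_⟩
      simp only [Set.mem_union]; tauto
    refine measure_mono_null this (measure_union_null (measure_union_null ?_ ?_) ((hs.union hs').measure_zero _))
    · rw [Measure.volume_eq_prod, Measure.prod_prod]; simp
    · rw [Measure.volume_eq_prod, Measure.prod_prod]; simp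
  have hre : volume.restrict specBox = volume.restrict O := by
    apply Measure.restrict_congr_set
    refine (ae_eq_set.2 ⟨hnull, ?_⟩)
    rw [Set.diff_eq_empty.2 hOb]; simp
  rw [hre]
  filter_upwards [hae] with q hq
  have h1 := hν.f_nonneg q
  have h2 := hν.f_nonneg (-q)
  exact ((ENNReal.ofReal_eq_ofReal_iff h1 h2).1 hq).symm


lemma eb_mul (w w' : ℤ × ℤ) (q : ℝ × ℝ) : eb w q * eb w' q = eb (w + w') q := by
  unfold eb; rw [← Complex.exp_add]; congr 1; push_cast [Prod.fst_add, Prod.snd_add]; ring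

lemma eb_conj (w : ℤ × ℤ) (q : ℝ × ℝ) : (starRingEnd ℂ) (eb w q) = eb (-w) q := by
  rw [← eb_neg]; unfold eb; congr 1; push_cast [Prod.fst_neg, Prod.snd_neg]; ring

lemma eb_re (w : ℤ × ℤ) (q : ℝ × ℝ) : (eb w q).re = cos (w.1 * q.1 + w.2 * q.2) := by
  unfold eb; rw [mul_comm, Complex.exp_ofReal_mul_I_re]

lemma eb_im (w : ℤ × ℤ) (q : ℝ × ℝ) : (eb w q).im = sin (w.1 * q.1 + w.2 * q.2) := by
  unfold eb; rw [mul_comm, Complex.exp_ofReal_mul_I_im]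

lemma eb_box (w : ℤ × ℤ) : ∫ q in specBox, eb w q = if w = 0 then (2 * π : ℂ) ^ 2 else 0 := by
  have h : ∀ q : ℝ × ℝ, eb w q = Complex.exp (Complex.I * ((w.1 * q.1 : ℝ) : ℂ)) * Complex.exp (Complex.I * ((w.2 * q.2 : ℝ) : ℂ)) := by
    intro q; unfold eb; rw [← Complex.exp_add]; congr 1; push_cast; ring
  simp only [h]
  rw [specBox, Measure.volume_eq_prod, setIntegral_prod_mul (fun x : ℝ => Complex.exp (Complex.I * ((w.1 * x : ℝ) : ℂ))) (fun x : ℝ => Complex.exp (Complex.I * ((w.2 * x : ℝ) : ℂ))),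
    ← integral_Icc_eq_integral_Ioc, ← integral_Icc_eq_integral_Ioc, int_exp, int_exp]
  rcases w with ⟨a, b⟩
  by_cases h1 : a = 0 <;> by_cases h2 : b = 0 <;> simp [h1, h2, pow_two]

lemma tp_sq (n : ℕ) (c : ℤ × ℤ → ℂ) (q : ℝ × ℝ) :
    ((‖tp n c q‖ ^ 2 : ℝ) : ℂ) = ∑ k ∈ Kb n, ∑ l ∈ Kb n, c k * (starRingEnd ℂ) (c l) * eb (k - l) q := by
  rw [← Complex.normSq_eq_norm_sq, ← Complex.mul_conj, tp, map_sum, Finset.sum_mul_sum]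
  refine Finset.sum_congr rfl fun k _ => Finset.sum_congr rfl fun l _ => ?_
  rw [map_mul, eb_conj, sub_eq_add_neg, ← eb_mul]; ring

/-- covariance of the moving average -/
def RT (n : ℕ) (c : ℤ × ℤ → ℂ) (w : ℤ × ℤ) : ℝ :=
  ∑ k ∈ Kb n, ∑ l ∈ Kb n, (2 * π) ^ 2 * (if l - k = w then (c k * (starRingEnd ℂ) (c l)).re else 0)

lemma RT_int (n : ℕ) (c : ℤ × ℤ → ℂ) (w : ℤ × ℤ) :
    ∫ q in specBox, (eb w q).re * ‖tp n c q‖ ^ 2 = RT n c w := by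
  haveI := vol_box
  have h1 : ∀ q, (eb w q).re * ‖tp n c q‖ ^ 2 = (∑ k ∈ Kb n, ∑ l ∈ Kb n, c k * (starRingEnd ℂ) (c l) * eb (w + (k - l)) q).re := by
    intro q
    have : (eb w q).re * ‖tp n c q‖ ^ 2 = (eb w q * ((‖tp n c q‖ ^ 2 : ℝ) : ℂ)).re := by
      rw [Complex.re_mul_ofReal]
    rw [this, tp_sq, Finset.mul_sum]
    congr 1
    refine Finset.sum_congr rfl fun k _ => ?_
    rw [Finset.mul_sum]
    refine Finset.sum_congr rfl fun l _ => ?_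
    rw [← eb_mul]; ring
  simp only [h1]
  have hi : ∀ w, Integrable (eb w) (volume.restrict specBox) := fun w => eb_int w
  have hre := integral_re (𝕜 := ℂ) (μ := volume.restrict specBox) (f := fun q => ∑ k ∈ Kb n, ∑ l ∈ Kb n, c k * (starRingEnd ℂ) (c l) * eb (w + (k - l)) q)
    (integrable_finsetSum _ fun k _ => integrable_finsetSum _ fun l _ => (hi _).const_mul _)
  simp only [RCLike.re_to_complex] at hre
  rw [hre, integral_finsetSum _ fun k _ => integrable_finsetSum _ fun l _ => (hi _).const_mul _, RT, Complex.re_sum]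
  refine Finset.sum_congr rfl fun k _ => ?_
  rw [integral_finsetSum _ fun l _ => (hi _).const_mul _, Complex.re_sum]
  refine Finset.sum_congr rfl fun l _ => ?_
  rw [integral_const_mul, eb_box]
  have : w + (k - l) = 0 ↔ l - k = w := by
    constructor
    · intro h; rw [eq_neg_of_add_eq_zero_left h]; abel
    · rintro rfl; abel
  simp only [this]
  split_ifs
  · have : ((2 * π : ℂ)) ^ 2 = (((2 * π) ^ 2 : ℝ) : ℂ) := by push_cast; ring
    rw [this, Complex.re_mul_ofReal]; ring
  · simp

lemma RT_even (n : ℕ) (c : ℤ × ℤ → ℂ) (w : ℤ × ℤ) : RT n c (-w) = RT n c w := by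
  rw [← RT_int, ← RT_int]
  congr 1; funext q
  rw [← eb_conj, Complex.conj_re]

lemma Kb_sub {n : ℕ} {k l : ℤ × ℤ} (hk : k ∈ Kb n) (hl : l ∈ Kb n) : l - k ∈ Kb (2 * n) := by
  simp only [Kb, Finset.mem_product, Finset.mem_Icc, Prod.fst_sub, Prod.snd_sub] at *
  push_cast; omega

lemma RT_supp (n : ℕ) (c : ℤ × ℤ → ℂ) (w : ℤ × ℤ) (hw : w ∉ Kb (2 * n)) : RT n c w = 0 := by
  unfold RT
  refine Finset.sum_eq_zero fun k hk => Finset.sum_eq_zero fun l hl => ?_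
  rw [if_neg, mul_zero]
  rintro rfl; exact hw (Kb_sub hk hl)

lemma RT_fR (n : ℕ) (c : ℤ × ℤ → ℂ) (q : ℝ × ℝ) :
    fR (2 * n) (RT n c) q = (‖tp n c q‖ ^ 2 + ‖tp n c (-q)‖ ^ 2) / 2 := by
  have hr : ∀ q, ‖tp n c q‖ ^ 2 = ∑ k ∈ Kb n, ∑ l ∈ Kb n, (c k * (starRingEnd ℂ) (c l) * eb (k - l) q).re := by
    intro q
    have := congrArg Complex.re (tp_sq n c q)
    rw [Complex.ofReal_re, Complex.re_sum] at this
    rw [this]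
    exact Finset.sum_congr rfl fun k _ => Complex.re_sum _ _
  rw [hr, hr, ← Finset.sum_add_distrib, Finset.sum_div, fR]
  have h1 : ∑ w ∈ Kb (2 * n), RT n c w * cos (w.1 * q.1 + w.2 * q.2) =
      ∑ k ∈ Kb n, ∑ l ∈ Kb n, (2 * π) ^ 2 * ((c k * (starRingEnd ℂ) (c l)).re * (eb (l - k) q).re) := by
    simp only [RT, Finset.sum_mul]
    rw [Finset.sum_comm]
    refine Finset.sum_congr rfl fun k hk => ?_
    rw [Finset.sum_comm]
    refine Finset.sum_congr rfl fun l hl => ?_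
    rw [Finset.sum_eq_single (l - k)]
    · rw [if_pos rfl, eb_re]; ring
    · intro w _ hw; rw [if_neg (Ne.symm hw)]; ring
    · intro h; exact absurd (Kb_sub hk hl) h
  rw [h1, Finset.mul_sum]
  refine Finset.sum_congr rfl fun k _ => ?_
  rw [← Finset.sum_add_distrib, Finset.sum_div, Finset.mul_sum]
  refine Finset.sum_congr rfl fun l _ => ?_
  have e1 : eb (k - l) (-q) = (starRingEnd ℂ) (eb (k - l) q) := eb_neg _ _
  have e2 : eb (l - k) q = (starRingEnd ℂ) (eb (k - l) q) := by rw [eb_conj]; congr 1; abel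
  rw [e1, e2]
  simp only [Complex.mul_re, Complex.conj_re, Complex.conj_im]
  have := Real.pi_pos
  field_simp
  ring


lemma bd_memLp {ρ : Measure (ℝ × ℝ)} [IsFiniteMeasure ρ] {u : ℝ × ℝ → ℂ} (hu : Measurable u) {B : ℝ} (hB : ∀ q, ‖u q‖ ≤ B) :
    MemLp u 2 ρ := MemLp.of_bound hu.aestronglyMeasurable B (ae_of_all _ hB)

lemma inner_bd {ρ : Measure (ℝ × ℝ)} {u v : ℝ × ℝ → ℂ} (hu : MemLp u 2 ρ) (hv : MemLp v 2 ρ) :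
    inner ℝ (hu.toLp u) (hv.toLp v) = ∫ q, (v q * (starRingEnd ℂ) (u q)).re ∂ρ := by
  rw [L2.inner_def]
  refine integral_congr_ae ?_
  filter_upwards [hu.coeFn_toLp, hv.coeFn_toLp] with q h1 h2
  rw [h1, h2, real_inner_eq_re_inner ℂ]; rfl

lemma finset_tail {νd : Measure (ℝ × ℝ)} [IsFiniteMeasure νd] {s : Set (ℝ × ℝ)} (hs : s.Countable) {κ : ℝ} (hκ : 0 < κ) :
    ∃ F : Finset (ℝ × ℝ), (F : Set (ℝ × ℝ)) ⊆ s ∧ νd.real (s \ F) ≤ κ := by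
  classical
  rcases s.eq_empty_or_nonempty with h | h
  · exact ⟨∅, by simp, by subst h; simpa using hκ.le⟩
  obtain ⟨e, he⟩ := hs.exists_eq_range h
  let F : ℕ → Finset (ℝ × ℝ) := fun n => (Finset.range n).image e
  have hF : ∀ n, (F n : Set (ℝ × ℝ)) ⊆ s := by
    intro n q hq
    simp only [F, Finset.coe_image] at hq
    obtain ⟨i, _, rfl⟩ := hq
    rw [he]; exact ⟨i, rfl⟩
  have hmono : Antitone fun n => s \ (F n : Set (ℝ × ℝ)) := by
    intro a b hab
    refine Set.sdiff_subset_sdiff_right ?_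
    intro q hq
    simp only [F, Finset.coe_image] at hq ⊢
    obtain ⟨i, hi, rfl⟩ := hq
    refine ⟨i, ?_, rfl⟩
    simp at hi ⊢; omega
  have hlim := tendsto_measure_iInter_atTop (μ := νd) (s := fun n => s \ (F n : Set (ℝ × ℝ)))
    (fun n => (hs.measurableSet.diff (F n).measurableSet).nullMeasurableSet) hmono ⟨0, measure_ne_top _ _⟩
  have hemp : ⋂ n, s \ (F n : Set (ℝ × ℝ)) = ∅ := by
    rw [Set.eq_empty_iff_forall_notMem]
    intro q hq
    rw [Set.mem_iInter] at hq
    have h0 := (hq 0).1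
    rw [he] at h0
    obtain ⟨i, rfl⟩ := h0
    exact (hq (i + 1)).2 (by simp only [F, Finset.coe_image]; exact ⟨i, by simp, rfl⟩)
  rw [hemp, measure_empty] at hlim
  have := (ENNReal.tendsto_toReal (ENNReal.zero_ne_top)).comp hlim
  obtain ⟨n, hn⟩ := (this.eventually (gt_mem_nhds (by simpa using hκ))).exists
  exact ⟨F n, hF n, hn.le⟩

lemma gcoup {Ω : Type*} [MeasurableSpace Ω] {P : Measure Ω} [IsProbabilityMeasure P] {X : ℤ → ℤ → Ω → ℝ}
    {ν νd : Measure (ℝ × ℝ)} {f : ℝ × ℝ → ℝ} (hX : StatGauss P X) (hν : SpectralDecomp P X ν νd f)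
    {g : ℝ × ℝ → ℝ} (hg : Measurable g) {B : ℝ} (h0 : ∀ q, 0 ≤ g q) (hB : ∀ q, g q ≤ B)
    (hgf : ∀ᵐ q ∂(volume.restrict specBox), g q ^ 2 = f q)
    (n : ℕ) (c : ℤ × ℤ → ℂ) {B' : ℝ} (hB' : ∀ q, ‖tp n c q‖ ≤ B') {κ : ℝ} (hκ : 0 < κ) :
    ∃ D : ℝ, ∀ N : ℕ, 1 ≤ N → ∀ s : ℝ, 0 < s → ∀ ε : ℝ, 0 < ε → ∀ k : ℕ,
    |∫ ω, FF s (scaledW X N ω) ∂P - ∑ j ∈ Finset.range (k + 1), (-1) ^ j * (s⁻¹) ^ j * momZ j N (RT n c)| ≤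
      (s⁻¹) ^ (k + 1) * momZ (k + 1) N (RT n c) + (s * (ε * (2 * (s⁻¹ * (√s)⁻¹)) ^ 2 +
        ε⁻¹ * (4 * ((∫ q in specBox, ‖(g q : ℂ) - tp n c q‖ ^ 2) + κ))) +
        (√(N : ℝ))⁻¹ * (s * (2 * (2 * (s⁻¹ * (√s)⁻¹))) * D)) := by
  classical
  have := vol_box
  have := hν.finite
  obtain ⟨S, hSc, hS0⟩ := hν.discrete
  have hle : νd ≤ ν := by rw [hν.decomp]; exact Measure.le_add_left le_rfl
  have : IsFiniteMeasure νd := isFiniteMeasure_of_le ν hle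
  obtain ⟨F, hFS, hFκ⟩ := finset_tail (νd := νd) hSc hκ
  set lam := (volume : Measure (ℝ × ℝ)).restrict specBox with hlam
  let ρ : Measure (ℝ × ℝ) := lam + νd
  have : IsFiniteMeasure ρ := by unfold ρ; infer_instance
  have hSm := hSc.measurableSet
  have hFm : MeasurableSet (F : Set (ℝ × ℝ)) := F.measurableSet
  have hlS : ∀ᵐ q ∂lam, q ∉ S := by
    refine ae_restrict_of_ae ?_
    exact (measure_eq_zero_iff_ae_notMem.mp (hSc.measure_zero volume))
  have hdS : ∀ᵐ q ∂νd, q ∈ S := by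
    rw [ae_iff]; exact hS0
  -- splitting integrals
  have hsplit : ∀ (u v w : ℝ × ℝ → ℝ), Measurable u → (∃ b, ∀ q, |u q| ≤ b) →
      (∀ q, q ∉ S → u q = v q) → (∀ q ∈ S, u q = w q) → ∫ q, u q ∂ρ = ∫ q, v q ∂lam + ∫ q, w q ∂νd := by
    intro u v w hu ⟨b, hb⟩ h1 h2
    have hi : ∀ μ : Measure (ℝ × ℝ), IsFiniteMeasure μ → Integrable u μ := fun μ _ =>
      Integrable.of_bound hu.aestronglyMeasurable b (ae_of_all _ hb)
    rw [integral_add_measure (hi _ inferInstance) (hi _ inferInstance)]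
    congr 1
    · exact integral_congr_ae (hlS.mono h1)
    · exact integral_congr_ae (hdS.mono h2)
  let ux : ℝ × ℝ → ℂ := fun q => if q ∈ S then 1 else (g q : ℂ)
  let uy : ℝ × ℝ → ℂ := fun q => if q ∈ S then 0 else tp n c q
  let ut : ℝ × ℝ → ℂ := fun q => if q ∈ S then (if q ∈ (F : Set (ℝ × ℝ)) then 0 else 1) else (g q : ℂ) - tp n c q
  have hgm : Measurable fun q => (g q : ℂ) := Complex.measurable_ofReal.comp hg
  have htm : Measurable (tp n c) := (tp_cont n c).measurable
  have hxm : Measurable ux := Measurable.ite hSm measurable_const hgm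
  have hym : Measurable uy := Measurable.ite hSm measurable_const htm
  have htmm : Measurable ut := Measurable.ite hSm (Measurable.ite hFm measurable_const measurable_const) (hgm.sub htm)
  have hgn : ∀ q, ‖(g q : ℂ)‖ ≤ B := fun q => by
    rw [Complex.norm_real, Real.norm_eq_abs, abs_of_nonneg (h0 q)]; exact hB q
  have hB0 : 0 ≤ B := (h0 0).trans (hB 0)
  have hB'0 : 0 ≤ B' := (norm_nonneg _).trans (hB' 0)
  have hxb : ∀ q, ‖ux q‖ ≤ B + B' + 1 := by
    intro q; simp only [ux]; split_ifs
    · simp; linarith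
    · linarith [hgn q]
  have hyb : ∀ q, ‖uy q‖ ≤ B + B' + 1 := by
    intro q; simp only [uy]; split_ifs
    · simp; linarith
    · linarith [hB' q]
  have htb : ∀ q, ‖ut q‖ ≤ B + B' + 1 := by
    intro q; simp only [ut]; split_ifs
    · simp; linarith
    · simp; linarith
    · linarith [norm_sub_le (g q : ℂ) (tp n c q), hgn q, hB' q]
  have hem : ∀ w, Measurable (eb w) := fun w => (eb_cont w).measurable
  have key : ∀ (u : ℝ × ℝ → ℂ), (∀ q, ‖u q‖ ≤ B + B' + 1) → ∀ w q, ‖eb w q * u q‖ ≤ B + B' + 1 := by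
    intro u hu w q; rw [norm_mul, eb_norm, one_mul]; exact hu q
  have mx : ∀ w, MemLp (fun q => eb w q * ux q) 2 ρ := fun w => bd_memLp ((hem w).mul hxm) (key _ hxb w)
  have my : ∀ w, MemLp (fun q => eb w q * uy q) 2 ρ := fun w => bd_memLp ((hem w).mul hym) (key _ hyb w)
  have mt : ∀ w, MemLp (fun q => eb w q * ut q) 2 ρ := fun w => bd_memLp ((hem w).mul htmm) (key _ htb w)
  let pt : ℝ × ℝ → ℂ → ℝ × ℝ → ℂ := fun z a q => if q ∈ ({z} : Set (ℝ × ℝ)) then a else 0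
  have mp : ∀ z a, MemLp (pt z a) 2 ρ := fun z a => bd_memLp (B := ‖a‖)
    (Measurable.ite (measurableSet_singleton z) measurable_const measurable_const) (by
      intro q; simp only [pt]; split_ifs <;> simp)
  -- inner product formula
  have hin : ∀ (u : ℝ × ℝ → ℂ) (w w' : ℤ × ℤ) (q : ℝ × ℝ), (eb w' q * u q * (starRingEnd ℂ) (eb w q * u q)).re = (eb (w' - w) q).re * ‖u q‖ ^ 2 := by
    intro u w w' q
    rw [map_mul, eb_conj, sub_eq_add_neg, ← eb_mul, ← Complex.re_mul_ofReal, ← Complex.normSq_eq_norm_sq, ← Complex.mul_conj]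
    congr 1; ring
  have hmn : ∀ (u : ℝ × ℝ → ℂ), Measurable u → ∀ w, Measurable fun q => (eb w q).re * ‖u q‖ ^ 2 := fun u hu w =>
    (Complex.measurable_re.comp (hem w)).mul (hu.norm.pow_const 2)
  have hbn : ∀ (u : ℝ × ℝ → ℂ), (∀ q, ‖u q‖ ≤ B + B' + 1) → ∀ w q, |(eb w q).re * ‖u q‖ ^ 2| ≤ (B + B' + 1) ^ 2 := by
    intro u hu w q
    rw [abs_mul, abs_of_nonneg (sq_nonneg ‖u q‖)]
    have h1 : |(eb w q).re| ≤ 1 := (Complex.abs_re_le_norm _).trans (eb_norm w q).le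
    have h2 : ‖u q‖ ^ 2 ≤ (B + B' + 1) ^ 2 := pow_le_pow_left₀ (norm_nonneg _) (hu q) 2
    nlinarith [abs_nonneg (eb w q).re, sq_nonneg ‖u q‖]
  let wi : ∀ {N : ℕ}, Fin N → Fin N → ℤ × ℤ := fun a b => ((a.val : ℤ), (b.val : ℤ))
  let ι := F × Fin 4
  let v : ι → Lp ℂ 2 ρ := fun r => (mp r.1 (![1, -1, Complex.I, Complex.I] r.2)).toLp
  let a : ∀ {N : ℕ}, ι → Fin N → ℝ := fun r j => ![cos (j.val * r.1.1.1), sin (j.val * r.1.1.1), sin (j.val * r.1.1.1), cos (j.val * r.1.1.1)] r.2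
  let b : ∀ {N : ℕ}, ι → Fin N → ℝ := fun r j => ![cos (j.val * r.1.1.2), sin (j.val * r.1.1.2), cos (j.val * r.1.1.2), sin (j.val * r.1.1.2)] r.2
  refine ⟨∑ r, (1 + ‖v r‖ ^ 2), fun N hN s hs ε hε k => ?_⟩
  refine compare hX (H := Lp ℂ 2 ρ) hN hs hε (ι := ι) (fun i j => (mx (wi i j)).toLp) (fun i j => (my (wi i j)).toLp)
    (fun i j => (mt (wi i j)).toLp) v a b ?_ ?_ ?_ ?_ ?_ (RT n c) ?_ k
  · rintro ⟨r, l⟩ i; fin_cases l <;> simp [a, abs_cos_le_one, abs_sin_le_one]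
  · rintro ⟨r, l⟩ i; fin_cases l <;> simp [b, abs_cos_le_one, abs_sin_le_one]
  · intro i j
    rw [← real_inner_self_eq_norm_sq, inner_bd]
    simp only [hin]
    rw [hsplit _ (fun q => ‖(g q : ℂ) - tp n c q‖ ^ 2) (Set.indicator (S \ F) fun _ => 1) (hmn _ htmm _) ⟨_, hbn _ htb _⟩]
    · rw [integral_indicator_const _ (hSm.diff hFm)]; simpa using hFκ
    · intro q hq; simp [ut, hq, eb]
    · intro q hq
      by_cases hqF : q ∈ F <;> simp [ut, hq, eb, hqF, Set.indicator]
  · intro i j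
    have hadd := MemLp.toLp_add (my (wi i j)) (mt (wi i j))
    rw [← hadd]
    apply Lp.ext
    have hall : ∀ᵐ q ∂ρ, ∀ r : ι, ((((a r i * b r j) • v r : Lp ℂ 2 ρ) : ℝ × ℝ → ℂ) q =
        ((a r i * b r j : ℝ) : ℂ) * pt r.1 (![1, -1, Complex.I, Complex.I] r.2) q) := by
      rw [ae_all_iff]; intro r
      filter_upwards [Lp.coeFn_smul (a r i * b r j) (v r), (mp r.1 (![1, -1, Complex.I, Complex.I] r.2)).coeFn_toLp] with q h1 h2
      rw [h1, Pi.smul_apply, h2, Complex.real_smul]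
    filter_upwards [(mx (wi i j)).coeFn_toLp, ((my (wi i j)).add (mt (wi i j))).coeFn_toLp, hall,
      Lp.coeFn_add (((my (wi i j)).add (mt (wi i j))).toLp _) (∑ r, (a r i * b r j) • v r),
      Lp.coeFn_fun_finsetSum Finset.univ fun r => (a r i * b r j) • v r] with q h1 h2 h3 h4 h5
    rw [h1, h4, Pi.add_apply, h2, h5]
    simp only [h3, Pi.add_apply]
    have hsum : ∑ r : ι, ((a r i * b r j : ℝ) : ℂ) * pt r.1 (![1, -1, Complex.I, Complex.I] r.2) q =
        if q ∈ F then eb (wi i j) q else 0 := by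
      have hz : ∀ z : F, ∑ l : Fin 4, ((a (z, l) i * b (z, l) j : ℝ) : ℂ) * pt z (![1, -1, Complex.I, Complex.I] l) q =
          if q = z then eb (wi i j) q else 0 := by
        intro z
        by_cases hqz : q = z
        · rw [if_pos hqz]
          rw [hqz]
          apply Complex.ext <;> simp [Fin.sum_univ_four, a, b, pt, eb_re, eb_im, wi, cos_add, sin_add, - Complex.ofReal_cos, - Complex.ofReal_sin] <;> ring
        · simp [pt, hqz]
      rw [Fintype.sum_prod_type]
      simp only [hz]
      rw [Finset.sum_coe_sort F (fun z => if q = z then eb (wi i j) q else 0)]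
      simp
    rw [hsum]
    by_cases hqS : q ∈ S
    · by_cases hqF : q ∈ F <;> simp [ux, uy, ut, hqS, hqF]
    · have hqF : q ∉ F := fun h => hqS (hFS h)
      simp [ux, uy, ut, hqS, hqF]; ring
  · intro i j i' j'
    rw [inner_bd]
    simp only [hin]
    rw [hsplit _ (fun q => (eb (wi i' j' - wi i j) q).re * g q ^ 2) (fun q => (eb (wi i' j' - wi i j) q).re) (hmn _ hxm _) ⟨_, hbn _ hxb _⟩]
    · have hh := hν.herglotz ((i'.val : ℤ) - i.val) ((j'.val : ℤ) - j.val)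
      have hh2 := congrArg Complex.re hh
      rw [Complex.ofReal_re] at hh2
      rw [← hh2]
      have h3 := integral_re (𝕜 := ℂ) (eb_int (μ := ν) (wi i' j' - wi i j))
      simp only [RCLike.re_to_complex] at h3
      refine Eq.trans ?_ h3
      have hir : ∀ μ : Measure (ℝ × ℝ), IsFiniteMeasure μ → Integrable (fun q => (eb (wi i' j' - wi i j) q).re) μ :=
        fun μ _ => (eb_int _).re
      have hfin : IsFiniteMeasure (lam.withDensity fun q => ENNReal.ofReal (f q)) :=
        isFiniteMeasure_of_le ν (by rw [hν.decomp]; exact Measure.le_add_right le_rfl)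
      rw [hν.decomp, integral_add_measure (hir _ hfin) (hir _ inferInstance),
        integral_withDensity_eq_integral_toReal_smul hν.f_meas.ennreal_ofReal (ae_of_all _ fun _ => ENNReal.ofReal_lt_top)]
      congr 1
      refine integral_congr_ae (hgf.mono fun q hq => ?_)
      simp only [hq, ENNReal.toReal_ofReal (hν.f_nonneg q), smul_eq_mul]; ring
    · intro q hq; simp [ux, hq]
    · intro q hq; simp [ux, hq]
  · intro i j i' j'
    rw [inner_bd]
    simp only [hin]
    rw [hsplit _ (fun q => (eb (wi i' j' - wi i j) q).re * ‖tp n c q‖ ^ 2) (fun q => 0) (hmn _ hym _) ⟨_, hbn _ hyb _⟩]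
    · rw [RT_int]; simp [wi]
    · intro q hq; simp [uy, hq]
    · intro q hq; simp [uy, hq]


lemma T_ne {m : ℕ} {p : Equiv.Perm (Fin (2 * m))} (hp : p ∈ NCPairings m) {T : Fin (2 * m) → Fin (m + 1)}
    (hT : KrI m p T) {u : Fin (2 * m)} (hu : u < p u) : T u ≠ T (p u) := by
  intro h
  obtain ⟨k, _, hk⟩ := ((hT.2 _ _).1 h).exists_pow_eq'
  have hinv : ∀ k : ℕ, T0 p ((krewPerm m p ^ k) u) = T0 p u := by
    intro k
    induction k with
    | zero => rfl
    | succ k ih => rw [pow_succ', Equiv.Perm.mul_apply, T0_krew hp, ih]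
  have h2 := hinv k
  rw [hk, T0_op hu] at h2
  have := Finset.mem_of_max h2
  simp only [Finset.mem_filter, Finset.mem_univ, true_and] at this
  exact lt_irrefl _ this.2

lemma ae_pull {m : ℕ} {Q : ℝ × ℝ → Prop} (hQ : ∀ᵐ q ∂(volume.restrict specBox), Q q) {a b : Fin (m + 1)} (hab : a ≠ b) :
    ∀ᵐ x ∂((volume : Measure (Fin (m + 1) → ℝ)).restrict (Set.univ.pi fun _ => Set.Icc (-π) π)),
      Q (x a, -x b) ∧ Q (-x b, x a) := by
  have hbox : (volume : Measure (ℝ × ℝ)).restrict specBox = volume.restrict (Set.Icc (-π) π ×ˢ Set.Icc (-π) π) := by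
    refine Measure.restrict_congr_set ?_
    unfold specBox
    rw [Measure.volume_eq_prod]
    exact Measure.set_prod_ae_eq Ioc_ae_eq_Icc Ioc_ae_eq_Icc
  rw [hbox, ae_restrict_iff' (measurableSet_Icc.prod measurableSet_Icc)] at hQ
  have gen : ∀ L : (Fin (m + 1) → ℝ) →ₗ[ℝ] ℝ × ℝ, Function.Surjective L →
      ∀ᵐ x ∂(volume : Measure (Fin (m + 1) → ℝ)), L x ∈ (Set.Icc (-π) π ×ˢ Set.Icc (-π) π : Set (ℝ × ℝ)) → Q (L x) := by
    intro L hL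
    obtain ⟨s, hs1, hs2, hs3⟩ := hQ.exists_measurable_mem
    have := (ae_comp_linearMap_mem_iff L (volume : Measure (Fin (m + 1) → ℝ)) (volume : Measure (ℝ × ℝ)) hL hs2).2 hs1
    exact this.mono fun x hx => hs3 _ hx
  have g1 := gen ((LinearMap.proj a).prod (-LinearMap.proj b)) (by
    rintro ⟨u, v⟩
    refine ⟨fun i => if i = a then u else -v, ?_⟩
    simp [hab.symm])
  have g2 := gen ((-LinearMap.proj b).prod (LinearMap.proj a)) (by
    rintro ⟨u, v⟩
    refine ⟨fun i => if i = a then v else -u, ?_⟩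
    simp [hab.symm])
  rw [ae_restrict_iff' (MeasurableSet.univ_pi fun _ => measurableSet_Icc)]
  filter_upwards [g1, g2] with x h1 h2 hx
  have ha := hx a trivial
  have hb := hx b trivial
  simp only [Set.mem_Icc] at ha hb
  have e : -x b ∈ Set.Icc (-π) π := ⟨by linarith [hb.2], by linarith [hb.1]⟩
  exact ⟨h1 ⟨ha, e⟩, h2 ⟨e, ha⟩⟩

/-- limiting moments -/
def MM (T : ∀ j : ℕ, Equiv.Perm (Fin (2 * j)) → Fin (2 * j) → Fin (j + 1)) (f : ℝ × ℝ → ℝ) (j : ℕ) : ℝ :=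
  if j = 0 then 1 else (2 * π) ^ (j - 1) * ∑ p ∈ NCPairings j,
    ∫ x in Set.univ.pi (fun _ : Fin (j + 1) => Set.Icc (-π) π), Lsig j p (T j p) (fun a b => f (a, b)) x

lemma momZ_lim {T : ∀ j : ℕ, Equiv.Perm (Fin (2 * j)) → Fin (2 * j) → Fin (j + 1)}
    (hT : ∀ j, 1 ≤ j → ∀ p ∈ NCPairings j, KrI j p (T j p)) (n : ℕ) (c : ℤ × ℤ → ℂ) (j : ℕ) :
    Tendsto (fun N => momZ j N (RT n c)) atTop (nhds (MM T (fR (2 * n) (RT n c)) j)) := by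
  unfold momZ MM
  split_ifs with h
  · exact tendsto_const_nhds
  · have hj : 1 ≤ j := by omega
    have := mom_lim hj (RT n c) (RT_supp n c) (T j) (hT j hj)
    convert this using 2
    rw [Finset.mul_sum]
    exact Finset.sum_congr rfl fun p hp => (limP_eq hj _ (RT_even n c) (NC_sub hp) (hT j hj p hp)).symm

lemma pi_fin (m : ℕ) : IsFiniteMeasure ((volume : Measure (Fin (m + 1) → ℝ)).restrict (Set.univ.pi fun _ => Set.Icc (-π) π)) := by
  refine ⟨?_⟩
  rw [Measure.restrict_apply_univ]
  exact (isCompact_univ_pi fun _ => isCompact_Icc).measure_lt_top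

lemma Lsig_bd {m : ℕ} {p : Equiv.Perm (Fin (2 * m))} (hp : p ∈ NCPairings m) {T : Fin (2 * m) → Fin (m + 1)}
    (hT : KrI m p T) {f : ℝ × ℝ → ℝ} {B : ℝ} (hB : 0 ≤ B) (hf : ∀ᵐ q ∂(volume.restrict specBox), |f q| ≤ B) :
    ∀ᵐ x ∂((volume : Measure (Fin (m + 1) → ℝ)).restrict (Set.univ.pi fun _ => Set.Icc (-π) π)),
      ‖Lsig m p T (fun a b => f (a, b)) x‖ ≤ (2 * B + 1) ^ (2 * m) := by
  have h1 : ∀ i : Fin (2 * m), ∀ᵐ x ∂((volume : Measure (Fin (m + 1) → ℝ)).restrict (Set.univ.pi fun _ => Set.Icc (-π) π)),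
      i < p i → |f (x (T i), -x (T (p i)))| ≤ B ∧ |f (-x (T (p i)), x (T i))| ≤ B := by
    intro i
    by_cases h : i < p i
    · exact (ae_pull hf (T_ne hp hT h)).mono fun x hx _ => hx
    · exact ae_of_all _ fun x hx => absurd hx h
  filter_upwards [ae_all_iff.2 h1] with x hx
  rw [Lsig, Real.norm_eq_abs, Finset.abs_prod]
  refine (Finset.prod_le_prod (g := fun _ => 2 * B + 1) (fun _ _ => abs_nonneg _) fun i hi => ?_).trans ?_
  · simp only [Finset.mem_filter, Finset.mem_univ, true_and] at hi
    refine (abs_add_le _ _).trans ?_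
    linarith [hx i hi]
  · rw [Finset.prod_const]
    refine pow_le_pow_right₀ (by linarith) ?_
    refine (Finset.card_le_univ _).trans (by simp)

lemma MM_bd {T : ∀ j : ℕ, Equiv.Perm (Fin (2 * j)) → Fin (2 * j) → Fin (j + 1)}
    (hT : ∀ j, 1 ≤ j → ∀ p ∈ NCPairings j, KrI j p (T j p)) {f : ℝ × ℝ → ℝ} {B : ℝ} (hB : 0 ≤ B)
    (hf : ∀ᵐ q ∂(volume.restrict specBox), |f q| ≤ B) (j : ℕ) :
    MM T f j ≤ ((2 * π) ^ 2 * 4 * (2 * B + 1) ^ 2) ^ j := by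
  unfold MM
  split_ifs with h
  · subst h; simp
  · have hj : 1 ≤ j := by omega
    have hb : ∀ p ∈ NCPairings j, ∫ x in Set.univ.pi (fun _ : Fin (j + 1) => Set.Icc (-π) π), Lsig j p (T j p) (fun a b => f (a, b)) x ≤
        (2 * B + 1) ^ (2 * j) * (2 * π) ^ (j + 1) := by
      intro p hp
      have := pi_fin j
      refine (le_abs_self _).trans ?_
      have h2 := norm_integral_le_of_norm_le_const (Lsig_bd hp (hT j hj p hp) hB hf)
      rw [Real.norm_eq_abs] at h2
      refine h2.trans (le_of_eq ?_)
      rw [measureReal_restrict_apply_univ, Measure.real, volume_pi_pi]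
      simp only [Real.volume_Icc, Finset.prod_const, Finset.card_univ, Fintype.card_fin, ENNReal.toReal_pow]
      rw [ENNReal.toReal_ofReal (by linarith [pi_pos])]; ring
    calc _ ≤ (2 * π) ^ (j - 1) * ∑ p ∈ NCPairings j, ((2 * B + 1) ^ (2 * j) * (2 * π) ^ (j + 1)) := by
          gcongr with p hp; exact hb p hp
      _ ≤ (2 * π) ^ (j - 1) * (4 ^ j * ((2 * B + 1) ^ (2 * j) * (2 * π) ^ (j + 1))) := by
          rw [Finset.sum_const, nsmul_eq_mul]
          have := NC_card j
          have h4 : ((NCPairings j).card : ℝ) ≤ 4 ^ j := by exact_mod_cast this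
          gcongr
      _ = _ := by
          obtain ⟨k, rfl⟩ : ∃ k, j = k + 1 := ⟨j - 1, by omega⟩
          rw [Nat.add_sub_cancel, mul_pow _ ((2 * B + 1) ^ 2), mul_pow _ (4 : ℝ), ← pow_mul, ← pow_mul]; ring

lemma MM_lim {T : ∀ j : ℕ, Equiv.Perm (Fin (2 * j)) → Fin (2 * j) → Fin (j + 1)}
    (hT : ∀ j, 1 ≤ j → ∀ p ∈ NCPairings j, KrI j p (T j p)) {f : ℝ × ℝ → ℝ} {F : ℕ → ℝ × ℝ → ℝ} {B : ℝ} (hB : 0 ≤ B)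
    (hm : ∀ i, Measurable (F i)) (hF : ∀ i q, |F i q| ≤ B)
    (hl : ∀ᵐ q ∂(volume.restrict specBox), Tendsto (fun i => F i q) atTop (nhds (f q))) (j : ℕ) :
    Tendsto (fun i => MM T (F i) j) atTop (nhds (MM T f j)) := by
  unfold MM
  split_ifs with h
  · exact tendsto_const_nhds
  · have hj : 1 ≤ j := by omega
    have := pi_fin j
    refine Tendsto.const_mul _ (tendsto_finsetSum _ fun p hp => ?_)
    refine tendsto_integral_of_dominated_convergence (fun _ => (2 * B + 1) ^ (2 * j)) ?_ (integrable_const _)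
      (fun i => Lsig_bd hp (hT j hj p hp) hB (ae_of_all _ (hF i))) ?_
    · intro i
      refine Measurable.aestronglyMeasurable ?_
      unfold Lsig
      refine Finset.measurable_prod _ fun u _ => Measurable.add ?_ ?_
      · exact (hm i).comp (by fun_prop)
      · exact (hm i).comp (by fun_prop)
    · have h1 : ∀ u : Fin (2 * j), ∀ᵐ x ∂((volume : Measure (Fin (j + 1) → ℝ)).restrict (Set.univ.pi fun _ => Set.Icc (-π) π)),
          u < p u → Tendsto (fun i => F i (x (T j p u), -x (T j p (p u)))) atTop (nhds (f (x (T j p u), -x (T j p (p u))))) ∧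
            Tendsto (fun i => F i (-x (T j p (p u)), x (T j p u))) atTop (nhds (f (-x (T j p (p u)), x (T j p u)))) := by
        intro u
        by_cases h : u < p u
        · exact (ae_pull hl (T_ne hp (hT j hj p hp) h)).mono fun x hx _ => hx
        · exact ae_of_all _ fun x hx => absurd hx h
      filter_upwards [ae_all_iff.2 h1] with x hx
      unfold Lsig
      refine tendsto_finsetProd _ fun u hu => ?_
      simp only [Finset.mem_filter, Finset.mem_univ, true_and] at hu
      exact (hx u hu).1.add (hx u hu).2


lemma E_lim {Ω : Type*} [MeasurableSpace Ω] {P : Measure Ω} [IsProbabilityMeasure P] {X : ℤ → ℤ → Ω → ℝ}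
    (hX : StatGauss P X) {μ : Measure ℝ} [IsProbabilityMeasure μ] (hconv : ESDTendstoInProb P (scaledW X) μ) {s : ℝ} (hs : 0 < s) :
    Tendsto (fun N => ∫ ω, FF s (scaledW X N ω) ∂P) atTop (nhds (∫ x, s / (s + x ^ 2) ∂μ)) := by
  have hpos : ∀ x : ℝ, 0 < s + x ^ 2 := fun x => by positivity
  have hgb : ∀ x : ℝ, |s / (s + x ^ 2)| ≤ 1 := fun x => by
    rw [abs_of_nonneg (by positivity), div_le_one (hpos x)]; nlinarith [sq_nonneg x]
  have hgc : Continuous fun x : ℝ => s / (s + x ^ 2) :=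
    continuous_const.div (by fun_prop) fun x => (hpos x).ne'
  set t := ∫ x, s / (s + x ^ 2) ∂μ with ht
  have htb : |t| ≤ 1 := by
    have := norm_integral_le_of_norm_le_const (μ := μ) (f := fun x => s / (s + x ^ 2)) (C := 1) (ae_of_all _ hgb)
    simpa using this
  have hherm : ∀ N ω, (scaledW X N ω).IsHermitian := by
    intro N ω
    ext i j
    simp [scaledW, Matrix.conjTranspose_apply, add_comm]
  have hmeas : ∀ N, Measurable fun ω => FF s (scaledW X N ω) := by
    intro N
    refine (FF_meas (N := N) s).comp (g := fun z : Fin N → Fin N → ℝ => FF s (Matrix.of z)) (f := fun ω i j => scaledW X N ω i j) ?_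
    refine measurable_pi_lambda _ fun i => measurable_pi_lambda _ fun j => ?_
    exact ((hX.meas _ _).add (hX.meas _ _)).const_mul _
  have hint : ∀ N, Integrable (fun ω => FF s (scaledW X N ω)) P := fun N =>
    Integrable.of_bound (hmeas N).aestronglyMeasurable 1 (ae_of_all _ fun ω => FF_bd hs (hherm N ω))
  rw [Metric.tendsto_atTop]
  intro ε hε
  have h1 := hconv _ hgc ⟨1, hgb⟩ (ε / 2) (by positivity)
  have h2 := (ENNReal.tendsto_toReal ENNReal.zero_ne_top).comp h1
  rw [ENNReal.toReal_zero, Metric.tendsto_atTop] at h2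
  obtain ⟨N0, hN0⟩ := h2 (ε / 4) (by positivity)
  refine ⟨N0, fun N hN => ?_⟩
  have h3 := hN0 N hN
  simp only [Function.comp, Real.dist_eq, sub_zero] at h3
  rw [abs_of_nonneg ENNReal.toReal_nonneg] at h3
  set A := {ω | ε / 2 ≤ |esdEval (scaledW X N ω) (fun x => s / (s + x ^ 2)) - t|} with hA
  have hAe : A = {ω | ε / 2 ≤ |FF s (scaledW X N ω) - t|} := by
    ext ω; simp only [hA, Set.mem_ofPred_eq, (res_spec hs (hherm N ω)).2.2]
  have hAm : MeasurableSet A := by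
    rw [hAe]; exact measurableSet_le measurable_const (((hmeas N).sub_const t).norm)
  have e1 : ∫ ω, FF s (scaledW X N ω) ∂P - t = ∫ ω, (FF s (scaledW X N ω) - t) ∂P := by
    rw [integral_sub (hint N) (integrable_const _)]; simp
  rw [Real.dist_eq, e1]
  have e2 : ‖∫ ω, (FF s (scaledW X N ω) - t) ∂P‖ ≤ ∫ ω, (ε / 2 + A.indicator (fun _ => (2 : ℝ)) ω) ∂P := by
    refine norm_integral_le_of_norm_le ((integrable_const _).add ((integrable_const _).indicator hAm)) (ae_of_all _ fun ω => ?_)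
    rw [Real.norm_eq_abs]
    by_cases hω : ω ∈ A
    · rw [Set.indicator_of_mem hω]
      have := abs_sub (FF s (scaledW X N ω)) t
      linarith [FF_bd hs (hherm N ω)]
    · rw [Set.indicator_of_notMem hω]
      rw [hAe, Set.mem_ofPred_eq, not_le] at hω
      linarith
  rw [integral_add (integrable_const _) ((integrable_const _).indicator hAm), integral_indicator_const _ hAm] at e2
  simp only [integral_const, probReal_univ, smul_eq_mul, one_mul] at e2
  rw [Real.norm_eq_abs] at e2
  change P.real A < ε / 4 at h3
  linarith

lemma geo_eq (s : ℝ) (hs : 0 < s) (x : ℝ) (k : ℕ) :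
    s / (s + x ^ 2) = ∑ j ∈ Finset.range k, (-1) ^ j * (s⁻¹) ^ j * x ^ (2 * j) + (-1) ^ k * (s⁻¹) ^ k * (x ^ (2 * k) * (s / (s + x ^ 2))) := by
  have hp : s + x ^ 2 ≠ 0 := by positivity
  induction k with
  | zero => simp
  | succ k ih =>
    rw [Finset.sum_range_succ, add_assoc]
    conv_lhs => rw [ih]
    congr 1
    rw [pow_succ (-1 : ℝ), pow_succ s⁻¹, mul_add 2, pow_add x]
    have : s / (s + x ^ 2) = 1 - s⁻¹ * x ^ 2 * (s / (s + x ^ 2)) := by field_simp; ring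
    linear_combination ((-1) ^ k * (s⁻¹) ^ k * x ^ (2 * k)) * this

lemma mom_id {μ : Measure ℝ} [IsProbabilityMeasure μ] {M : ℕ → ℝ} (h : ∀ s : ℝ, 0 < s → ∀ k : ℕ,
    |∫ x, s / (s + x ^ 2) ∂μ - ∑ j ∈ Finset.range (k + 1), (-1) ^ j * (s⁻¹) ^ j * M j| ≤ (s⁻¹) ^ (k + 1) * M (k + 1)) (k : ℕ) :
    Integrable (fun x : ℝ => x ^ (2 * k)) μ ∧ ∫ x, x ^ (2 * k) ∂μ = M k := by
  induction k using Nat.strong_induction_on with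
  | _ k ih =>
  let G : ℕ → ℝ → ℝ := fun n x => x ^ (2 * k) * (((n : ℝ) + 1) / ((n : ℝ) + 1 + x ^ 2))
  have hn : ∀ n : ℕ, (0 : ℝ) < (n : ℝ) + 1 := fun n => by positivity
  have hgc : ∀ s : ℝ, 0 < s → Continuous fun x : ℝ => s / (s + x ^ 2) := fun s hs =>
    continuous_const.div (by fun_prop) fun x => by positivity
  have hgi : ∀ s : ℝ, 0 < s → Integrable (fun x : ℝ => s / (s + x ^ 2)) μ := fun s hs =>
    Integrable.of_bound (hgc s hs).aestronglyMeasurable 1 (ae_of_all _ fun x => by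
      rw [Real.norm_eq_abs, abs_of_nonneg (by positivity), div_le_one (by positivity)]; nlinarith [sq_nonneg x])
  have hGc : ∀ n, Continuous (G n) := fun n => (continuous_pow _).mul (hgc _ (hn n))
  have hG0 : ∀ n x, 0 ≤ G n x := fun n x => by
    have := (even_two_mul k).pow_nonneg x
    have := hn n
    simp only [G]; positivity
  have hsi : ∀ s : ℝ, Integrable (fun x : ℝ => ∑ j ∈ Finset.range k, (-1) ^ j * (s⁻¹) ^ j * x ^ (2 * j)) μ := fun s =>
    integrable_finsetSum _ fun j hj => (ih j (Finset.mem_range.1 hj)).1.const_mul _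
  have hGe : ∀ n x, G n x = ((-1) ^ k * ((n : ℝ) + 1) ^ k) * (((n : ℝ) + 1) / ((n : ℝ) + 1 + x ^ 2) -
      ∑ j ∈ Finset.range k, (-1) ^ j * (((n : ℝ) + 1)⁻¹) ^ j * x ^ (2 * j)) := by
    intro n x
    have := geo_eq _ (hn n) x k
    have h2 := sub_eq_of_eq_add' this
    rw [h2]
    have h3 : ((-1 : ℝ)) ^ k * (-1) ^ k = 1 := by rw [← mul_pow]; norm_num
    have h4 : ((n : ℝ) + 1) ^ k * (((n : ℝ) + 1)⁻¹) ^ k = 1 := by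
      rw [← mul_pow, mul_inv_cancel₀ (hn n).ne', one_pow]
    simp only [G]
    linear_combination (-((((n : ℝ) + 1) ^ k * (((n : ℝ) + 1)⁻¹) ^ k)) * (x ^ (2 * k) * (((n : ℝ) + 1) / ((n : ℝ) + 1 + x ^ 2)))) * h3 - (x ^ (2 * k) * (((n : ℝ) + 1) / ((n : ℝ) + 1 + x ^ 2))) * h4
  have hGi : ∀ n, Integrable (G n) μ := by
    intro n
    have : G n = fun x => ((-1) ^ k * ((n : ℝ) + 1) ^ k) * (((n : ℝ) + 1) / ((n : ℝ) + 1 + x ^ 2) -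
      ∑ j ∈ Finset.range k, (-1) ^ j * (((n : ℝ) + 1)⁻¹) ^ j * x ^ (2 * j)) := funext (hGe n)
    rw [this]
    exact ((hgi _ (hn n)).sub (hsi _)).const_mul _
  have hGv : ∀ n, |∫ x, G n x ∂μ - M k| ≤ (((n : ℝ) + 1)⁻¹) * M (k + 1) := by
    intro n
    simp only [hGe]
    rw [integral_const_mul, integral_sub (hgi _ (hn n)) (hsi _), integral_finsetSum _ fun j hj => (ih j (Finset.mem_range.1 hj)).1.const_mul _]
    have e : ∑ j ∈ Finset.range k, ∫ x, (-1) ^ j * (((n : ℝ) + 1)⁻¹) ^ j * x ^ (2 * j) ∂μ = ∑ j ∈ Finset.range k, (-1) ^ j * (((n : ℝ) + 1)⁻¹) ^ j * M j :=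
      Finset.sum_congr rfl fun j hj => by rw [integral_const_mul, (ih j (Finset.mem_range.1 hj)).2]
    rw [e]
    have h1 := h _ (hn n) k
    rw [Finset.sum_range_succ] at h1
    set a := ∫ x, ((n : ℝ) + 1) / ((n : ℝ) + 1 + x ^ 2) ∂μ
    set b := ∑ j ∈ Finset.range k, (-1) ^ j * (((n : ℝ) + 1)⁻¹) ^ j * M j
    have h3 : ((-1 : ℝ)) ^ k * (-1) ^ k = 1 := by rw [← mul_pow]; norm_num
    have h4 : ((n : ℝ) + 1) ^ k * (((n : ℝ) + 1)⁻¹) ^ k = 1 := by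
      rw [← mul_pow, mul_inv_cancel₀ (hn n).ne', one_pow]
    have h5 : ((-1) ^ k * ((n : ℝ) + 1) ^ k) * (a - b) - M k = ((-1) ^ k * ((n : ℝ) + 1) ^ k) * (a - (b + (-1) ^ k * (((n : ℝ) + 1)⁻¹) ^ k * M k)) := by
      linear_combination (((n : ℝ) + 1) ^ k * (((n : ℝ) + 1)⁻¹) ^ k * M k) * h3 + M k * h4
    rw [h5, abs_mul, abs_mul, abs_pow, abs_neg, abs_one, one_pow, one_mul, abs_of_pos (pow_pos (hn n) k)]
    calc _ ≤ ((n : ℝ) + 1) ^ k * ((((n : ℝ) + 1)⁻¹) ^ (k + 1) * M (k + 1)) := mul_le_mul_of_nonneg_left h1 (pow_pos (hn n) k).le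
      _ = _ := by rw [pow_succ]; linear_combination (((n : ℝ) + 1)⁻¹ * M (k + 1)) * h4
  have hlim : Tendsto (fun n => ∫ x, G n x ∂μ) atTop (nhds (M k)) := by
    rw [tendsto_iff_dist_tendsto_zero]
    have : Tendsto (fun n : ℕ => (((n : ℝ) + 1)⁻¹) * M (k + 1)) atTop (nhds 0) := by
      simpa using (tendsto_one_div_add_atTop_nhds_zero_nat (𝕜 := ℝ)).mul_const (M (k + 1))
    exact squeeze_zero (fun _ => dist_nonneg) hGv this
  have hpt : ∀ x, Tendsto (fun n => G n x) atTop (nhds (x ^ (2 * k))) := by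
    intro x
    have h1 : Tendsto (fun n : ℕ => ((n : ℝ) + 1) / ((n : ℝ) + 1 + x ^ 2)) atTop (nhds 1) := by
      have h2 : Tendsto (fun n : ℕ => 1 - x ^ 2 / ((n : ℝ) + (1 + x ^ 2))) atTop (nhds (1 - 0)) :=
        tendsto_const_nhds.sub (Tendsto.const_div_atTop (tendsto_atTop_add_const_right _ _ tendsto_natCast_atTop_atTop) _)
      rw [sub_zero] at h2
      refine h2.congr fun n => ?_
      have h3 : (n : ℝ) + 1 + x ^ 2 ≠ 0 := by positivity
      have h4 : (n : ℝ) + (1 + x ^ 2) ≠ 0 := by positivity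
      field_simp; ring
    simpa [G] using h1.const_mul (x ^ (2 * k))
  have hi : Integrable (fun x : ℝ => x ^ (2 * k)) μ := by
    refine ⟨(continuous_pow _).aestronglyMeasurable, ?_⟩
    rw [hasFiniteIntegral_iff_ofReal (ae_of_all _ fun x => (even_two_mul k).pow_nonneg x)]
    have hF := lintegral_liminf_le (μ := μ) (u := (atTop : Filter ℕ)) (f := fun n x => ENNReal.ofReal (G n x)) fun n => (hGc n).measurable.ennreal_ofReal
    have e1 : ∀ x, liminf (fun n => ENNReal.ofReal (G n x)) atTop = ENNReal.ofReal (x ^ (2 * k)) := fun x =>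
      ((ENNReal.continuous_ofReal.tendsto _).comp (hpt x)).liminf_eq
    have e2 : liminf (fun n => ∫⁻ x, ENNReal.ofReal (G n x) ∂μ) atTop = ENNReal.ofReal (M k) := by
      simp only [← ofReal_integral_eq_lintegral_ofReal (hGi _) (ae_of_all _ (hG0 _))]
      exact ((ENNReal.continuous_ofReal.tendsto _).comp hlim).liminf_eq
    simp only [e1] at hF
    rw [e2] at hF
    exact hF.trans_lt ENNReal.ofReal_lt_top
  refine ⟨hi, tendsto_nhds_unique ?_ hlim⟩
  refine tendsto_integral_of_dominated_convergence (fun x => x ^ (2 * k)) (fun n => (hGc n).aestronglyMeasurable) hi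
    (fun n => ae_of_all _ fun x => ?_) (ae_of_all _ hpt)
  rw [Real.norm_eq_abs, abs_of_nonneg (hG0 n x)]
  have := hn n
  exact mul_le_of_le_one_right ((even_two_mul k).pow_nonneg x) ((div_le_one (by positivity)).2 (by nlinarith [sq_nonneg x]))

lemma cpt_supp {μ : Measure ℝ} [IsProbabilityMeasure μ] {K : ℝ} (hK : 0 ≤ K)
    (h : ∀ k : ℕ, Integrable (fun x : ℝ => x ^ (2 * k)) μ ∧ ∫ x, x ^ (2 * k) ∂μ ≤ K ^ k) :
    μ (Set.Icc (-(K + 1)) (K + 1))ᶜ = 0 := by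
  set A := (Set.Icc (-(K + 1)) (K + 1))ᶜ
  have h1 : ∀ k : ℕ, μ.real A ≤ (K / (K + 1) ^ 2) ^ k := by
    intro k
    have h2 := mul_meas_ge_le_integral_of_nonneg (ae_of_all μ fun x => (even_two_mul k).pow_nonneg x) (h k).1 ((K + 1) ^ (2 * k))
    have h3 : μ.real A ≤ μ.real {x | (K + 1) ^ (2 * k) ≤ x ^ (2 * k)} := by
      refine measureReal_mono fun x hx => ?_
      simp only [A, Set.mem_compl_iff, Set.mem_Icc, not_and_or, not_le] at hx
      have h4 : K + 1 ≤ |x| := by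
        rcases hx with hx | hx
        · rw [le_abs]; right; linarith
        · rw [le_abs]; left; linarith
      rw [Set.mem_ofPred_eq, ← (even_two_mul k).pow_abs x]
      exact pow_le_pow_left₀ (by linarith) h4 _
    rw [div_pow, ← pow_mul, le_div_iff₀ (by positivity)]
    have h5 := (h k).2
    have h6 : (0 : ℝ) ≤ (K + 1) ^ (2 * k) := by positivity
    nlinarith
  have h2 : Tendsto (fun k : ℕ => (K / (K + 1) ^ 2) ^ k) atTop (nhds 0) := by
    refine tendsto_pow_atTop_nhds_zero_of_lt_one (by positivity) ?_
    rw [div_lt_one (by positivity)]; nlinarith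
  have h3 := ge_of_tendsto' h2 h1
  rw [← measureReal_eq_zero_iff]
  exact le_antisymm h3 measureReal_nonneg


lemma main_ineq {Ω : Type*} [MeasurableSpace Ω] {P : Measure Ω} [IsProbabilityMeasure P] {X : ℤ → ℤ → Ω → ℝ}
    {ν νd : Measure (ℝ × ℝ)} {f : ℝ × ℝ → ℝ} (hX : StatGauss P X) (hν : SpectralDecomp P X ν νd f)
    {μ : Measure ℝ} [IsProbabilityMeasure μ] (hconv : ESDTendstoInProb P (scaledW X) μ)
    {C : ℝ} (hC0 : 0 ≤ C) (hC : ∀ᵐ q ∂(volume.restrict specBox), f q ≤ C)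
    {T : ∀ j : ℕ, Equiv.Perm (Fin (2 * j)) → Fin (2 * j) → Fin (j + 1)}
    (hT : ∀ j, 1 ≤ j → ∀ p ∈ NCPairings j, KrI j p (T j p)) (s : ℝ) (hs : 0 < s) (k : ℕ) :
    |∫ x, s / (s + x ^ 2) ∂μ - ∑ j ∈ Finset.range (k + 1), (-1) ^ j * (s⁻¹) ^ j * MM T f j| ≤ (s⁻¹) ^ (k + 1) * MM T f (k + 1) := by
  have := vol_box
  let g : ℝ × ℝ → ℝ := fun q => √(min (f q) C)
  have hg : Measurable g := (hν.f_meas.min measurable_const).sqrt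
  have h0 : ∀ q, 0 ≤ g q := fun q => sqrt_nonneg _
  have hB : ∀ q, g q ≤ √C := fun q => sqrt_le_sqrt (min_le_right _ _)
  have hgf : ∀ᵐ q ∂(volume.restrict specBox), g q ^ 2 = f q := by
    filter_upwards [hC] with q hq
    simp only [g]
    rw [min_eq_left hq, sq_sqrt (hν.f_nonneg q)]
  obtain ⟨n, c, hb, -, hl⟩ := approx hg h0 hB
  set F : ℕ → ℝ × ℝ → ℝ := fun i => fR (2 * n i) (RT (n i) (c i)) with hF
  have hFe : ∀ i q, F i q = (‖tp (n i) (c i) q‖ ^ 2 + ‖tp (n i) (c i) (-q)‖ ^ 2) / 2 := fun i q => RT_fR _ _ _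
  have hFm : ∀ i, Measurable (F i) := by
    intro i
    rw [show F i = _ from funext (hFe i)]
    have := tp_cont (n i) (c i)
    exact Continuous.measurable (by fun_prop)
  have hFb : ∀ i q, |F i q| ≤ (√C + 1) ^ 2 := by
    intro i q
    rw [hFe, abs_of_nonneg (by positivity)]
    have h1 := pow_le_pow_left₀ (norm_nonneg _) (hb i q) 2
    have h2 := pow_le_pow_left₀ (norm_nonneg _) (hb i (-q)) 2
    linarith
  have hneg : ∀ {Q : ℝ × ℝ → Prop}, (∀ᵐ q ∂(volume.restrict specBox), Q q) → ∀ᵐ q ∂(volume.restrict specBox), Q (-q) := by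
    intro Q hQ
    have hbox : (volume : Measure (ℝ × ℝ)).restrict specBox = volume.restrict (Set.Icc (-π) π ×ˢ Set.Icc (-π) π) := by
      refine Measure.restrict_congr_set ?_
      unfold specBox
      rw [Measure.volume_eq_prod]
      exact Measure.set_prod_ae_eq Ioc_ae_eq_Icc Ioc_ae_eq_Icc
    rw [hbox, ae_restrict_iff' (measurableSet_Icc.prod measurableSet_Icc)] at hQ ⊢
    have mp : MeasurePreserving (fun q : ℝ × ℝ => -q) volume volume := Measure.measurePreserving_neg _
    filter_upwards [mp.quasiMeasurePreserving.ae hQ] with q h hq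
    refine h ?_
    simp only [Set.mem_prod, Set.mem_Icc, Prod.fst_neg, Prod.snd_neg] at hq ⊢
    refine ⟨⟨?_, ?_⟩, ⟨?_, ?_⟩⟩ <;> linarith [hq.1.1, hq.1.2, hq.2.1, hq.2.2]
  have hFl : ∀ᵐ q ∂(volume.restrict specBox), Tendsto (fun i => F i q) atTop (nhds (f q)) := by
    filter_upwards [hl, hneg hl, hgf, hneg hgf, f_even hν] with q h1 h2 h3 h4 h5
    simp only [hFe]
    have e : f q = (‖(g q : ℂ)‖ ^ 2 + ‖(g (-q) : ℂ)‖ ^ 2) / 2 := by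
      rw [Complex.norm_real, Complex.norm_real, Real.norm_eq_abs, Real.norm_eq_abs, sq_abs, sq_abs, h3, h4, h5]; ring
    rw [e]
    exact ((h1.norm.pow 2).add (h2.norm.pow 2)).div_const 2
  have hMM := fun j => MM_lim hT (sq_nonneg (√C + 1)) hFm hFb hFl j
  have hδ : Tendsto (fun i => ∫ q in specBox, ‖(g q : ℂ) - tp (n i) (c i) q‖ ^ 2) atTop (nhds 0) := by
    have : Tendsto (fun i => ∫ q in specBox, ‖(g q : ℂ) - tp (n i) (c i) q‖ ^ 2) atTop (nhds (∫ q in specBox, (0 : ℝ))) := by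
      refine tendsto_integral_of_dominated_convergence (fun _ => (√C + (√C + 1)) ^ 2) ?_ (integrable_const _) ?_ ?_
      · intro i
        exact (((Complex.measurable_ofReal.comp hg).sub (tp_cont _ _).measurable).norm.pow_const 2).aestronglyMeasurable
      · refine fun i => ae_of_all _ fun q => ?_
        rw [Real.norm_eq_abs, abs_of_nonneg (by positivity)]
        refine pow_le_pow_left₀ (norm_nonneg _) ((norm_sub_le _ _).trans (add_le_add ?_ (hb i q))) 2
        rw [Complex.norm_real, Real.norm_eq_abs, abs_of_nonneg (h0 q)]; exact hB q
      · filter_upwards [hl] with q hq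
        simpa using ((tendsto_const_nhds (x := (g q : ℂ))).sub hq).norm.pow 2
    simpa using this
  have step1 : ∀ ε : ℝ, 0 < ε → ∀ i : ℕ,
      |∫ x, s / (s + x ^ 2) ∂μ - ∑ j ∈ Finset.range (k + 1), (-1) ^ j * (s⁻¹) ^ j * MM T (F i) j| ≤
      (s⁻¹) ^ (k + 1) * MM T (F i) (k + 1) + s * (ε * (2 * (s⁻¹ * (√s)⁻¹)) ^ 2 +
        ε⁻¹ * (4 * ((∫ q in specBox, ‖(g q : ℂ) - tp (n i) (c i) q‖ ^ 2) + 1 / ((i : ℝ) + 1)))) := by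
    intro ε hε i
    obtain ⟨D, hD⟩ := gcoup hX hν hg h0 hB hgf (n i) (c i) (hb i) (κ := 1 / ((i : ℝ) + 1)) (by positivity)
    have hmz := fun j => momZ_lim hT (n i) (c i) j
    have hsq : Tendsto (fun N : ℕ => (√(N : ℝ))⁻¹) atTop (nhds 0) :=
      tendsto_inv_atTop_zero.comp (tendsto_sqrt_atTop.comp tendsto_natCast_atTop_atTop)
    refine le_of_tendsto_of_tendsto ((E_lim hX hconv hs).sub (tendsto_finsetSum _ fun j _ => (hmz j).const_mul ((-1) ^ j * (s⁻¹) ^ j))).abs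
      (?_ : Tendsto _ atTop _) (eventually_atTop.2 ⟨1, fun N hN => hD N hN s hs ε hε k⟩)
    have := ((hmz (k + 1)).const_mul ((s⁻¹) ^ (k + 1))).add ((tendsto_const_nhds (x := s * (ε * (2 * (s⁻¹ * (√s)⁻¹)) ^ 2 +
        ε⁻¹ * (4 * ((∫ q in specBox, ‖(g q : ℂ) - tp (n i) (c i) q‖ ^ 2) + 1 / ((i : ℝ) + 1)))))).add (hsq.mul_const (s * (2 * (2 * (s⁻¹ * (√s)⁻¹))) * D)))
    rw [zero_mul, add_zero] at this
    exact this
  have step2 : ∀ ε : ℝ, 0 < ε →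
      |∫ x, s / (s + x ^ 2) ∂μ - ∑ j ∈ Finset.range (k + 1), (-1) ^ j * (s⁻¹) ^ j * MM T f j| ≤
      (s⁻¹) ^ (k + 1) * MM T f (k + 1) + s * (ε * (2 * (s⁻¹ * (√s)⁻¹)) ^ 2) := by
    intro ε hε
    refine le_of_tendsto_of_tendsto' (tendsto_const_nhds.sub (tendsto_finsetSum _ fun j _ => (hMM j).const_mul ((-1) ^ j * (s⁻¹) ^ j))).abs
      (?_ : Tendsto _ atTop _) (step1 ε hε)
    have := ((hMM (k + 1)).const_mul ((s⁻¹) ^ (k + 1))).add (((tendsto_const_nhds (x := ε * (2 * (s⁻¹ * (√s)⁻¹)) ^ 2)).add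
      (((hδ.add (tendsto_one_div_add_atTop_nhds_zero_nat (𝕜 := ℝ))).const_mul 4).const_mul ε⁻¹)).const_mul s)
    simpa using this
  have h3 : Tendsto (fun ε : ℝ => (s⁻¹) ^ (k + 1) * MM T f (k + 1) + s * (ε * (2 * (s⁻¹ * (√s)⁻¹)) ^ 2)) (nhdsWithin 0 (Set.Ioi 0))
      (nhds ((s⁻¹) ^ (k + 1) * MM T f (k + 1) + s * (0 * (2 * (s⁻¹ * (√s)⁻¹)) ^ 2))) := by
    refine (Continuous.tendsto ?_ 0).mono_left nhdsWithin_le_nhds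
    fun_prop
  rw [zero_mul, mul_zero, add_zero] at h3
  exact ge_of_tendsto h3 (eventually_mem_nhdsWithin.mono fun ε hε => step2 ε hε)

theorem statement4 {Ω : Type} [MeasurableSpace Ω] (P : Measure Ω)
    [IsProbabilityMeasure P] (X : ℤ → ℤ → Ω → ℝ) (ν νd : Measure (ℝ × ℝ))
    (f : ℝ × ℝ → ℝ) (hX : StatGauss P X) (hν : SpectralDecomp P X ν νd f)
    (μf : Measure ℝ) (hμf : IsProbabilityMeasure μf)
    (hconv : ESDTendstoInProb P (scaledW X) μf)
    (hbdd : ∃ C : ℝ, ∀ᵐ q ∂(volume.restrict specBox), f q ≤ C) :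
    (∃ C : ℝ, μf (Set.Icc (-C) C)ᶜ = 0) ∧
    ∀ m : ℕ, 1 ≤ m →
      ∀ T : Equiv.Perm (Fin (2 * m)) → Fin (2 * m) → Fin (m + 1),
        (∀ p ∈ NCPairings m, IsKrewerasIndex m p (T p)) →
        ∫ x, x ^ (2 * m) ∂μf
          = (2 * π) ^ (m - 1) *
            ∑ p ∈ NCPairings m,
              ∫ x in Set.univ.pi (fun _ : Fin (m + 1) => Set.Icc (-π) π),
                Lsig m p (T p) (fun a b => f (a, b)) x := by
  obtain ⟨C', hC'⟩ := hbdd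
  have hC : ∀ᵐ q ∂(volume.restrict specBox), f q ≤ max C' 0 := hC'.mono fun q h => h.trans (le_max_left _ _)
  have hC0 : 0 ≤ max C' 0 := le_max_right _ _
  have hch : ∀ j : ℕ, ∃ T : Equiv.Perm (Fin (2 * j)) → Fin (2 * j) → Fin (j + 1), 1 ≤ j → ∀ p ∈ NCPairings j, KrI j p (T p) := by
    intro j
    by_cases hj : 1 ≤ j
    · have : ∀ p : Equiv.Perm (Fin (2 * j)), ∃ T : Fin (2 * j) → Fin (j + 1), p ∈ NCPairings j → KrI j p T := by
        intro p
        by_cases hp : p ∈ NCPairings j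
        · obtain ⟨T, hT⟩ := KrI_exists hj hp
          exact ⟨T, fun _ => hT⟩
        · exact ⟨fun _ => 0, fun h => absurd h hp⟩
      choose T hT using this
      exact ⟨T, fun _ => hT⟩
    · exact ⟨fun _ _ => 0, fun h => absurd h hj⟩
  choose T0' hT0 using hch
  constructor
  · refine ⟨_, cpt_supp (K := (2 * π) ^ 2 * 4 * (2 * max C' 0 + 1) ^ 2) (by positivity) fun k => ?_⟩
    have h1 := mom_id (main_ineq hX hν hconv hC0 hC hT0) k
    refine ⟨h1.1, h1.2.le.trans (MM_bd hT0 hC0 ?_ k)⟩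
    exact hC.mono fun q h => by rwa [abs_of_nonneg (hν.f_nonneg q)]
  · intro m hm T hT
    have hT1 : ∀ j, 1 ≤ j → ∀ p ∈ NCPairings j, KrI j p (Function.update T0' m T j p) := by
      intro j hj p hp
      by_cases h : j = m
      · subst h
        rw [Function.update_self]
        exact ⟨(hT p hp).1, (hT p hp).2.1⟩
      · rw [Function.update_of_ne h]
        exact hT0 j hj p hp
    have h1 := (mom_id (main_ineq hX hν hconv hC0 hC hT1) m).2
    rw [h1, MM, if_neg (by omega), Function.update_self]


end
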